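/- arXiv:1912.07707 — 3 statements merged into one kernel-verified Lean document; each statement's English description precedes it below -/
import Mathlib

section
/- Let d ≥ 1, 1 < p < ∞, m ∈ ℤ_{≥0} and δ ∈ ℝ. There exists a constant C > 0 such that for every g ∈ C_c^∞(ℝ^d), ‖g‖_{H^{m+2,p}_δ} ≤ C · ( ‖Δg‖_{H^{m,p}_δ} + ‖g‖_{H^{m,p}_δ} ). -/
open MeasureTheory

/-- The Japanese bracket `⟨x⟩ = √(1 + |x|²)`. -/
noncomputable def jb {d : ℕ} (x : EuclideanSpace ℝ (Fin d)) : ℝ := Real.sqrt (1 + ‖x‖ ^ 2)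

/-- Partial derivative in the `i`-th coordinate direction. -/
noncomputable def pderiv' {d : ℕ} {F : Type*} [NormedAddCommGroup F] [NormedSpace ℝ F]
    (i : Fin d) (f : EuclideanSpace ℝ (Fin d) → F) : EuclideanSpace ℝ (Fin d) → F :=
  fun x => fderiv ℝ f x (EuclideanSpace.single i 1)

/-- Multi-index derivative `∂^α f`. -/
noncomputable def mderiv {d : ℕ} {F : Type*} [NormedAddCommGroup F] [NormedSpace ℝ F]
    (α : Fin d → ℕ) (f : EuclideanSpace ℝ (Fin d) → F) : EuclideanSpace ℝ (Fin d) → F :=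
  (List.finRange d).foldr (fun i g => (pderiv' i)^[α i] g) f

/-- The Laplacian `Δf = Σ_i ∂_i ∂_i f`. -/
noncomputable def lap {d : ℕ} {F : Type*} [NormedAddCommGroup F] [NormedSpace ℝ F]
    (f : EuclideanSpace ℝ (Fin d) → F) : EuclideanSpace ℝ (Fin d) → F :=
  fun x => ∑ i : Fin d, pderiv' i (pderiv' i f) x

/-- Weighted `L^p` norm `‖⟨x⟩^δ f‖_{L^p}`. -/
noncomputable def wLp {d : ℕ} {F : Type*} [NormedAddCommGroup F] [NormedSpace ℝ F]
    (p δ : ℝ) (f : EuclideanSpace ℝ (Fin d) → F) : ℝ :=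
  (eLpNorm (fun x => jb x ^ δ • f x) (ENNReal.ofReal p) volume).toReal

/-- Weighted Sobolev norm `‖f‖_{H^{m,p}_δ} = Σ_{|α| ≤ m} ‖⟨x⟩^δ ∂^α f‖_{L^p}`. -/
noncomputable def Hnorm (d m : ℕ) {F : Type*} [NormedAddCommGroup F] [NormedSpace ℝ F]
    (p δ : ℝ) (f : EuclideanSpace ℝ (Fin d) → F) : ℝ :=
  ∑ α ∈ Finset.univ.filter (fun α : Fin d → Fin (m + 1) => ∑ i, (α i : ℕ) ≤ m),
    wLp p δ (mderiv (fun i => (α i : ℕ)) f)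

theorem bell_alg {u v X Y A w p q a c σ α β : ℝ} (hu : 0 < u) (hv : 0 < v) (hX : 0 < X)
    (hY : 0 < Y) (hA : 0 < A) (hw : w = X * u ^ 2 + Y * v ^ 2) (hp : 2 ≤ p) (hq : 1 < q)
    (hq2 : q ≤ 2) (ha : a * p = p - 2) (hpq : p + q = p * q) (h1 : A * u ^ 2 ≤ 1)
    (h2 : A * u * (Y * v) ≤ 1) (h3 : 1 ≤ A * w * Y) (hc : 13 ≤ c) (hσ : |σ| ≤ 1) :
    0 ≤ 2 * α ^ 2 * (A * w) + 4 * u * α * (a * A * (p * X * u * α + q * Y * v * β))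
      + u ^ 2 * (a * A * (p * (p - 1) * X * α ^ 2 + q * (q - 1) * Y * β ^ 2)
        + a * (a - 1) * (A / w) * (p * X * u * α + q * Y * v * β) ^ 2)
      + (q * (q - 1) + c) * Y * β ^ 2 + 2 * σ * (α * β) := by
  have hw0 : 0 < w := by rw [hw]; positivity
  have ha0 : 0 ≤ a := by nlinarith
  have ha1 : a ≤ 1 := by nlinarith
  -- Cauchy–Schwarz
  have hCS : (p * X * u * α + q * Y * v * β) ^ 2 / w ≤ p ^ 2 * X * α ^ 2 + q ^ 2 * Y * β ^ 2 := by
    rw [div_le_iff₀ hw0, hw]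
    have : 0 ≤ X * Y * (p * α * v - q * β * u) ^ 2 := by positivity
    nlinarith
  have hCS2 : a * (1 - a) * A * ((p * X * u * α + q * Y * v * β) ^ 2 / w)
      ≤ a * (1 - a) * A * (p ^ 2 * X * α ^ 2 + q ^ 2 * Y * β ^ 2) := by
    have : 0 ≤ a * (1 - a) * A := by
      have : 0 ≤ 1 - a := by linarith
      positivity
    gcongr
  have e1 : (1 - a) * p ^ 2 = 2 * p := by nlinarith
  have e2 : (1 - a) * q ^ 2 = 2 * (q * (q - 1)) := by
    have hp0 : p ≠ 0 := by linarith
    have : (1 - a) * q ^ 2 * p = 2 * (q * (q - 1)) * p := by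
      have : (1 - a) * p = 2 := by linarith
      linear_combination (q ^ 2) * this + 2 * q * hpq
    exact mul_right_cancel₀ hp0 this
  -- cross term
  have hab : -(|α * β|) ≤ α * β := neg_abs_le _
  have hab2 : α * β ≤ |α * β| := le_abs_self _
  have hn : 0 ≤ |α * β| := abs_nonneg _
  have hcross : -(8 * |α * β|) ≤ 4 * (a * q) * (A * u * (Y * v)) * (α * β) := by
    have k1 : 0 ≤ 4 * (a * q) * (A * u * (Y * v)) := by positivity
    have k2 : 4 * (a * q) * (A * u * (Y * v)) ≤ 8 := by
      have : a * q ≤ 1 * 2 := by gcongr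
      have k0 : 0 ≤ A * u * (Y * v) := by positivity
      have : (a * q) * (A * u * (Y * v)) ≤ (1 * 2) * 1 := by gcongr
      linarith
    have k3 : 4 * (a * q) * (A * u * (Y * v)) * (-|α * β|) ≤ 4 * (a * q) * (A * u * (Y * v)) * (α * β) :=
      mul_le_mul_of_nonneg_left hab k1
    have k4 : 4 * (a * q) * (A * u * (Y * v)) * |α * β| ≤ 8 * |α * β| :=
      mul_le_mul_of_nonneg_right k2 hn
    linarith
  have hs : -(2 * |α * β|) ≤ 2 * σ * (α * β) := by
    have : |σ * (α * β)| ≤ |α * β| := by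
      rw [abs_mul]; exact mul_le_of_le_one_left hn hσ
    linarith [neg_abs_le (σ * (α * β))]
  have hAM : 10 * |α * β| ≤ 2 * α ^ 2 * (A * w) + c * Y * β ^ 2 := by
    have k : 0 < A * w := by positivity
    have t1 : 13 * Y * β ^ 2 ≤ c * Y * β ^ 2 := by gcongr
    have t2 : (|α * β|) = |α| * |β| := abs_mul _ _
    rw [t2, ← sq_abs α]
    rw [← sq_abs β] at t1 ⊢
    have hα := abs_nonneg α
    have hβ := abs_nonneg β
    have : 10 * (|α| * |β|) * (A * w) ≤ (2 * |α| ^ 2 * (A * w) + 13 * Y * |β| ^ 2) * (A * w) := by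
      have g := mul_le_mul_of_nonneg_right h3 (sq_nonneg (|β|))
      nlinarith [sq_nonneg (2 * |α| * (A * w) - 5 * |β|)]
    have := le_of_mul_le_mul_right this k
    linarith
  have hfin : a * (q * (q - 1)) * (A * u ^ 2) * (Y * β ^ 2) ≤ q * (q - 1) * (Y * β ^ 2) := by
    have : a * (A * u ^ 2) ≤ 1 := mul_le_one₀ ha1 (by positivity) h1
    have k : 0 ≤ q * (q - 1) * (Y * β ^ 2) := by
      have : 0 < q - 1 := by linarith
      positivity
    have := mul_le_mul_of_nonneg_right this k
    linarith
  have hpos : 0 ≤ (p + 1) * (a * p) * (A * X * u ^ 2 * α ^ 2) := by positivity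
  have hkey : a * A * (p * (p - 1) * X * α ^ 2 + q * (q - 1) * Y * β ^ 2)
        + a * (a - 1) * (A / w) * (p * X * u * α + q * Y * v * β) ^ 2
      ≥ a * A * (p * (p - 3) * X * α ^ 2 - q * (q - 1) * Y * β ^ 2) := by
    have r : a * (a - 1) * (A / w) * (p * X * u * α + q * Y * v * β) ^ 2
      = - (a * (1 - a) * A * ((p * X * u * α + q * Y * v * β) ^ 2 / w)) := by ring
    rw [r]
    have r2 : a * (1 - a) * A * (p ^ 2 * X * α ^ 2 + q ^ 2 * Y * β ^ 2) =
      a * A * (2 * p * X * α ^ 2 + 2 * (q * (q - 1)) * Y * β ^ 2) := by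
      linear_combination (a * A * X * α ^ 2) * e1 + (a * A * Y * β ^ 2) * e2
    rw [r2] at hCS2
    linarith
  have hkey2 := mul_le_mul_of_nonneg_left hkey.le (sq_nonneg u)
  linarith

noncomputable def bellF (p q : ℝ) (u v : ℝ) : ℝ :=
  u ^ 2 * (u ^ p + v ^ q) ^ (1 - 2 / p) + (1 + 13 / (q * (q - 1))) * v ^ q

theorem bell_pos {p q σ : ℝ} (hp : 2 ≤ p) (hq : 1 < q) (hpq : p + q = p * q) (hσ : |σ| ≤ 1)
    {u0 v0 α β : ℝ} (hu0 : 0 < u0) (hv0 : 0 < v0) (hu1 : 0 < u0 + α) (hv1 : 0 < v0 + β) :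
    ConvexOn ℝ (Set.Icc (0:ℝ) 1) (fun t => bellF p q (u0 + t * α) (v0 + t * β)
      + σ * ((u0 + t * α) * (v0 + t * β))) := by
  have hq2 : q ≤ 2 := by nlinarith
  have hp0 : 0 < p := by linarith
  have hq0 : 0 < q := by linarith
  have hq1 : 0 < q - 1 := by linarith
  set a := 1 - 2 / p with ha
  set K := 1 + 13 / (q * (q - 1)) with hK
  have hKq : K * q * (q - 1) = q * (q - 1) + 13 := by rw [hK]; field_simp
  have hap : a * p = p - 2 := by rw [ha]; field_simp
  have ha0 : 0 ≤ a := by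
    by_contra h
    nlinarith [not_le.mp h]
  have hU : ∀ t ∈ Set.Icc (0:ℝ) 1, 0 < u0 + t * α := by
    intro t ht
    have : u0 + t * α = (1 - t) * u0 + t * (u0 + α) := by ring
    rw [this]
    rcases eq_or_lt_of_le ht.1 with h | h
    · rw [← h]; simpa
    · have : 0 ≤ 1 - t := by linarith [ht.2]
      positivity
  have hV : ∀ t ∈ Set.Icc (0:ℝ) 1, 0 < v0 + t * β := by
    intro t ht
    have : v0 + t * β = (1 - t) * v0 + t * (v0 + β) := by ring
    rw [this]
    rcases eq_or_lt_of_le ht.1 with h | h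
    · rw [← h]; simpa
    · have : 0 ≤ 1 - t := by linarith [ht.2]
      positivity
  let u : ℝ → ℝ := fun t => u0 + t * α
  let v : ℝ → ℝ := fun t => v0 + t * β
  have du : ∀ t, HasDerivAt u α t := fun t => 
    (((hasDerivAt_id t).mul_const α).const_add u0).congr_deriv (one_mul _)
  have dv : ∀ t, HasDerivAt v β t := fun t => 
    (((hasDerivAt_id t).mul_const β).const_add v0).congr_deriv (one_mul _)
  let w : ℝ → ℝ := fun t => u t ^ p + v t ^ q
  let w1 : ℝ → ℝ := fun t => α * p * u t ^ (p - 1) + β * q * v t ^ (q - 1)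
  let w2 : ℝ → ℝ := fun t => α * p * (α * (p - 1) * u t ^ (p - 1 - 1))
    + β * q * (β * (q - 1) * v t ^ (q - 1 - 1))
  have dw : ∀ t ∈ Set.Icc (0:ℝ) 1, HasDerivAt w (w1 t) t := fun t ht =>
    ((du t).rpow_const (Or.inl (hU t ht).ne')).add ((dv t).rpow_const (Or.inl (hV t ht).ne'))
  have dw1 : ∀ t ∈ Set.Icc (0:ℝ) 1, HasDerivAt w1 (w2 t) t := fun t ht =>
    (((du t).rpow_const (Or.inl (hU t ht).ne')).const_mul _).add
      (((dv t).rpow_const (Or.inl (hV t ht).ne')).const_mul _)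
  have hw0 : ∀ t ∈ Set.Icc (0:ℝ) 1, 0 < w t := fun t ht =>
    add_pos (Real.rpow_pos_of_pos (hU t ht) _) (Real.rpow_pos_of_pos (hV t ht) _)
  have dG : ∀ t ∈ Set.Icc (0:ℝ) 1, HasDerivAt
      (fun t => u t ^ 2 * w t ^ a + K * v t ^ q + σ * (u t * v t)) 
      ((2 * u t * α) * w t ^ a + u t ^ 2 * (w1 t * a * w t ^ (a - 1))
        + K * (β * q * v t ^ (q - 1)) + σ * (α * v t + u t * β)) t := fun t ht => by
    have h := (((((du t).pow 2).mul ((dw t ht).rpow_const (p := a) (Or.inl (hw0 t ht).ne'))).add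
      (((dv t).rpow_const (p := q) (Or.inl (hV t ht).ne')).const_mul K)).add
      (((du t).mul (dv t)).const_mul σ))
    refine h.congr_deriv ?_
    simp
  have dG1 : ∀ t ∈ Set.Icc (0:ℝ) 1, HasDerivAt
      (fun t => (2 * u t * α) * w t ^ a + u t ^ 2 * (w1 t * a * w t ^ (a - 1))
        + K * (β * q * v t ^ (q - 1)) + σ * (α * v t + u t * β)) 
      ((2 * α * α) * w t ^ a + (2 * u t * α) * (w1 t * a * w t ^ (a - 1))
        + ((2 * u t * α) * (w1 t * a * w t ^ (a - 1))
        + u t ^ 2 * (w2 t * a * w t ^ (a - 1) + w1 t * a * (w1 t * (a - 1) * w t ^ (a - 1 - 1))))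
        + K * (β * q * (β * (q - 1) * v t ^ (q - 1 - 1))) + σ * (α * β + α * β)) t := fun t ht => by
    have h := (((((du t).const_mul 2).mul_const α).mul
       ((dw t ht).rpow_const (p := a) (Or.inl (hw0 t ht).ne'))).add
       (((du t).pow 2).mul (((dw1 t ht).mul_const a).mul 
         ((dw t ht).rpow_const (p := a - 1) (Or.inl (hw0 t ht).ne'))))).add
      ((((dv t).rpow_const (p := q - 1) (Or.inl (hV t ht).ne')).const_mul (β * q)).const_mul K)
      |>.add ((((dv t).const_mul α).add ((du t).mul_const β)).const_mul σ)
    refine h.congr_deriv ?_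
    simp
  refine convexOn_of_hasDerivWithinAt2_nonneg (convex_Icc 0 1)
    (fun t ht => (dG t ht).continuousAt.continuousWithinAt)
    (fun t ht => (dG t (interior_subset ht)).hasDerivWithinAt)
    (fun t ht => (dG1 t (interior_subset ht)).hasDerivWithinAt) ?_
  intro t ht'
  have ht := interior_subset ht'
  have hu : 0 < u t := hU t ht
  have hv : 0 < v t := hV t ht
  have hw := hw0 t ht
  set X := u t ^ (p - 2) with hX
  set Y := v t ^ (q - 2) with hY
  set A := w t ^ (a - 1) with hA
  have eX1 : u t ^ (p - 1) = X * u t := by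
    rw [hX, ← Real.rpow_add_one hu.ne']; ring_nf
  have eX2 : u t ^ (p - 1 - 1) = X := by rw [hX]; ring_nf
  have eY1 : v t ^ (q - 1) = Y * v t := by
    rw [hY, ← Real.rpow_add_one hv.ne']; ring_nf
  have eY2 : v t ^ (q - 1 - 1) = Y := by rw [hY]; ring_nf
  have eX : u t ^ p = X * u t ^ 2 := by
    rw [hX, ← Real.rpow_natCast, ← Real.rpow_add hu]; norm_num
  have eY : v t ^ q = Y * v t ^ 2 := by
    rw [hY, ← Real.rpow_natCast, ← Real.rpow_add hv]; norm_num
  have eA : w t ^ a = A * w t := by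
    rw [hA, ← Real.rpow_add_one hw.ne']; ring_nf
  have eA2 : w t ^ (a - 1 - 1) = A / w t := by
    rw [hA, ← Real.rpow_sub_one hw.ne']
  have hX0 : 0 < X := Real.rpow_pos_of_pos hu _
  have hY0 : 0 < Y := Real.rpow_pos_of_pos hv _
  have hA0 : 0 < A := Real.rpow_pos_of_pos hw _
  have a1 : a - 1 = -(2 / p) := by rw [ha]; ring
  -- u ≤ w^(1/p)
  have hu_le : u t ≤ w t ^ (1 / p) := by
    have : u t = (u t ^ p) ^ (1 / p) := by
      rw [← Real.rpow_mul hu.le, mul_one_div_cancel hp0.ne', Real.rpow_one]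
    rw [this]
    refine Real.rpow_le_rpow (by positivity) ?_ (by positivity)
    exact le_add_of_nonneg_right (Real.rpow_pos_of_pos hv _).le
  have hqp : q * (1 / p) = q - 1 := by
    field_simp; linarith
  have hv_le : Y * v t ≤ w t ^ (1 / p) := by
    have : Y * v t = (v t ^ q) ^ (1 / p) := by
      rw [← Real.rpow_mul hv.le, hqp, eY1]
    rw [this]
    refine Real.rpow_le_rpow (by positivity) ?_ (by positivity)
    exact le_add_of_nonneg_left (Real.rpow_pos_of_pos hu _).le
  have hww : A * (w t ^ (1 / p) * w t ^ (1 / p)) = 1 := by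
    rw [hA, ← Real.rpow_add hw, ← Real.rpow_add hw, a1]
    have : -(2 / p) + (1 / p + 1 / p) = 0 := by ring
    rw [this, Real.rpow_zero]
  have hwp : 0 < w t ^ (1 / p) := Real.rpow_pos_of_pos hw _
  have h1 : A * u t ^ 2 ≤ 1 := by
    rw [← hww, sq]; gcongr
  have h2 : A * u t * (Y * v t) ≤ 1 := by
    rw [← hww, mul_assoc]; gcongr
  have h3 : 1 ≤ A * w t * Y := by
    rw [← eA]
    have k1 : (v t ^ q) ^ a ≤ w t ^ a := by
      refine Real.rpow_le_rpow (by positivity) ?_ ha0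
      exact le_add_of_nonneg_left (Real.rpow_pos_of_pos hu _).le
    have k2 : (v t ^ q) ^ a * Y = 1 := by
      rw [hY, ← Real.rpow_mul hv.le, ← Real.rpow_add hv]
      have : q * a + (q - 2) = 0 := by
        rw [ha]; linear_combination -2 * hqp
      rw [this, Real.rpow_zero]
    rw [← k2]; gcongr
  have hwe : w t = X * u t ^ 2 + Y * v t ^ 2 := by rw [← eX, ← eY]
  have := bell_alg (α := α) (β := β) hu hv hX0 hY0 hA0 hwe hp hq hq2 hap hpq h1 h2 h3 le_rfl hσ
  rw [← hKq] at this
  refine this.trans (le_of_eq ?_)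
  simp only [w1, w2, eX1, eX2, eY1, eY2, eA, eA2]
  ring

theorem bellF_cont {p q : ℝ} (hp : 2 ≤ p) (hq : 1 < q) :
    Continuous (fun z : ℝ × ℝ => bellF p q z.1 z.2) := by
  unfold bellF
  have h0 : (0:ℝ) ≤ 1 - 2 / p := by
    rw [sub_nonneg, div_le_one (by linarith)]; exact hp
  have c1 : Continuous (fun z : ℝ × ℝ => z.1 ^ p) :=
    continuous_fst.rpow_const (fun _ => Or.inr (by linarith))
  have c2 : Continuous (fun z : ℝ × ℝ => z.2 ^ q) :=
    continuous_snd.rpow_const (fun _ => Or.inr (by linarith))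
  have c3 := (c1.add c2).rpow_const (p := 1 - 2 / p) (fun _ => Or.inr h0)
  exact ((continuous_fst.pow 2).mul c3).add (continuous_const.mul c2)

theorem bellF_conv {p q σ : ℝ} (hp : 2 ≤ p) (hq : 1 < q) (hpq : p + q = p * q) (hσ : |σ| ≤ 1)
    {u v u' v' a b : ℝ} (hu : 0 ≤ u) (hv : 0 ≤ v) (hu' : 0 ≤ u') (hv' : 0 ≤ v')
    (ha : 0 ≤ a) (hb : 0 ≤ b) (hab : a + b = 1) :
    bellF p q (a * u + b * u') (a * v + b * v') + σ * ((a * u + b * u') * (a * v + b * v'))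
      ≤ a * (bellF p q u v + σ * (u * v)) + b * (bellF p q u' v' + σ * (u' * v')) := by
  have key : ∀ ε > 0, bellF p q (a * (u + ε) + b * (u' + ε)) (a * (v + ε) + b * (v' + ε))
      + σ * ((a * (u + ε) + b * (u' + ε)) * (a * (v + ε) + b * (v' + ε)))
      ≤ a * (bellF p q (u + ε) (v + ε) + σ * ((u + ε) * (v + ε)))
        + b * (bellF p q (u' + ε) (v' + ε) + σ * ((u' + ε) * (v' + ε))) := by
    intro ε hε
    have h := bell_pos (σ := σ) hp hq hpq hσ (u0 := u + ε) (v0 := v + ε) (α := u' - u)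
      (β := v' - v) (by linarith) (by linarith) (by linarith) (by linarith)
    have := h.2 (x := 0) (y := 1) (by simp) (by simp) ha hb hab
    simp only [smul_eq_mul, mul_zero, mul_one, zero_add, zero_mul, add_zero, one_mul] at this
    have e1 : u + ε + b * (u' - u) = a * (u + ε) + b * (u' + ε) := by
      have : a = 1 - b := by linarith
      rw [this]; ring
    have e2 : v + ε + b * (v' - v) = a * (v + ε) + b * (v' + ε) := by
      have : a = 1 - b := by linarith
      rw [this]; ring
    have e3 : u + ε + (u' - u) = u' + ε := by ring
    have e4 : v + ε + (v' - v) = v' + ε := by ring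
    rw [e1, e2, e3, e4] at this
    exact this
  have hc := bellF_cont (p := p) (q := q) hp hq
  have c : ∀ f g : ℝ → ℝ, Continuous f → Continuous g →
      Continuous (fun ε => bellF p q (f ε) (g ε) + σ * (f ε * g ε)) := fun f g hf hg =>
    (hc.comp (hf.prodMk hg)).add (continuous_const.mul (hf.mul hg))
  have l1 := (c (fun ε => a * (u + ε) + b * (u' + ε)) (fun ε => a * (v + ε) + b * (v' + ε))
    (by fun_prop) (by fun_prop)).continuousAt (x := 0) |>.continuousWithinAt (s := Set.Ioi 0)
  have l2 := (((c (fun ε => u + ε) (fun ε => v + ε) (by fun_prop) (by fun_prop)).const_mul a).add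
    ((c (fun ε => u' + ε) (fun ε => v' + ε) (by fun_prop) (by fun_prop)).const_mul b)).continuousAt
      (x := 0) |>.continuousWithinAt (s := Set.Ioi 0)
  have := le_of_tendsto_of_tendsto l1.tendsto l2.tendsto
    (Filter.eventually_of_mem self_mem_nhdsWithin (fun ε hε => key ε hε))
  simpa using this

theorem bellman_exists {p q : ℝ} (h : p.HolderConjugate q) : ∃ B : ℝ → ℝ → ℝ, ∃ C : ℝ, 0 < C ∧
    Continuous (fun z : ℝ × ℝ => B z.1 z.2) ∧
    (∀ u v, 0 ≤ u → 0 ≤ v → 0 ≤ B u v) ∧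
    (∀ u v, 0 ≤ u → 0 ≤ v → B u v ≤ C * (u ^ p + v ^ q)) ∧
    ConvexOn ℝ {z : ℝ × ℝ | 0 ≤ z.1 ∧ 0 ≤ z.2} (fun z => B z.1 z.2) ∧
    (∀ u v u' v', 0 ≤ u → 0 ≤ v → 0 ≤ u' → 0 ≤ v' →
      B ((u + u') / 2) ((v + v') / 2) + |u - u'| * |v - v'| / 4 ≤ (B u v + B u' v') / 2) := by
  wlog hp : 2 ≤ p generalizing p q with H
  · have hq : 2 ≤ q := by
      have := h.symm.lt
      have := h.lt
      have e := h.mul_eq_add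
      by_contra hq
      nlinarith
    obtain ⟨B, C, hC, hB, h0, h1, h2, h3⟩ := H h.symm hq
    refine ⟨fun u v => B v u, C, hC, hB.comp continuous_swap, fun u v hu hv => h0 v u hv hu,
      fun u v hu hv => by rw [add_comm]; exact h1 v u hv hu, ?_, ?_⟩
    · refine ⟨?_, ?_⟩
      · intro x hx y hy a b ha hb hab
        have := h2.1 (x := x.swap) (y := y.swap) ⟨hx.2, hx.1⟩ ⟨hy.2, hy.1⟩ ha hb hab
        exact ⟨this.2, this.1⟩
      · intro x hx y hy a b ha hb hab
        exact h2.2 (x := x.swap) (y := y.swap) ⟨hx.2, hx.1⟩ ⟨hy.2, hy.1⟩ ha hb hab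
    · intro u v u' v' hu hv hu' hv'
      have := h3 v u v' u' hv hu hv' hu'
      rwa [mul_comm |u - u'|]
  have hq : 1 < q := h.symm.lt
  have hpq : p + q = p * q := h.mul_eq_add.symm
  have hp0 : 0 < p := by linarith
  have hc := fun (σ : ℝ) (hσ : |σ| ≤ 1) u v u' v' a b hu hv hu' hv' ha hb hab =>
    bellF_conv (σ := σ) (u := u) (v := v) (u' := u') (v' := v') (a := a) (b := b)
      hp hq hpq hσ hu hv hu' hv' ha hb hab
  have hK : 0 < 13 / (q * (q - 1)) := by
    have : 0 < q - 1 := by linarith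
    positivity
  refine ⟨bellF p q, 2 + 13 / (q * (q - 1)), by positivity, bellF_cont hp hq, ?_, ?_, ?_, ?_⟩
  · intro u v hu hv
    unfold bellF; positivity
  · intro u v hu hv
    have hw : 0 ≤ u ^ p + v ^ q := by positivity
    have hu_le : u ^ 2 ≤ (u ^ p + v ^ q) ^ (2 / p) := by
      have : u ^ 2 = (u ^ p) ^ (2 / p) := by
        rw [← Real.rpow_mul hu, mul_div_cancel₀ _ hp0.ne']; norm_num
      rw [this]
      exact Real.rpow_le_rpow (by positivity) (le_add_of_nonneg_right (by positivity))
        (by positivity)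
    have h1 : u ^ 2 * (u ^ p + v ^ q) ^ (1 - 2 / p) ≤ u ^ p + v ^ q := by
      calc _ ≤ (u ^ p + v ^ q) ^ (2 / p) * (u ^ p + v ^ q) ^ (1 - 2 / p) := by gcongr
        _ = _ := by
          rw [← Real.rpow_add' hw (by norm_num)]; norm_num
    have h2 : v ^ q ≤ u ^ p + v ^ q := le_add_of_nonneg_left (by positivity)
    unfold bellF
    have h3 := mul_le_mul_of_nonneg_left h2 (by positivity : 0 ≤ 1 + 13 / (q * (q - 1)))
    linarith
  · refine ⟨?_, ?_⟩
    · intro x hx y hy a b ha hb hab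
      have := hx.1
      have := hx.2
      have := hy.1
      have := hy.2
      constructor
      · simp only [Prod.fst_add, Prod.smul_fst, smul_eq_mul]; positivity
      · simp only [Prod.snd_add, Prod.smul_snd, smul_eq_mul]; positivity
    · intro x hx y hy a b ha hb hab
      have := hc 0 (by simp) _ _ _ _ a b hx.1 hx.2 hy.1 hy.2 ha hb hab
      simpa using this
  · intro u v u' v' hu hv hu' hv'
    have k1 := hc 1 (by simp) u v u' v' (1/2) (1/2) hu hv hu' hv' (by norm_num) (by norm_num)
      (by norm_num)
    have k2 := hc (-1) (by simp) u v u' v' (1/2) (1/2) hu hv hu' hv' (by norm_num) (by norm_num)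
      (by norm_num)
    have e1 : 1 / 2 * u + 1 / 2 * u' = (u + u') / 2 := by ring
    have e2 : 1 / 2 * v + 1 / 2 * v' = (v + v') / 2 := by ring
    rw [e1, e2] at k1 k2
    rw [← abs_mul]
    rcases abs_cases ((u - u') * (v - v')) with ⟨h, _⟩ | ⟨h, _⟩ <;> rw [h] <;> nlinarith

section walk
variable {E : Type*} [NormedAddCommGroup E] {ι : Type*} [Fintype ι]

/-- continuous with compact support -/
def CC (f : E → ℝ) : Prop := Continuous f ∧ HasCompactSupport f

theorem CC.shift {f : E → ℝ} (hf : CC f) (v : E) : CC (fun x => f (x + v)) :=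
  ⟨hf.1.comp (continuous_add_const v), hf.2.comp_homeomorph (Homeomorph.addRight v)⟩

theorem CC.shift' {f : E → ℝ} (hf : CC f) (v : E) : CC (fun x => f (x - v)) := by
  simpa [sub_eq_add_neg] using hf.shift (-v)

theorem CC.add {f g : E → ℝ} (hf : CC f) (hg : CC g) : CC (fun x => f x + g x) :=
  ⟨hf.1.add hg.1, hf.2.add hg.2⟩

theorem CC.neg {f : E → ℝ} (hf : CC f) : CC (fun x => - f x) :=
  ⟨hf.1.neg, hf.2.neg⟩

theorem CC.sub {f g : E → ℝ} (hf : CC f) (hg : CC g) : CC (fun x => f x - g x) := by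
  simpa [sub_eq_add_neg] using hf.add hg.neg

theorem CC.comp {f : E → ℝ} (hf : CC f) {g : ℝ → ℝ} (hg : Continuous g) (h0 : g 0 = 0) :
    CC (fun x => g (f x)) :=
  ⟨hg.comp hf.1, hf.2.comp_left h0⟩

theorem CC.comp₂ {f g : E → ℝ} (hf : CC f) (hg : CC g) {B : ℝ → ℝ → ℝ}
    (hB : Continuous (fun z : ℝ × ℝ => B z.1 z.2)) (h0 : B 0 0 = 0) :
    CC (fun x => B (f x) (g x)) :=
  ⟨hB.comp (hf.1.prodMk hg.1), hf.2.comp₂_left hg.2 h0⟩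

theorem CC.cmul {f g : E → ℝ} (hf : CC f) (hg : Continuous g) : CC (fun x => g x * f x) :=
  ⟨hg.mul hf.1, hf.2.mul_left⟩

theorem CC.sum {κ : Type*} {f : κ → E → ℝ} (s : Finset κ) (hf : ∀ k ∈ s, CC (f k)) :
    CC (fun x => ∑ k ∈ s, f k x) := by
  classical
  induction s using Finset.induction_on with
  | empty => simp only [Finset.sum_empty]; exact ⟨continuous_const, HasCompactSupport.zero⟩
  | insert a s ha ih =>
    simp only [Finset.sum_insert ha]
    exact (hf a (by simp)).add (ih fun k hk => hf k (by simp [hk]))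

theorem CC.int [MeasurableSpace E] [BorelSpace E] {f : E → ℝ} (hf : CC f) (μ : Measure E) [IsFiniteMeasureOnCompacts μ] :
    Integrable f μ := hf.1.integrable_of_hasCompactSupport hf.2

noncomputable def walk (v : ι → E) (u : E → ℝ) : E → ℝ := fun x =>
  (Fintype.card ι : ℝ)⁻¹ * ∑ k, (u x / 2 + u (x + v k) / 4 + u (x - v k) / 4)

theorem CC.walk {u : E → ℝ} (hu : CC u) (v : ι → E) : CC (walk v u) := by
  unfold _root_.walk
  refine CC.cmul (CC.sum _ fun k _ => ?_) continuous_const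
  refine ((hu.comp (g := fun t => t / 2) (by fun_prop) (by simp)).add
    ((hu.shift (v k)).comp (g := fun t => t / 4) (by fun_prop) (by simp))).add
    ((hu.shift' (v k)).comp (g := fun t => t / 4) (by fun_prop) (by simp))

theorem walk_nonneg {u : E → ℝ} (hu : ∀ x, 0 ≤ u x) (v : ι → E) (x : E) : 0 ≤ walk v u x := by
  unfold walk
  have : ∀ k, 0 ≤ u x / 2 + u (x + v k) / 4 + u (x - v k) / 4 := fun k => by
    have := hu x; have := hu (x + v k); have := hu (x - v k); positivity
  have := Finset.sum_nonneg (s := Finset.univ) (fun k _ => this k)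
  positivity

theorem walk_sub (f g : E → ℝ) (v : ι → E) :
    walk v (fun x => f x - g x) = fun x => walk v f x - walk v g x := by
  funext x
  unfold walk
  rw [← mul_sub, ← Finset.sum_sub_distrib]
  congr 1
  refine Finset.sum_congr rfl fun k _ => by ring

theorem walk_shift (f : E → ℝ) (v : ι → E) (e : E) :
    walk v (fun x => f (x + e)) = fun x => walk v f (x + e) := by
  funext x
  unfold walk
  congr 1
  refine Finset.sum_congr rfl fun k _ => by
    simp only [add_right_comm x (v k) e, sub_add_eq_add_sub]

theorem int3 {α : Type*} [MeasurableSpace α] {μ : Measure α} {f g h : α → ℝ} (hf : Integrable f μ)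
    (hg : Integrable g μ) (hh : Integrable h μ) :
    ∫ x, (f x / 2 + g x / 4 + h x / 4) ∂μ
      = (∫ x, f x ∂μ) / 2 + (∫ x, g x ∂μ) / 4 + (∫ x, h x ∂μ) / 4 := by
  have h1 : ∫ x, (f x / 2 + g x / 4 + h x / 4) ∂μ = _ :=
    integral_add ((hf.div_const 2).add (hg.div_const 4)) (hh.div_const 4)
  have h2 : ∫ x, (f x / 2 + g x / 4) ∂μ = _ := integral_add (hf.div_const 2) (hg.div_const 4)
  rw [h1, integral_div]
  change (∫ x, (f x / 2 + g x / 4) ∂μ) + _ = _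
  rw [h2, integral_div, integral_div]

variable [MeasurableSpace E] [BorelSpace E] (μ : Measure E) [IsFiniteMeasureOnCompacts μ] [μ.IsAddRightInvariant]

theorem walk_integral [Nonempty ι] {u : E → ℝ} (hu : CC u) (v : ι → E) :
    ∫ x, walk v u x ∂μ = ∫ x, u x ∂μ := by
  unfold walk
  rw [integral_const_mul, integral_finsetSum]
  · have : ∀ k, ∫ x, (u x / 2 + u (x + v k) / 4 + u (x - v k) / 4) ∂μ = ∫ x, u x ∂μ := by
      intro k
      have i1 := hu.int μ
      have i2 := (hu.shift (v k)).int μ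
      have i3 := (hu.shift' (v k)).int μ
      rw [int3 i1 i2 i3,
        integral_add_right_eq_self (μ := μ) (fun x => u x) (v k),
        integral_sub_right_eq_self (μ := μ) (fun x => u x) (v k)]
      ring
    simp only [this, Finset.sum_const, Finset.card_univ, nsmul_eq_mul]
    rw [inv_mul_cancel_left₀]
    exact_mod_cast Fintype.card_ne_zero
  · intro k _
    exact ((((hu.int μ).div_const 2).add (((hu.shift (v k)).int μ).div_const 4))).add
      (((hu.shift' (v k)).int μ).div_const 4)

theorem walk_symm {u w : E → ℝ} (hu : CC u) (hw : CC w) (v : ι → E) :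
    ∫ x, walk v u x * w x ∂μ = ∫ x, u x * walk v w x ∂μ := by
  have c : ∀ {f g : E → ℝ}, CC f → CC g → Integrable (fun x => f x * g x) μ := fun hf hg =>
    (hg.cmul hf.1).int μ
  have key : ∀ k, ∫ x, (u x / 2 + u (x + v k) / 4 + u (x - v k) / 4) * w x ∂μ
      = ∫ x, u x * (w x / 2 + w (x + v k) / 4 + w (x - v k) / 4) ∂μ := by
    intro k
    have i1 := c hu hw
    have i2 := c (hu.shift (v k)) hw
    have i3 := c (hu.shift' (v k)) hw
    have j2 := c hu (hw.shift (v k))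
    have j3 := c hu (hw.shift' (v k))
    have e1 : ∀ x, (u x / 2 + u (x + v k) / 4 + u (x - v k) / 4) * w x =
      (u x * w x) / 2 + (u (x + v k) * w x) / 4 + (u (x - v k) * w x) / 4 := fun x => by ring
    have e2 : ∀ x, u x * (w x / 2 + w (x + v k) / 4 + w (x - v k) / 4) =
      (u x * w x) / 2 + (u x * w (x + v k)) / 4 + (u x * w (x - v k)) / 4 := fun x => by ring
    simp only [e1, e2]
    rw [int3 i1 i2 i3, int3 i1 j2 j3]
    have s1 : ∫ x, u (x + v k) * w x ∂μ = ∫ x, u x * w (x - v k) ∂μ := by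
      rw [← integral_add_right_eq_self (μ := μ) (fun x => u x * w (x - v k)) (v k)]
      simp
    have s2 : ∫ x, u (x - v k) * w x ∂μ = ∫ x, u x * w (x + v k) ∂μ := by
      rw [← integral_sub_right_eq_self (μ := μ) (fun x => u x * w (x + v k)) (v k)]
      simp
    rw [s1, s2]; ring
  have L : ∀ x, walk v u x * w x = (Fintype.card ι : ℝ)⁻¹ *
      ∑ k, (u x / 2 + u (x + v k) / 4 + u (x - v k) / 4) * w x := fun x => by
    unfold walk; rw [mul_assoc, Finset.sum_mul]
  have R : ∀ x, u x * walk v w x = (Fintype.card ι : ℝ)⁻¹ *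
      ∑ k, u x * (w x / 2 + w (x + v k) / 4 + w (x - v k) / 4) := fun x => by
    unfold walk; rw [← Finset.mul_sum]; ring
  have ccw : ∀ {f : E → ℝ}, CC f → ∀ k, CC (fun x => f x / 2 + f (x + v k) / 4 + f (x - v k) / 4) :=
    fun hu k => ((hu.comp (g := fun t => t / 2) (by fun_prop) (by simp)).add
    ((hu.shift (v k)).comp (g := fun t => t / 4) (by fun_prop) (by simp))).add
    ((hu.shift' (v k)).comp (g := fun t => t / 4) (by fun_prop) (by simp))
  simp only [L, R]
  rw [integral_const_mul, integral_const_mul, integral_finsetSum, integral_finsetSum]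
  · simp only [key]
  · intro k _
    exact c hu (ccw hw k)
  · intro k _
    exact c (ccw hu k) hw

end walk

section walk2
variable {E : Type*} [NormedAddCommGroup E] {ι : Type*} [Fintype ι] [Nonempty ι]

theorem walk_bell {B : ℝ → ℝ → ℝ}
    (hconv : ConvexOn ℝ {z : ℝ × ℝ | 0 ≤ z.1 ∧ 0 ≤ z.2} (fun z => B z.1 z.2))
    (hmid : ∀ u v u' v', 0 ≤ u → 0 ≤ v → 0 ≤ u' → 0 ≤ v' →
      B ((u + u') / 2) ((v + v') / 2) + |u - u'| * |v - v'| / 4 ≤ (B u v + B u' v') / 2)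
    {U V : E → ℝ} (hU : ∀ x, 0 ≤ U x) (hV : ∀ x, 0 ≤ V x) (v : ι → E) (k₀ : ι) (x : E) :
    B (walk v U x) (walk v V x) +
      (Fintype.card ι : ℝ)⁻¹ / 8 * (|U (x + v k₀) - U x| * |V (x + v k₀) - V x|)
      ≤ walk v (fun y => B (U y) (V y)) x := by
  set c := (Fintype.card ι : ℝ)⁻¹ with hc
  have hcard : (Fintype.card ι : ℝ) ≠ 0 := by exact_mod_cast Fintype.card_ne_zero
  have hc0 : 0 ≤ c := by positivity
  let z : ι → ℝ × ℝ := fun k => (U x / 2 + U (x + v k) / 4 + U (x - v k) / 4,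
    V x / 2 + V (x + v k) / 4 + V (x - v k) / 4)
  have hz : ∀ k, z k ∈ {z : ℝ × ℝ | 0 ≤ z.1 ∧ 0 ≤ z.2} := fun k => by
    have := hU x; have := hU (x + v k); have := hU (x - v k)
    have := hV x; have := hV (x + v k); have := hV (x - v k)
    constructor <;> simp only [z] <;> positivity
  have hJ := hconv.map_sum_le (t := Finset.univ) (w := fun _ => c) (p := z) (fun _ _ => hc0)
    (by simp [hc, hcard]) (fun k _ => hz k)
  have e1 : (∑ k, c • z k).1 = walk v U x := by
    rw [Prod.fst_sum, walk, Finset.mul_sum]; rfl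
  have e2 : (∑ k, c • z k).2 = walk v V x := by
    rw [Prod.snd_sum, walk, Finset.mul_sum]; rfl
  rw [e1, e2] at hJ
  have hk : ∀ k, B (z k).1 (z k).2 + |U (x + v k) - U x| * |V (x + v k) - V x| / 8 ≤
      B (U x) (V x) / 2 + B (U (x + v k)) (V (x + v k)) / 4 
        + B (U (x - v k)) (V (x - v k)) / 4 := by
    intro k
    have a1 := hU x; have a2 := hU (x + v k); have a3 := hU (x - v k)
    have b1 := hV x; have b2 := hV (x + v k); have b3 := hV (x - v k)
    have m1 := hmid _ _ _ _ a2 b2 a1 b1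
    have m2 := hmid _ _ _ _ a3 b3 a1 b1
    have m3 := hmid ((U (x + v k) + U x) / 2) ((V (x + v k) + V x) / 2)
      ((U (x - v k) + U x) / 2) ((V (x - v k) + V x) / 2)
      (by positivity) (by positivity) (by positivity) (by positivity)
    have f1 : ((U (x + v k) + U x) / 2 + (U (x - v k) + U x) / 2) / 2 = (z k).1 := by
      simp only [z]; ring
    have f2 : ((V (x + v k) + V x) / 2 + (V (x - v k) + V x) / 2) / 2 = (z k).2 := by
      simp only [z]; ring
    rw [f1, f2] at m3
    have n2 : 0 ≤ |U (x - v k) - U x| * |V (x - v k) - V x| / 4 := by positivity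
    have n3 : 0 ≤ |(U (x + v k) + U x) / 2 - (U (x - v k) + U x) / 2| *
      |(V (x + v k) + V x) / 2 - (V (x - v k) + V x) / 2| / 4 := by positivity
    linarith
  have hsum : ∑ k, (B (z k).1 (z k).2 + |U (x + v k) - U x| * |V (x + v k) - V x| / 8) ≤ _ :=
    Finset.sum_le_sum (fun k _ => hk k)
  rw [Finset.sum_add_distrib] at hsum
  have hone := Finset.single_le_sum (s := Finset.univ)
    (f := fun k => |U (x + v k) - U x| * |V (x + v k) - V x| / 8)
    (fun k _ => by positivity) (Finset.mem_univ k₀)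
  have := mul_le_mul_of_nonneg_left hsum hc0
  have := mul_le_mul_of_nonneg_left hone hc0
  simp only [smul_eq_mul, ← Finset.mul_sum] at hJ
  have ew : walk v (fun y => B (U y) (V y)) x = c * ∑ k, (B (U x) (V x) / 2 +
    B (U (x + v k)) (V (x + v k)) / 4 + B (U (x - v k)) (V (x - v k)) / 4) := rfl
  rw [ew]
  linarith

variable [MeasurableSpace E] [BorelSpace E] (μ : Measure E)
  [IsFiniteMeasureOnCompacts μ] [μ.IsAddRightInvariant]

theorem CC.iter {u : E → ℝ} (hu : CC u) (v : ι → E) (n : ℕ) : CC ((_root_.walk v)^[n] u) := by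
  induction n with
  | zero => exact hu
  | succ n ih => rw [Function.iterate_succ_apply']; exact ih.walk v

theorem iter_nonneg {u : E → ℝ} (hu : ∀ x, 0 ≤ u x) (v : ι → E) (n : ℕ) :
    ∀ x, 0 ≤ (walk v)^[n] u x := by
  induction n with
  | zero => exact hu
  | succ n ih => rw [Function.iterate_succ_apply']; exact walk_nonneg ih v

theorem iter_sub (f g : E → ℝ) (v : ι → E) (n : ℕ) :
    (walk v)^[n] (fun x => f x - g x) = fun x => (walk v)^[n] f x - (walk v)^[n] g x := by
  induction n with
  | zero => rfl
  | succ n ih => simp only [Function.iterate_succ_apply']; rw [ih, walk_sub]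

/-- the difference quotient pairing -/
noncomputable def dpair (e : E) (U V : E → ℝ) : ℝ :=
  ∫ x, |U (x + e) - U x| * |V (x + e) - V x| ∂μ

theorem dpair_int {U V : E → ℝ} (hU : CC U) (hV : CC V) (e : E) :
    Integrable (fun x => |U (x + e) - U x| * |V (x + e) - V x|) μ :=
  CC.int (CC.cmul ((hV.shift e).sub hV |>.comp continuous_abs abs_zero)
    ((hU.shift e).sub hU).1.abs) μ

theorem sum_dpair_nonneg {p q : ℝ} {B : ℝ → ℝ → ℝ} {C : ℝ} (hp : 0 < p) (hq : 0 < q)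
    (hBc : Continuous (fun z : ℝ × ℝ => B z.1 z.2))
    (hB0 : ∀ u v, 0 ≤ u → 0 ≤ v → 0 ≤ B u v)
    (hB1 : ∀ u v, 0 ≤ u → 0 ≤ v → B u v ≤ C * (u ^ p + v ^ q))
    (hconv : ConvexOn ℝ {z : ℝ × ℝ | 0 ≤ z.1 ∧ 0 ≤ z.2} (fun z => B z.1 z.2))
    (hmid : ∀ u v u' v', 0 ≤ u → 0 ≤ v → 0 ≤ u' → 0 ≤ v' →
      B ((u + u') / 2) ((v + v') / 2) + |u - u'| * |v - v'| / 4 ≤ (B u v + B u' v') / 2)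
    {U V : E → ℝ} (hU : ∀ x, 0 ≤ U x) (hV : ∀ x, 0 ≤ V x) (hUc : CC U) (hVc : CC V)
    (v : ι → E) (k : ι) (N : ℕ) :
    ∑ n ∈ Finset.range N, dpair μ (v k) ((walk v)^[n] U) ((walk v)^[n] V)
      ≤ 8 * Fintype.card ι * C * (∫ x, U x ^ p ∂μ + ∫ x, V x ^ q ∂μ) := by
  have hB00 : B 0 0 = 0 := by
    have h1 := hB0 0 0 le_rfl le_rfl
    have h2 := hB1 0 0 le_rfl le_rfl
    rw [Real.zero_rpow hp.ne', Real.zero_rpow hq.ne'] at h2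
    linarith
  have hcard : 0 < (Fintype.card ι : ℝ) := by exact_mod_cast Fintype.card_pos
  let b : ℕ → ℝ := fun n => ∫ x, B ((walk v)^[n] U x) ((walk v)^[n] V x) ∂μ
  have step : ∀ n, dpair μ (v k) ((walk v)^[n] U) ((walk v)^[n] V)
      ≤ 8 * Fintype.card ι * (b n - b (n + 1)) := by
    intro n
    set Un := (walk v)^[n] U with hUn
    set Vn := (walk v)^[n] V with hVn
    have cU : CC Un := hUc.iter v n
    have cV : CC Vn := hVc.iter v n
    have nU := iter_nonneg hU v n
    have nV := iter_nonneg hV v n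
    have cB : CC (fun x => B (Un x) (Vn x)) := cU.comp₂ cV hBc hB00
    have cB' : CC (fun x => B (walk v Un x) (walk v Vn x)) := (cU.walk v).comp₂ (cV.walk v) hBc hB00
    have hi := dpair_int μ cU cV (v k)
    have := integral_mono ((cB'.int μ).add (hi.const_mul ((Fintype.card ι : ℝ)⁻¹ / 8)))
      ((cB.walk v).int μ) (fun x => walk_bell hconv hmid nU nV v k x)
    rw [integral_add' (cB'.int μ) (hi.const_mul ((Fintype.card ι : ℝ)⁻¹ / 8)), integral_const_mul,
      walk_integral μ cB v] at this
    have e : b (n + 1) = ∫ x, B (walk v Un x) (walk v Vn x) ∂μ := by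
      simp only [b, Function.iterate_succ_apply']; rfl
    rw [← e] at this
    change b (n + 1) + (Fintype.card ι : ℝ)⁻¹ / 8 * dpair μ (v k) Un Vn ≤ b n at this
    have h2 := mul_le_mul_of_nonneg_left this (by positivity : 0 ≤ 8 * (Fintype.card ι : ℝ))
    have h3 : 8 * (Fintype.card ι : ℝ) * ((Fintype.card ι : ℝ)⁻¹ / 8 * dpair μ (v k) Un Vn)
      = dpair μ (v k) Un Vn := by field_simp
    linarith
  have hsum : ∀ N, ∑ n ∈ Finset.range N, dpair μ (v k) ((walk v)^[n] U) ((walk v)^[n] V)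
      ≤ 8 * Fintype.card ι * (b 0 - b N) := by
    intro N
    induction N with
    | zero => simp
    | succ N ih =>
      rw [Finset.sum_range_succ]
      linarith [step N]
  have hbN : 0 ≤ b N := integral_nonneg fun x => hB0 _ _ (iter_nonneg hU v N x)
    (iter_nonneg hV v N x)
  have cUp : CC (fun x => U x ^ p) := hUc.comp (g := fun t => t ^ p)
    (continuous_id.rpow_const fun _ => Or.inr hp.le) (Real.zero_rpow hp.ne')
  have cVq : CC (fun x => V x ^ q) := hVc.comp (g := fun t => t ^ q)
    (continuous_id.rpow_const fun _ => Or.inr hq.le) (Real.zero_rpow hq.ne')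
  have hb0 : b 0 ≤ C * (∫ x, U x ^ p ∂μ + ∫ x, V x ^ q ∂μ) := by
    rw [← integral_add (cUp.int μ) (cVq.int μ), ← integral_const_mul]
    exact integral_mono ((hUc.comp₂ hVc hBc hB00).int μ) (((cUp.add cVq).int μ).const_mul C)
      (fun x => hB1 _ _ (hU x) (hV x))
  calc _ ≤ 8 * Fintype.card ι * (b 0 - b N) := hsum N
    _ ≤ 8 * Fintype.card ι * (C * (∫ x, U x ^ p ∂μ + ∫ x, V x ^ q ∂μ)) := by gcongr; linarith
    _ = _ := by ring

end walk2

theorem abs_rpow_convex {p : ℝ} (hp : 1 ≤ p) : ConvexOn ℝ Set.univ (fun t : ℝ => |t| ^ p) := by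
  refine ⟨convex_univ, fun x _ y _ a b ha hb hab => ?_⟩
  have h := (convexOn_rpow hp).2 (x := |x|) (y := |y|) (abs_nonneg x) (abs_nonneg y) ha hb hab
  refine le_trans (Real.rpow_le_rpow (abs_nonneg _) ?_ (by linarith)) h
  simp only [smul_eq_mul]
  calc |a * x + b * y| ≤ |a * x| + |b * y| := abs_add_le _ _
    _ = _ := by rw [abs_mul, abs_mul, abs_of_nonneg ha, abs_of_nonneg hb]

theorem abs_rpow_cont {p : ℝ} (hp : 0 ≤ p) : Continuous (fun t : ℝ => |t| ^ p) :=
  continuous_abs.rpow_const fun _ => Or.inr hp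

theorem abs_rpow_zero {p : ℝ} (hp : p ≠ 0) : |(0:ℝ)| ^ p = 0 := by
  rw [abs_zero, Real.zero_rpow hp]

section walk3
variable {E : Type*} [NormedAddCommGroup E] {ι : Type*} [Fintype ι] [Nonempty ι]

theorem CC.absp {f : E → ℝ} (hf : CC f) {p : ℝ} (hp : 0 < p) : CC (fun x => |f x| ^ p) :=
  hf.comp (g := fun t => |t| ^ p) (abs_rpow_cont hp.le) (abs_rpow_zero hp.ne')

theorem walk_jensen {p : ℝ} (hp : 1 ≤ p) (u : E → ℝ) (v : ι → E) (x : E) :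
    |walk v u x| ^ p ≤ walk v (fun y => |u y| ^ p) x := by
  have hc := abs_rpow_convex hp
  have hcard : (Fintype.card ι : ℝ) ≠ 0 := by exact_mod_cast Fintype.card_ne_zero
  have hJ := hc.map_sum_le (t := Finset.univ) (w := fun _ : ι => (Fintype.card ι : ℝ)⁻¹)
    (p := fun k => u x / 2 + u (x + v k) / 4 + u (x - v k) / 4) (fun _ _ => by positivity)
    (by simp [hcard]) (fun k _ => Set.mem_univ _)
  simp only [smul_eq_mul, ← Finset.mul_sum] at hJ
  unfold walk
  refine hJ.trans ?_
  gcongr with k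
  have h1 := hc.2 (Set.mem_univ (u (x + v k))) (Set.mem_univ (u (x - v k)))
    (by norm_num : (0:ℝ) ≤ 1/2) (by norm_num : (0:ℝ) ≤ 1/2) (by norm_num)
  have h2 := hc.2 (Set.mem_univ (u x)) (Set.mem_univ ((1/2 : ℝ) • u (x + v k) + (1/2:ℝ) • u (x - v k)))
    (by norm_num : (0:ℝ) ≤ 1/2) (by norm_num : (0:ℝ) ≤ 1/2) (by norm_num)
  simp only [smul_eq_mul] at h1 h2
  have e : 1 / 2 * u x + 1 / 2 * (1 / 2 * u (x + v k) + 1 / 2 * u (x - v k)) =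
    u x / 2 + u (x + v k) / 4 + u (x - v k) / 4 := by ring
  rw [e] at h2
  linarith

variable [MeasurableSpace E] [BorelSpace E] (μ : Measure E)
  [IsFiniteMeasureOnCompacts μ] [μ.IsAddRightInvariant]

theorem dpair_sub_le {f g φ ψ : E → ℝ} (hf : CC f) (hg : CC g) (hφ : CC φ) (hψ : CC ψ) (e : E) :
    dpair μ e (fun x => f x - g x) (fun x => φ x - ψ x) ≤
      (dpair μ e f φ + dpair μ e f ψ) + (dpair μ e g φ + dpair μ e g ψ) := by
  unfold dpair
  rw [← integral_add' (dpair_int μ hf hφ e) (dpair_int μ hf hψ e),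
    ← integral_add' (dpair_int μ hg hφ e) (dpair_int μ hg hψ e),
    ← integral_add' ((dpair_int μ hf hφ e).add (dpair_int μ hf hψ e))
      ((dpair_int μ hg hφ e).add (dpair_int μ hg hψ e))]
  refine integral_mono (dpair_int μ (hf.sub hg) (hφ.sub hψ) e)
    (((dpair_int μ hf hφ e).add (dpair_int μ hf hψ e)).add
      ((dpair_int μ hg hφ e).add (dpair_int μ hg hψ e))) fun x => ?_
  have h1 : |f (x + e) - g (x + e) - (f x - g x)| ≤ |f (x + e) - f x| + |g (x + e) - g x| := by
    have : f (x + e) - g (x + e) - (f x - g x) = (f (x + e) - f x) - (g (x + e) - g x) := by ring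
    rw [this]; exact abs_sub _ _
  have h2 : |φ (x + e) - ψ (x + e) - (φ x - ψ x)| ≤ |φ (x + e) - φ x| + |ψ (x + e) - ψ x| := by
    have : φ (x + e) - ψ (x + e) - (φ x - ψ x) = (φ (x + e) - φ x) - (ψ (x + e) - ψ x) := by ring
    rw [this]; exact abs_sub _ _
  have := mul_le_mul h1 h2 (abs_nonneg _) (by positivity)
  refine this.trans (le_of_eq ?_)
  simp only [Pi.add_apply]
  ring

theorem sum_dpair (ι : Type*) [Fintype ι] [Nonempty ι] {p q : ℝ} (h : p.HolderConjugate q) :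
    ∃ C : ℝ, 0 < C ∧ ∀ (v : ι → E) (k : ι) (f φ : E → ℝ), CC f → CC φ → ∀ N : ℕ,
    ∑ n ∈ Finset.range N, dpair μ (v k) ((walk v)^[n] f) ((walk v)^[n] φ)
      ≤ C * (∫ x, |f x| ^ p ∂μ + ∫ x, |φ x| ^ q ∂μ) := by
  obtain ⟨B, C, hC, hBc, hB0, hB1, hconv, hmid⟩ := bellman_exists h
  have hcard : 0 < (Fintype.card ι : ℝ) := by exact_mod_cast Fintype.card_pos
  have hp := h.pos
  have hq := h.symm.pos
  refine ⟨4 * (8 * Fintype.card ι * C), by positivity, fun v k f φ hf hφ N => ?_⟩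
  have key : ∀ U V : E → ℝ, (∀ x, 0 ≤ U x) → (∀ x, 0 ≤ V x) → CC U → CC V →
    (∀ x, U x ≤ |f x|) → (∀ x, V x ≤ |φ x|) →
    ∑ n ∈ Finset.range N, dpair μ (v k) ((walk v)^[n] U) ((walk v)^[n] V)
      ≤ 8 * Fintype.card ι * C * (∫ x, |f x| ^ p ∂μ + ∫ x, |φ x| ^ q ∂μ) := by
    intro U V hU hV cU cV hUf hVφ
    refine (sum_dpair_nonneg μ hp hq hBc hB0 hB1 hconv hmid hU hV cU cV v k N).trans ?_
    have i1 : ∫ x, U x ^ p ∂μ ≤ ∫ x, |f x| ^ p ∂μ := by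
      refine integral_mono ?_ ((hf.absp hp).int μ) 
        fun x => Real.rpow_le_rpow (hU x) (hUf x) hp.le
      have := (cU.absp hp).int μ
      simpa only [abs_of_nonneg (hU _)] using this
    have i2 : ∫ x, V x ^ q ∂μ ≤ ∫ x, |φ x| ^ q ∂μ := by
      refine integral_mono ?_ ((hφ.absp hq).int μ) 
        fun x => Real.rpow_le_rpow (hV x) (hVφ x) hq.le
      have := (cV.absp hq).int μ
      simpa only [abs_of_nonneg (hV _)] using this
    gcongr
  have pos : ∀ {g : E → ℝ}, CC g → CC (fun x => max (g x) 0) := fun hg =>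
    hg.comp (g := fun t => max t 0) (by fun_prop) (by simp)
  have neg : ∀ {g : E → ℝ}, CC g → CC (fun x => max (-g x) 0) := fun hg =>
    hg.comp (g := fun t => max (-t) 0) (by fun_prop) (by simp)
  have l1 : ∀ (g : E → ℝ) x, max (g x) 0 ≤ |g x| := fun g x =>
    max_le (le_abs_self _) (abs_nonneg _)
  have l2 : ∀ (g : E → ℝ) x, max (-g x) 0 ≤ |g x| := fun g x =>
    max_le (neg_le_abs _) (abs_nonneg _)
  have n1 : ∀ (g : E → ℝ) x, 0 ≤ max (g x) 0 := fun g x => le_max_right _ _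
  have n2 : ∀ (g : E → ℝ) x, 0 ≤ max (-g x) 0 := fun g x => le_max_right _ _
  have k1 := key _ _ (n1 f) (n1 φ) (pos hf) (pos hφ) (l1 f) (l1 φ)
  have k2 := key _ _ (n1 f) (n2 φ) (pos hf) (neg hφ) (l1 f) (l2 φ)
  have k3 := key _ _ (n2 f) (n1 φ) (neg hf) (pos hφ) (l2 f) (l1 φ)
  have k4 := key _ _ (n2 f) (n2 φ) (neg hf) (neg hφ) (l2 f) (l2 φ)
  have ef : f = fun x => max (f x) 0 - max (-f x) 0 := funext fun x =>
    (max_zero_sub_eq_self (f x)).symm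
  have eφ : φ = fun x => max (φ x) 0 - max (-φ x) 0 := funext fun x =>
    (max_zero_sub_eq_self (φ x)).symm
  obtain ⟨f1, f2, hf1, hf2, ef', c1, c2⟩ : ∃ f1 f2 : E → ℝ, f1 = (fun x => max (f x) 0) ∧
    f2 = (fun x => max (-f x) 0) ∧ f = (fun x => f1 x - f2 x) ∧ CC f1 ∧ CC f2 :=
    ⟨_, _, rfl, rfl, ef, pos hf, neg hf⟩
  obtain ⟨φ1, φ2, hφ1, hφ2, eφ', d1, d2⟩ : ∃ f1 f2 : E → ℝ, f1 = (fun x => max (φ x) 0) ∧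
    f2 = (fun x => max (-φ x) 0) ∧ φ = (fun x => f1 x - f2 x) ∧ CC f1 ∧ CC f2 :=
    ⟨_, _, rfl, rfl, eφ, pos hφ, neg hφ⟩
  rw [← hf1, ← hφ1] at k1
  rw [← hf1, ← hφ2] at k2
  rw [← hf2, ← hφ1] at k3
  rw [← hf2, ← hφ2] at k4
  have hs : ∑ n ∈ Finset.range N, dpair μ (v k) ((walk v)^[n] f) ((walk v)^[n] φ) ≤
      ∑ n ∈ Finset.range N, ((dpair μ (v k) ((walk v)^[n] f1) ((walk v)^[n] φ1) +
        dpair μ (v k) ((walk v)^[n] f1) ((walk v)^[n] φ2)) +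
        (dpair μ (v k) ((walk v)^[n] f2) ((walk v)^[n] φ1) +
        dpair μ (v k) ((walk v)^[n] f2) ((walk v)^[n] φ2))) :=
    Finset.sum_le_sum (fun n _ => by
      have := dpair_sub_le μ (c1.iter v n) (c2.iter v n) (d1.iter v n)
        (d2.iter v n) (v k)
      rwa [← iter_sub, ← iter_sub, ← ef', ← eφ'] at this)
  simp only [Finset.sum_add_distrib] at hs
  linarith

end walk3

section walk4
variable {E : Type*} [NormedAddCommGroup E] {ι : Type*} [Fintype ι] [Nonempty ι]

theorem walk_D (f : E → ℝ) (v : ι → E) (e : E) :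
    walk v (fun x => f (x + e) - f x) = fun x => walk v f (x + e) - walk v f x := by
  rw [walk_sub (fun x => f (x + e)) f v, walk_shift]

variable [MeasurableSpace E] [BorelSpace E] (μ : Measure E)
  [IsFiniteMeasureOnCompacts μ] [μ.IsAddRightInvariant]

/-- the signed pairing -/
noncomputable def spair (e : E) (U V : E → ℝ) : ℝ :=
  ∫ x, (U (x + e) - U x) * (V (x + e) - V x) ∂μ

theorem spair_int {U V : E → ℝ} (hU : CC U) (hV : CC V) (e : E) :
    Integrable (fun x => (U (x + e) - U x) * (V (x + e) - V x)) μ :=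
  CC.int (CC.cmul ((hV.shift e).sub hV) ((hU.shift e).sub hU).1) μ

theorem abs_spair_le (U V : E → ℝ) (e : E) : |spair μ e U V| ≤ dpair μ e U V := by
  unfold spair dpair
  refine (abs_integral_le_integral_abs).trans (le_of_eq ?_)
  simp only [abs_mul]

theorem spair_step {H Φ : E → ℝ} (hH : CC H) (hΦ : CC Φ) (v : ι → E) (e : E) :
    spair μ e H Φ = spair μ e (fun x => H x - walk v (walk v H) x) Φ
      + spair μ e (walk v H) (walk v Φ) := by
  have h1 : spair μ e (walk v H) (walk v Φ) = spair μ e (walk v (walk v H)) Φ := by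
    unfold spair
    have := walk_symm μ (((hH.walk v).shift e).sub (hH.walk v)) ((hΦ.shift e).sub hΦ) v
    rw [walk_D, walk_D] at this
    exact this.symm
  rw [h1]
  unfold spair
  rw [← integral_add (spair_int μ (hH.sub ((hH.walk v).walk v)) hΦ e)
    (spair_int μ ((hH.walk v).walk v) hΦ e)]
  refine integral_congr_ae (Filter.Eventually.of_forall fun x => ?_)
  simp only
  ring

theorem spair_sum {H Φ : E → ℝ} (hH : CC H) (hΦ : CC Φ) (v : ι → E) (e : E) (N : ℕ) :
    spair μ e H Φ = ∑ n ∈ Finset.range N, spair μ e ((walk v)^[n] (fun x => H x - walk v (walk v H) x))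
      ((walk v)^[n] Φ) + spair μ e ((walk v)^[N] H) ((walk v)^[N] Φ) := by
  induction N with
  | zero => simp
  | succ n ih =>
    rw [Finset.sum_range_succ, add_assoc, ih]
    congr 1
    rw [spair_step μ (hH.iter v n) (hΦ.iter v n) v e]
    rw [iter_sub H (fun x => walk v (walk v H) x)]
    rw [Function.iterate_succ_apply', Function.iterate_succ_apply']
    congr 3
    funext x
    congr 1
    have : (walk v)^[n] (fun x => walk v (walk v H) x) = walk v (walk v ((walk v)^[n] H)) := by
      change (walk v)^[n] ((walk v)^[2] H) = (walk v)^[2] ((walk v)^[n] H)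
      rw [← Function.iterate_add_apply, ← Function.iterate_add_apply, add_comm]
    rw [this]

theorem spair_bound (ι : Type*) [Fintype ι] [Nonempty ι] {p q : ℝ} (h : p.HolderConjugate q) :
    ∃ C : ℝ, 0 < C ∧ ∀ (v : ι → E) (k : ι) (f φ : E → ℝ), CC f → CC φ →
    |spair μ (v k) f φ|
      ≤ C * (∫ x, |f x - walk v (walk v f) x| ^ p ∂μ + ∫ x, |φ x| ^ q ∂μ) := by
  obtain ⟨C, hC, H⟩ := sum_dpair (E := E) μ ι h
  refine ⟨C, hC, fun v k f φ hf hφ => ?_⟩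
  have nn : ∀ U V : E → ℝ, 0 ≤ dpair μ (v k) U V := fun U V =>
    integral_nonneg fun x => by positivity
  have hs : Summable (fun n => dpair μ (v k) ((walk v)^[n] f) ((walk v)^[n] φ)) :=
    summable_of_sum_range_le (fun n => nn _ _) (H v k f φ hf hφ)
  have ht := hs.tendsto_atTop_zero
  have hF := hf.sub ((hf.walk v).walk v)
  have : ∀ N, |spair μ (v k) f φ| ≤ C * (∫ x, |f x - walk v (walk v f) x| ^ p ∂μ + ∫ x, |φ x| ^ q ∂μ)
      + dpair μ (v k) ((walk v)^[N] f) ((walk v)^[N] φ) := by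
    intro N
    rw [spair_sum μ hf hφ v (v k) N]
    refine (abs_add_le _ _).trans (add_le_add ?_ (abs_spair_le μ _ _ _))
    refine (Finset.abs_sum_le_sum_abs _ _).trans (le_trans ?_ (H v k _ φ hF hφ N))
    exact Finset.sum_le_sum fun n _ => abs_spair_le μ _ _ _
  have ht2 := ht.const_add (C * (∫ x, |f x - walk v (walk v f) x| ^ p ∂μ + ∫ x, |φ x| ^ q ∂μ))
  rw [add_zero] at ht2
  exact ge_of_tendsto' ht2 this

theorem spair_eq {f φ : E → ℝ} (hf : CC f) (hφ : CC φ) (e : E) :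
    spair μ e f φ = - ∫ x, (f (x + e) + f (x - e) - 2 * f x) * φ x ∂μ := by
  unfold spair
  have i1 : Integrable (fun x => (f (x + e) - f x) * φ (x + e)) μ :=
    CC.int (CC.cmul (hφ.shift e) ((hf.shift e).sub hf).1) μ
  have i2 : Integrable (fun x => (f (x + e) - f x) * φ x) μ :=
    CC.int (CC.cmul hφ ((hf.shift e).sub hf).1) μ
  have i3 : Integrable (fun x => (f x - f (x - e)) * φ x) μ :=
    CC.int (CC.cmul hφ (hf.sub (hf.shift' e)).1) μ
  simp only [mul_sub]
  rw [integral_sub i1 i2]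
  have s1 : ∫ x, (f (x + e) - f x) * φ (x + e) ∂μ = ∫ x, (f x - f (x - e)) * φ x ∂μ := by
    rw [← integral_add_right_eq_self (μ := μ) (fun x => (f x - f (x - e)) * φ x) e]
    simp
  rw [s1, ← integral_sub i3 i2, ← integral_neg]
  refine integral_congr_ae (Filter.Eventually.of_forall fun x => ?_)
  simp only
  ring

/-- the duality nonlinearity -/
noncomputable def dualg (p t : ℝ) : ℝ := (max t 0) ^ (p - 1) - (max (-t) 0) ^ (p - 1)

theorem dualg_cont {p : ℝ} (hp : 1 < p) : Continuous (dualg p) := by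
  unfold dualg
  refine Continuous.sub ?_ ?_ <;>
  exact Continuous.rpow_const (by fun_prop) fun _ => Or.inr (by linarith)

theorem dualg_zero {p : ℝ} (hp : 1 < p) : dualg p 0 = 0 := by simp [dualg]

theorem dualg_mul {p : ℝ} (hp : 1 < p) (t : ℝ) : t * dualg p t = |t| ^ p := by
  unfold dualg
  have hz : (0:ℝ) ^ (p - 1) = 0 := Real.zero_rpow (by linarith)
  have e : ∀ s : ℝ, 0 < s → s * s ^ (p - 1) = s ^ p := fun s hs => by
    nth_rw 1 [← Real.rpow_one s]
    rw [← Real.rpow_add hs]; congr 1; ring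
  rcases lt_trichotomy t 0 with h | h | h
  · rw [max_eq_right h.le, max_eq_left (by linarith), hz, abs_of_neg h, ← e (-t) (by linarith)]; ring
  · subst h; simp [Real.zero_rpow (by linarith : p ≠ 0)]
  · rw [max_eq_left h.le, max_eq_right (by linarith), hz, abs_of_pos h, ← e t h]; ring

theorem dualg_abs {p q : ℝ} (h : p.HolderConjugate q) (t : ℝ) : |dualg p t| ^ q = |t| ^ p := by
  have hp := h.lt
  have e1 : |dualg p t| = |t| ^ (p - 1) := by
    unfold dualg
    have hz : (0:ℝ) ^ (p - 1) = 0 := Real.zero_rpow (by linarith)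
    rcases le_total t 0 with h | h
    · rw [max_eq_right h, max_eq_left (by linarith), hz, abs_of_nonpos h, zero_sub, abs_neg,
        abs_of_nonneg (Real.rpow_nonneg (by linarith) _)]
    · rw [max_eq_left h, max_eq_right (by linarith), hz, abs_of_nonneg h, sub_zero,
        abs_of_nonneg (Real.rpow_nonneg h _)]
  rw [e1, ← Real.rpow_mul (abs_nonneg _), h.sub_one_mul_conj]

theorem discrete_cz (ι : Type*) [Fintype ι] [Nonempty ι] {p : ℝ} (hp : 1 < p) :
    ∃ C : ℝ, 0 < C ∧ ∀ (v : ι → E) (k : ι) (h : E → ℝ), CC h →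
    ∫ x, |h (x + v k) + h (x - v k) - 2 * h x| ^ p ∂μ ≤
      C * ∫ x, |∑ j, (h (x + v j) + h (x - v j) - 2 * h x)| ^ p ∂μ := by
  have hpq := Real.HolderConjugate.conjExponent hp
  set q := p.conjExponent
  have hq : 1 < q := hpq.symm.lt
  have hp0 : 0 < p := by linarith
  have hq0 : 0 < q := by linarith
  obtain ⟨C, hC, H⟩ := spair_bound (E := E) μ ι hpq
  set ε : ℝ := (2 * C) ^ (-(1 / (q - 1))) with hε
  have hε0 : 0 < ε := by positivity
  have hεq : C * ε ^ q = ε / 2 := by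
    have h1 : ε ^ (q - 1) = (2 * C)⁻¹ := by
      rw [hε, ← Real.rpow_mul (by positivity), ← Real.rpow_neg_one]
      congr 1
      have : q - 1 ≠ 0 := by linarith
      field_simp
    have h2 : ε ^ q = ε ^ (q - 1) * ε := by
      nth_rw 3 [← Real.rpow_one ε]
      rw [← Real.rpow_add hε0]; congr 1; ring
    rw [h2, h1]; field_simp
  have hcard : 0 < (Fintype.card ι : ℝ) := by exact_mod_cast Fintype.card_pos
  refine ⟨2 * C / ε * (2 ^ p * ((Fintype.card ι : ℝ)⁻¹ / 4) ^ p), by positivity, fun v k h hh => ?_⟩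
  set T : E → ℝ := fun x => h (x + v k) + h (x - v k) - 2 * h x with hT
  have cT : CC T := ((hh.shift _).add (hh.shift' _)).sub (hh.cmul continuous_const)
  have cφ : CC (fun x => ε * dualg p (T x)) := 
    (cT.comp (dualg_cont hp) (dualg_zero hp)).cmul continuous_const
  have hb := H v k h _ hh cφ
  rw [spair_eq μ hh cφ] at hb
  have e1 : ∫ x, (h (x + v k) + h (x - v k) - 2 * h x) * (ε * dualg p (T x)) ∂μ
      = ε * ∫ x, |T x| ^ p ∂μ := by
    rw [← integral_const_mul]
    refine integral_congr_ae (Filter.Eventually.of_forall fun x => ?_)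
    simp only
    rw [← dualg_mul hp (T x)]; simp only [hT]; ring
  have e2 : ∫ x, |ε * dualg p (T x)| ^ q ∂μ = ε ^ q * ∫ x, |T x| ^ p ∂μ := by
    rw [← integral_const_mul]
    refine integral_congr_ae (Filter.Eventually.of_forall fun x => ?_)
    simp only
    rw [abs_mul, Real.mul_rpow (abs_nonneg _) (abs_nonneg _), dualg_abs hpq, abs_of_pos hε0]
  rw [e1, e2, abs_neg] at hb
  have hX : 0 ≤ ∫ x, |T x| ^ p ∂μ := integral_nonneg fun x => by positivity
  rw [abs_of_nonneg (by positivity), mul_add, ← mul_assoc C, hεq] at hb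
  set X := ∫ x, |T x| ^ p ∂μ
  -- second part
  set ψ : E → ℝ := fun x => h x - walk v h x with hψ
  have cψ : CC ψ := hh.sub (hh.walk v)
  have eψ : ∀ x, ψ x = - ((Fintype.card ι : ℝ)⁻¹ / 4 * ∑ j, (h (x + v j) + h (x - v j) - 2 * h x)) := by
    intro x
    have : h x = (Fintype.card ι : ℝ)⁻¹ * ∑ j : ι, h x := by
      simp only [Finset.sum_const, Finset.card_univ, nsmul_eq_mul]
      rw [inv_mul_cancel_left₀ hcard.ne']
    simp only [hψ]
    nth_rw 1 [this]
    unfold walk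
    rw [← mul_sub, ← Finset.sum_sub_distrib, Finset.mul_sum, Finset.mul_sum, ← Finset.sum_neg_distrib]
    refine Finset.sum_congr rfl fun j _ => by ring
  have eF : ∀ x, h x - walk v (walk v h) x = ψ x + walk v ψ x := by
    intro x
    have := congrFun (walk_sub h (walk v h) v) x
    simp only [hψ]
    rw [this]; ring
  have hY : ∫ x, |h x - walk v (walk v h) x| ^ p ∂μ ≤ 2 ^ p * ∫ x, |ψ x| ^ p ∂μ := by
    have hpt : ∀ x, |h x - walk v (walk v h) x| ^ p ≤
        2 ^ p * (|ψ x| ^ p / 2) + 2 ^ p * (walk v (fun y => |ψ y| ^ p) x / 2) := by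
      intro x
      rw [eF]
      have h1 := (abs_rpow_convex hp.le).2 (Set.mem_univ (ψ x)) (Set.mem_univ (walk v ψ x))
        (by norm_num : (0:ℝ) ≤ 1/2) (by norm_num : (0:ℝ) ≤ 1/2) (by norm_num)
      have h2 := walk_jensen hp.le ψ v x
      simp only [smul_eq_mul] at h1
      have e3 : |ψ x + walk v ψ x| ^ p = 2 ^ p * |1 / 2 * ψ x + 1 / 2 * walk v ψ x| ^ p := by
        rw [← Real.mul_rpow (by norm_num) (abs_nonneg _)]
        congr 1
        rw [← abs_two, ← abs_mul, abs_two]; congr 1; ring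
      rw [e3, ← mul_add (2 ^ p : ℝ)]
      refine mul_le_mul_of_nonneg_left ?_ (by positivity : (0:ℝ) ≤ 2 ^ p)
      linarith
    have j1 := ((cψ.absp hp0).int μ)
    have j2 := (((cψ.absp hp0).walk v).int μ)
    have := integral_mono (((hh.sub ((hh.walk v).walk v)).absp hp0).int μ)
      (((j1.div_const 2).const_mul (2 ^ p)).add ((j2.div_const 2).const_mul (2 ^ p))) hpt
    refine this.trans (le_of_eq ?_)
    rw [integral_add' ((j1.div_const 2).const_mul (2 ^ p)) ((j2.div_const 2).const_mul (2 ^ p)),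
      integral_const_mul, integral_const_mul, integral_div, integral_div,
      walk_integral μ (cψ.absp hp0) v]
    ring
  have hZ : ∫ x, |ψ x| ^ p ∂μ = ((Fintype.card ι : ℝ)⁻¹ / 4) ^ p *
      ∫ x, |∑ j, (h (x + v j) + h (x - v j) - 2 * h x)| ^ p ∂μ := by
    rw [← integral_const_mul]
    refine integral_congr_ae (Filter.Eventually.of_forall fun x => ?_)
    simp only
    rw [eψ, abs_neg, abs_mul, Real.mul_rpow (abs_nonneg _) (abs_nonneg _),
      abs_of_pos (by positivity)]
  rw [hZ] at hY
  set Z := ∫ x, |∑ j, (h (x + v j) + h (x - v j) - 2 * h x)| ^ p ∂μ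
  set Y := ∫ x, |h x - walk v (walk v h) x| ^ p ∂μ
  have : X ≤ 2 * C / ε * Y := by
    rw [div_mul_eq_mul_div, le_div_iff₀ hε0]
    nlinarith
  calc X ≤ 2 * C / ε * Y := this
    _ ≤ 2 * C / ε * _ := mul_le_mul_of_nonneg_left hY (by positivity)
    _ = _ := by ring

end walk4

theorem taylor2 {ψ ψ' ψ'' : ℝ → ℝ} (h1 : ∀ t, HasDerivAt ψ (ψ' t) t)
    (h2 : ∀ t, HasDerivAt ψ' (ψ'' t) t) {s c ε : ℝ} (hs : 0 ≤ s)
    (hb : ∀ t, |t| ≤ s → |ψ'' t - c| ≤ ε) :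
    |ψ s + ψ (-s) - 2 * ψ 0 - c * s ^ 2| ≤ 2 * ε * s ^ 2 := by
  have g1 : ∀ t, HasDerivAt (fun t => ψ t + ψ (-t) - 2 * ψ 0 - c * t ^ 2)
      (ψ' t - ψ' (-t) - c * (2 * t)) t := by
    intro t
    have a := (h1 (-t)).comp t (hasDerivAt_neg t)
    have b := ((hasDerivAt_id t).pow 2).const_mul c
    have := (((h1 t).add a).sub_const (2 * ψ 0)).sub b
    refine HasDerivAt.congr_deriv this ?_
    simp
    try ring
  have g2 : ∀ t, HasDerivAt (fun t => ψ' t - ψ' (-t) - c * (2 * t))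
      (ψ'' t + ψ'' (-t) - 2 * c) t := by
    intro t
    have a := (h2 (-t)).comp t (hasDerivAt_neg t)
    have b := ((hasDerivAt_id t).const_mul 2).const_mul c
    have := ((h2 t).sub a).sub b
    refine HasDerivAt.congr_deriv this ?_
    simp
    try ring
  have hε : ∀ t ∈ Set.Icc 0 s, ‖ψ'' t + ψ'' (-t) - 2 * c‖ ≤ 2 * ε := by
    intro t ht
    have a := hb t (by rw [abs_of_nonneg ht.1]; exact ht.2)
    have b := hb (-t) (by rw [abs_neg, abs_of_nonneg ht.1]; exact ht.2)
    rw [Real.norm_eq_abs]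
    have : ψ'' t + ψ'' (-t) - 2 * c = (ψ'' t - c) + (ψ'' (-t) - c) := by ring
    rw [this]
    refine (abs_add_le _ _).trans (by linarith)
  have hε0 : 0 ≤ ε := (abs_nonneg _).trans (hb 0 (by simpa using hs))
  have d1 : ∀ t ∈ Set.Icc 0 s, ‖ψ' t - ψ' (-t) - c * (2 * t)‖ ≤ 2 * ε * s := by
    intro t ht
    have := (convex_Icc 0 s).norm_image_sub_le_of_norm_hasDerivWithin_le
      (fun x _ => (g2 x).hasDerivWithinAt) hε (Set.left_mem_Icc.2 hs) ht
    simp only [neg_zero, sub_self, mul_zero, sub_zero] at this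
    refine this.trans ?_
    rw [Real.norm_of_nonneg ht.1]
    exact mul_le_mul_of_nonneg_left ht.2 (by positivity)
  have := (convex_Icc 0 s).norm_image_sub_le_of_norm_hasDerivWithin_le
      (fun x _ => (g1 x).hasDerivWithinAt) d1 (Set.left_mem_Icc.2 hs) (Set.right_mem_Icc.2 hs)
  simp only [neg_zero, sub_zero, Real.norm_eq_abs, abs_of_nonneg hs] at this
  have e : ψ 0 + ψ 0 - 2 * ψ 0 - c * 0 ^ 2 = 0 := by ring
  rw [e, sub_zero] at this
  refine this.trans (le_of_eq (by ring))

section lim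
variable {E : Type*} [NormedAddCommGroup E] [NormedSpace ℝ E]

/-- directional derivative -/
noncomputable def dd (v : E) (f : E → ℝ) : E → ℝ := fun x => fderiv ℝ f x v

/-- smooth compactly supported -/
def CS (f : E → ℝ) : Prop := ContDiff ℝ (⊤ : ℕ∞) f ∧ HasCompactSupport f

theorem smooth_dd {f : E → ℝ} (hf : ContDiff ℝ (⊤ : ℕ∞) f) (v : E) : 
    ContDiff ℝ (⊤ : ℕ∞) (dd v f) := by
  unfold dd
  exact (hf.fderiv_right (m := (⊤ : ℕ∞)) (by simp)).clm_apply contDiff_const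

theorem CS.dd {f : E → ℝ} (hf : CS f) (v : E) : CS (dd v f) :=
  ⟨smooth_dd hf.1 v, by
    have := hf.2.fderiv (𝕜 := ℝ)
    exact this.comp_left (g := fun L : E →L[ℝ] ℝ => L v) (by simp)⟩

theorem CS.cc {f : E → ℝ} (hf : CS f) : CC f := ⟨hf.1.continuous, hf.2⟩

theorem smooth_diff {f : E → ℝ} (hf : ContDiff ℝ (⊤ : ℕ∞) f) : Differentiable ℝ f :=
  hf.differentiable (by simp)

theorem dd_line {f : E → ℝ} (hf : Differentiable ℝ f) (v x : E) (t : ℝ) :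
    HasDerivAt (fun t : ℝ => f (x + t • v)) (dd v f (x + t • v)) t := by
  have h1 : HasDerivAt (fun t : ℝ => x + t • v) v t := by
    have := ((hasDerivAt_id t).smul_const v).const_add x
    simpa using this
  exact (hf (x + t • v)).hasFDerivAt.comp_hasDerivAt t h1

theorem quot_bd {f : E → ℝ} (hf : CS f) (v x : E) {s c ε : ℝ} (hs : 0 ≤ s)
    (hb : ∀ t : ℝ, |t| ≤ s → |dd v (dd v f) (x + t • v) - c| ≤ ε) :
    |f (x + s • v) + f (x - s • v) - 2 * f x - c * s ^ 2| ≤ 2 * ε * s ^ 2 := by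
  have := taylor2 (fun t => dd_line (smooth_diff hf.1) v x t)
    (fun t => dd_line (smooth_diff (hf.dd v).1) v x t) hs hb
  simpa [sub_eq_add_neg] using this

variable [FiniteDimensional ℝ E] [MeasurableSpace E] [BorelSpace E] (μ : Measure E)
  [IsFiniteMeasureOnCompacts μ] [μ.IsAddRightInvariant]

theorem lim_int {p : ℝ} (hp : 0 < p) {G : ℕ → E → ℝ} {g : E → ℝ} (hG : ∀ n, Continuous (G n))
    {K : Set E} (hK : IsCompact K) (h0 : ∀ n x, x ∉ K → G n x = 0) {M : ℝ}
    (hM : ∀ n x, |G n x| ≤ M) (ht : ∀ x, Filter.Tendsto (fun n => G n x) Filter.atTop (nhds (g x))) :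
    Filter.Tendsto (fun n => ∫ x, |G n x| ^ p ∂μ) Filter.atTop (nhds (∫ x, |g x| ^ p ∂μ)) := by
  refine tendsto_integral_of_dominated_convergence (K.indicator (fun _ => M ^ p)) ?_ ?_ ?_ ?_
  · exact fun n => ((abs_rpow_cont hp.le).comp (hG n)).aestronglyMeasurable
  · exact (integrable_indicator_iff hK.measurableSet).2 (integrableOn_const hK.measure_lt_top.ne)
  · intro n
    refine Filter.Eventually.of_forall fun x => ?_
    rw [Real.norm_of_nonneg (by positivity)]
    by_cases hx : x ∈ K
    · rw [Set.indicator_of_mem hx]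
      exact Real.rpow_le_rpow (abs_nonneg _) (hM n x) hp.le
    · rw [Set.indicator_of_notMem hx, h0 n x hx, abs_rpow_zero hp.ne']
  · refine Filter.Eventually.of_forall fun x => ?_
    exact ((abs_rpow_cont hp.le).tendsto (g x)).comp (ht x)

theorem quot_props {f : E → ℝ} (hf : CS f) (v : E) :
    ∃ (K : Set E) (M : ℝ), IsCompact K ∧ (∀ (n : ℕ) x, x ∉ K →
      (f (x + ((n:ℝ) + 1)⁻¹ • v) + f (x - ((n:ℝ) + 1)⁻¹ • v) - 2 * f x) * ((n:ℝ) + 1) ^ 2 = 0) ∧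
      (∀ (n : ℕ) x, 
      |(f (x + ((n:ℝ) + 1)⁻¹ • v) + f (x - ((n:ℝ) + 1)⁻¹ • v) - 2 * f x) * ((n:ℝ) + 1) ^ 2| ≤ M) ∧
      (∀ x, Filter.Tendsto (fun n : ℕ => 
      (f (x + ((n:ℝ) + 1)⁻¹ • v) + f (x - ((n:ℝ) + 1)⁻¹ • v) - 2 * f x) * ((n:ℝ) + 1) ^ 2)
        Filter.atTop (nhds (dd v (dd v f) x))) := by
  have : ProperSpace E := FiniteDimensional.proper_real E
  have hc := ((hf.dd v).dd v).cc
  obtain ⟨M, hM⟩ := hc.2.exists_bound_of_continuous hc.1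
  refine ⟨Metric.cthickening ‖v‖ (tsupport f), 2 * M, hf.2.isCompact.cthickening, ?_, ?_, ?_⟩
  · intro n x hx
    have hn : ‖((n:ℝ) + 1)⁻¹ • v‖ ≤ ‖v‖ := by
      rw [norm_smul, norm_inv]
      refine mul_le_of_le_one_left (norm_nonneg _) (inv_le_one_of_one_le₀ ?_)
      rw [Real.norm_of_nonneg (by positivity)]; linarith [(Nat.cast_nonneg n : (0:ℝ) ≤ n)]
    have z : ∀ y, dist x y ≤ ‖v‖ → f y = 0 := by
      intro y hy
      by_contra hne
      exact hx (Metric.mem_cthickening_of_dist_le x y _ _ (subset_tsupport f hne) hy)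
    rw [z _ (by simpa [dist_eq_norm] using hn), z _ (by simpa [dist_eq_norm] using hn), z x (by simp)]
    simp
  · intro n x
    have hn : 0 < (n:ℝ) + 1 := by positivity
    have := quot_bd hf v x (s := ((n:ℝ) + 1)⁻¹) (c := 0) (ε := M) (by positivity)
      (fun t _ => by simpa using hM _)
    rw [zero_mul, sub_zero] at this
    rw [abs_mul, abs_of_pos (by positivity : 0 < ((n:ℝ) + 1) ^ 2)]
    calc _ ≤ 2 * M * (((n:ℝ) + 1)⁻¹) ^ 2 * ((n:ℝ) + 1) ^ 2 := by gcongr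
      _ = _ := by field_simp
  · intro x
    rw [Metric.tendsto_atTop]
    intro ε hε
    have hcont : Continuous (fun t : ℝ => dd v (dd v f) (x + t • v)) := 
      hc.1.comp (by fun_prop)
    have := Metric.continuous_iff.1 hcont 0 (ε / 3) (by positivity)
    obtain ⟨η, hη, H⟩ := this
    obtain ⟨N, hN⟩ := exists_nat_gt (η⁻¹)
    refine ⟨N, fun n hnN => ?_⟩
    have hn : 0 < (n:ℝ) + 1 := by positivity
    have hnη : ((n:ℝ) + 1)⁻¹ < η := by
      rw [inv_lt_comm₀ hn hη]
      have : (N:ℝ) ≤ n := by exact_mod_cast hnN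
      linarith
    have := quot_bd hf v x (s := ((n:ℝ) + 1)⁻¹) (c := dd v (dd v f) x) (ε := ε / 3) (by positivity)
      (fun t ht => by
        have := H t (by rw [Real.dist_eq, sub_zero]; linarith)
        rw [Real.dist_eq] at this
        simpa using this.le)
    rw [Real.dist_eq]
    have e : (f (x + ((n:ℝ) + 1)⁻¹ • v) + f (x - ((n:ℝ) + 1)⁻¹ • v) - 2 * f x) * ((n:ℝ) + 1) ^ 2 -
      dd v (dd v f) x = (f (x + ((n:ℝ) + 1)⁻¹ • v) + f (x - ((n:ℝ) + 1)⁻¹ • v) - 2 * f x -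
        dd v (dd v f) x * (((n:ℝ) + 1)⁻¹) ^ 2) * ((n:ℝ) + 1) ^ 2 := by field_simp
    rw [e, abs_mul, abs_of_pos (by positivity : 0 < ((n:ℝ) + 1) ^ 2)]
    calc _ ≤ 2 * (ε / 3) * (((n:ℝ) + 1)⁻¹) ^ 2 * ((n:ℝ) + 1) ^ 2 := by gcongr
      _ = 2 * (ε / 3) := by field_simp
      _ < ε := by linarith

theorem cont_cz (ι : Type*) [Fintype ι] [Nonempty ι] {p : ℝ} (hp : 1 < p) :
    ∃ C : ℝ, 0 < C ∧ ∀ (v : ι → E) (k : ι) (h : E → ℝ), CS h →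
    ∫ x, |dd (v k) (dd (v k) h) x| ^ p ∂μ ≤
      C * ∫ x, |∑ j, dd (v j) (dd (v j) h) x| ^ p ∂μ := by
  obtain ⟨C, hC, H⟩ := discrete_cz (E := E) μ ι hp
  have hp0 : 0 < p := by linarith
  refine ⟨C, hC, fun v k h hh => ?_⟩
  choose K M hK h0 hM ht using fun j => quot_props hh (v j)
  have cq : ∀ (j) (n : ℕ), Continuous (fun x => (h (x + ((n:ℝ) + 1)⁻¹ • v j) +
      h (x - ((n:ℝ) + 1)⁻¹ • v j) - 2 * h x) * ((n:ℝ) + 1) ^ 2) := by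
    intro j n
    have := hh.1.continuous
    fun_prop
  have L1 := lim_int μ hp0 (cq k) (hK k) (h0 k) (hM k) (ht k)
  have L2 := lim_int μ hp0 (G := fun n x => ∑ j, (h (x + ((n:ℝ) + 1)⁻¹ • v j) +
      h (x - ((n:ℝ) + 1)⁻¹ • v j) - 2 * h x) * ((n:ℝ) + 1) ^ 2) (K := ⋃ j, K j)
      (g := fun x => ∑ j, dd (v j) (dd (v j) h) x) (M := ∑ j, M j)
      (fun n => continuous_finsetSum _ fun j _ => cq j n) (isCompact_iUnion hK)
      (fun n x hx => Finset.sum_eq_zero fun j _ => h0 j n x fun hj => hx (Set.mem_iUnion.2 ⟨j, hj⟩))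
      (fun n x => (Finset.abs_sum_le_sum_abs _ _).trans (Finset.sum_le_sum fun j _ => hM j n x))
      (fun x => tendsto_finsetSum _ fun j _ => ht j x)
  refine le_of_tendsto_of_tendsto' L1 (L2.const_mul C) fun n => ?_
  have hn := H (fun j => ((n:ℝ) + 1)⁻¹ • v j) k h hh.cc
  simp only [← Finset.sum_mul]
  have hs : 0 < ((n:ℝ) + 1) ^ 2 := by positivity
  simp only [abs_mul, Real.mul_rpow (abs_nonneg _) (abs_nonneg _), integral_mul_const]
  rw [← mul_assoc]
  exact mul_le_mul_of_nonneg_right hn (by positivity)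

end lim

section ddrules
variable {E : Type*} [NormedAddCommGroup E] [NormedSpace ℝ E]

theorem dd_add_dir (v w : E) (f : E → ℝ) : dd (v + w) f = fun x => dd v f x + dd w f x := by
  funext x; simp [dd]

theorem dd_sub_dir (v w : E) (f : E → ℝ) : dd (v - w) f = fun x => dd v f x - dd w f x := by
  funext x; simp [dd]

theorem dd_smul_dir (c : ℝ) (v : E) (f : E → ℝ) : dd (c • v) f = fun x => c * dd v f x := by
  funext x; simp [dd]

theorem dd_add {f g : E → ℝ} (hf : Differentiable ℝ f) (hg : Differentiable ℝ g) (v : E) :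
    dd v (fun x => f x + g x) = fun x => dd v f x + dd v g x := by
  funext x
  unfold dd
  have := fderiv_add (hf x) (hg x)
  change fderiv ℝ (fun x => f x + g x) x = _ at this
  rw [this]; rfl

theorem dd_sub {f g : E → ℝ} (hf : Differentiable ℝ f) (hg : Differentiable ℝ g) (v : E) :
    dd v (fun x => f x - g x) = fun x => dd v f x - dd v g x := by
  funext x
  unfold dd
  have := fderiv_sub (hf x) (hg x)
  change fderiv ℝ (fun x => f x - g x) x = _ at this
  rw [this]; rfl

theorem dd_cmul {f : E → ℝ} (hf : Differentiable ℝ f) (c : ℝ) (v : E) :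
    dd v (fun x => c * f x) = fun x => c * dd v f x := by
  funext x
  unfold dd
  rw [fderiv_const_mul (hf x)]; simp

theorem dd_mul {f g : E → ℝ} (hf : Differentiable ℝ f) (hg : Differentiable ℝ g) (v : E) :
    dd v (fun x => f x * g x) = fun x => f x * dd v g x + g x * dd v f x := by
  funext x
  unfold dd
  have := fderiv_mul (hf x) (hg x)
  change fderiv ℝ (fun x => f x * g x) x = _ at this
  rw [this]; simp

theorem dd_comm {f : E → ℝ} (hf : ContDiff ℝ (⊤ : ℕ∞) f) (v w : E) :
    dd v (dd w f) = dd w (dd v f) := by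
  funext x
  have hs : IsSymmSndFDerivAt ℝ f x := hf.contDiffAt.isSymmSndFDerivAt (by
    rw [minSmoothness_of_isRCLikeNormedField]; exact WithTop.coe_le_coe.2 (le_top : (2:ℕ∞) ≤ ⊤))
  have h1 : ∀ v w, dd v (dd w f) x = fderiv ℝ (fderiv ℝ f) x v w := by
    intro v w
    have hd : DifferentiableAt ℝ (fderiv ℝ f) x :=
      ((hf.fderiv_right (m := (⊤ : ℕ∞)) (by simp)).differentiable (by simp)) x
    change fderiv ℝ (fun y => fderiv ℝ f y w) x v = _
    rw [fderiv_clm_apply hd (differentiableAt_const w)]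
    simp
  rw [h1, h1]
  exact hs v w

theorem dd_sum {κ : Type*} {f : κ → E → ℝ} (s : Finset κ) (hf : ∀ k ∈ s, Differentiable ℝ (f k)) (v : E) :
    dd v (fun x => ∑ k ∈ s, f k x) = fun x => ∑ k ∈ s, dd v (f k) x := by
  funext x
  unfold dd
  have := fderiv_fun_sum (u := s) (A := f) (x := x) (𝕜 := ℝ) (fun k hk => hf k hk x)
  rw [this]; simp

end ddrules

section nrm
variable {E : Type*} [NormedAddCommGroup E] [NormedSpace ℝ E]
  [FiniteDimensional ℝ E] [MeasurableSpace E] [BorelSpace E] (μ : Measure E)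
  [IsFiniteMeasureOnCompacts μ] [μ.IsAddRightInvariant]

/-- the Lp norm as a real number -/
noncomputable def nrm (p : ℝ) (f : E → ℝ) : ℝ := (eLpNorm f (ENNReal.ofReal p) μ).toReal

theorem CC.memLp {f : E → ℝ} (hf : CC f) (p : ENNReal) : MemLp f p μ :=
  hf.1.memLp_of_hasCompactSupport hf.2

theorem nrm_nonneg (p : ℝ) (f : E → ℝ) : 0 ≤ nrm μ p f := ENNReal.toReal_nonneg

theorem nrm_eq {p : ℝ} (hp : 1 < p) {f : E → ℝ} (hf : CC f) :
    nrm μ p f = (∫ x, |f x| ^ p ∂μ) ^ (1 / p) := by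
  have h1 : ENNReal.ofReal p ≠ 0 := by simp; linarith
  have := (hf.memLp μ (ENNReal.ofReal p)).eLpNorm_eq_integral_rpow_norm h1 (by simp)
  unfold nrm
  rw [this, ENNReal.toReal_ofReal (by positivity), ENNReal.toReal_ofReal (by linarith)]
  simp [Real.norm_eq_abs]

theorem nrm_add {p : ℝ} (hp : 1 < p) {f g : E → ℝ} (hf : CC f) (hg : CC g) :
    nrm μ p (fun x => f x + g x) ≤ nrm μ p f + nrm μ p g := by
  unfold nrm
  have m1 := hf.memLp μ (ENNReal.ofReal p)
  have m2 := hg.memLp μ (ENNReal.ofReal p)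
  rw [← ENNReal.toReal_add m1.2.ne m2.2.ne]
  refine ENNReal.toReal_mono (ENNReal.add_lt_top.2 ⟨m1.2, m2.2⟩).ne ?_
  exact eLpNorm_add_le m1.1 m2.1 (by simpa using hp.le)

theorem nrm_le {p : ℝ} {f g : E → ℝ} {c : ℝ} (hc : 0 ≤ c) (hg : CC g) 
    (h : ∀ x, |f x| ≤ c * |g x|) : nrm μ p f ≤ c * nrm μ p g := by
  unfold nrm
  have m2 := hg.memLp μ (ENNReal.ofReal p)
  have := eLpNorm_le_mul_eLpNorm_of_ae_le_mul (f := f) (g := g) (c := c) (μ := μ)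
    (Filter.Eventually.of_forall h) (ENNReal.ofReal p)
  rw [← ENNReal.toReal_ofReal hc, ← ENNReal.toReal_mul]
  refine ENNReal.toReal_mono (ENNReal.mul_ne_top (by simp) m2.2.ne) this

theorem nrm_sum {p : ℝ} (hp : 1 < p) {κ : Type*} {f : κ → E → ℝ} (s : Finset κ)
    (hf : ∀ k ∈ s, CC (f k)) :
    nrm μ p (fun x => ∑ k ∈ s, f k x) ≤ ∑ k ∈ s, nrm μ p (f k) := by
  classical
  induction s using Finset.induction_on with
  | empty => simp [nrm]
  | insert a s ha ih =>
    simp only [Finset.sum_insert ha]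
    refine (nrm_add μ hp (hf a (by simp)) (CC.sum s fun k hk => hf k (by simp [hk]))).trans ?_
    gcongr
    exact ih fun k hk => hf k (by simp [hk])

theorem nrm_sub {p : ℝ} (hp : 1 < p) {f g : E → ℝ} (hf : CC f) (hg : CC g) :
    nrm μ p (fun x => f x - g x) ≤ nrm μ p f + nrm μ p g := by
  have h1 := nrm_add μ hp hf hg.neg
  have h2 := nrm_le μ (p := p) zero_le_one hg (f := fun x => - g x) (by simp)
  simp only [← sub_eq_add_neg] at h1
  linarith

theorem nrm_smul {p : ℝ} (c : ℝ) (f : E → ℝ) : nrm μ p (fun x => c * f x) = |c| * nrm μ p f := by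
  unfold nrm
  have := eLpNorm_const_smul c f (ENNReal.ofReal p) μ
  change eLpNorm (fun x => c * f x) _ _ = _ at this
  rw [this, ENNReal.toReal_mul]; simp

theorem nrm_shift {p : ℝ} (hp : 1 < p) {f : E → ℝ} (hf : CC f) (v : E) :
    nrm μ p (fun x => f (x + v)) = nrm μ p f := by
  rw [nrm_eq μ hp hf, nrm_eq μ hp (hf.shift v),
    integral_add_right_eq_self (μ := μ) (fun x => |f x| ^ p) v]

theorem cont_cz_nrm (ι : Type*) [Fintype ι] [Nonempty ι] {p : ℝ} (hp : 1 < p) :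
    ∃ C : ℝ, 0 < C ∧ ∀ (v : ι → E) (k : ι) (h : E → ℝ), CS h →
    nrm μ p (dd (v k) (dd (v k) h)) ≤
      C * nrm μ p (fun x => ∑ j, dd (v j) (dd (v j) h) x) := by
  obtain ⟨C, hC, H⟩ := cont_cz μ ι hp
  refine ⟨C ^ (1 / p), by positivity, fun v k h hh => ?_⟩
  have cc : ∀ j, CC (dd (v j) (dd (v j) h)) := fun j => ((hh.dd _).dd _).cc
  rw [nrm_eq μ hp (cc k), nrm_eq μ hp (CC.sum _ fun j _ => cc j), ← Real.mul_rpow hC.le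
    (integral_nonneg fun x => by positivity)]
  exact Real.rpow_le_rpow (integral_nonneg fun x => by positivity) (H v k h hh) (by positivity)

end nrm

section dirs

theorem cz_dir (d : ℕ) (hd : 1 ≤ d) {p : ℝ} (hp : 1 < p) :
    ∃ C : ℝ, 0 < C ∧ ∀ (i j : Fin d) (h : EuclideanSpace ℝ (Fin d) → ℝ), CS h →
    nrm volume p (dd (EuclideanSpace.single i 1) (dd (EuclideanSpace.single j 1) h)) ≤
      C * nrm volume p (fun x => ∑ k : Fin d, 
        dd (EuclideanSpace.single k 1) (dd (EuclideanSpace.single k 1) h) x) := by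
  have : Nonempty (Fin d) := ⟨⟨0, hd⟩⟩
  obtain ⟨C, hC, H⟩ := cont_cz_nrm (E := EuclideanSpace ℝ (Fin d)) volume (Fin d × Fin d × Bool) hp
  have hd0 : (0:ℝ) < d := by exact_mod_cast hd
  refine ⟨2 * d * C, by positivity, fun i j h hh => ?_⟩
  let e : Fin d → EuclideanSpace ℝ (Fin d) := fun i => EuclideanSpace.single i 1
  let v : Fin d × Fin d × Bool → EuclideanSpace ℝ (Fin d) := fun k =>
    if k.2.2 then e k.1 + e k.2.1 else e k.1 - e k.2.1
  have dif : ∀ w, Differentiable ℝ (dd w h) := fun w => smooth_diff (hh.dd w).1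
  have plus : ∀ i j x, dd (e i + e j) (dd (e i + e j) h) x = dd (e i) (dd (e i) h) x +
      2 * dd (e i) (dd (e j) h) x + dd (e j) (dd (e j) h) x := by
    intro i j x
    rw [dd_add_dir (e i) (e j) h, dd_add (dif _) (dif _), dd_add_dir, dd_add_dir, 
      dd_comm hh.1 (e j) (e i)]
    ring
  have minus : ∀ i j x, dd (e i - e j) (dd (e i - e j) h) x = dd (e i) (dd (e i) h) x -
      2 * dd (e i) (dd (e j) h) x + dd (e j) (dd (e j) h) x := by
    intro i j x
    rw [dd_sub_dir (e i) (e j) h, dd_sub (dif _) (dif _), dd_sub_dir, dd_sub_dir, 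
      dd_comm hh.1 (e j) (e i)]
    ring
  have tot : ∀ x, ∑ k, dd (v k) (dd (v k) h) x = 4 * d * ∑ k : Fin d, dd (e k) (dd (e k) h) x := by
    intro x
    simp only [Fintype.sum_prod_type, Fintype.sum_bool, v, if_true, plus, minus, Bool.false_eq_true, if_false]
    have : ∀ a b : Fin d, dd (e a) (dd (e a) h) x +
      2 * dd (e a) (dd (e b) h) x + dd (e b) (dd (e b) h) x + (dd (e a) (dd (e a) h) x -
      2 * dd (e a) (dd (e b) h) x + dd (e b) (dd (e b) h) x) = 2 * dd (e a) (dd (e a) h) x +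
      2 * dd (e b) (dd (e b) h) x := fun a b => by ring
    simp only [this, Finset.sum_add_distrib, Finset.sum_const, Finset.card_univ, Fintype.card_fin,
      ← Finset.mul_sum, nsmul_eq_mul]
    ring
  have h1 := H v (i, j, true) h hh
  have h2 := H v (i, j, false) h hh
  simp only [tot] at h1 h2
  rw [nrm_smul] at h1 h2
  set L := nrm volume p (fun x => ∑ k : Fin d, dd (e k) (dd (e k) h) x) with hL
  have e1 : dd (e i) (dd (e j) h) = fun x => 4⁻¹ * (dd (v (i, j, true)) (dd (v (i, j, true)) h) x -
    dd (v (i, j, false)) (dd (v (i, j, false)) h) x) := by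
    funext x
    simp only [v, if_true, Bool.false_eq_true, if_false]
    rw [plus, minus]; ring
  change nrm volume p (dd (e i) (dd (e j) h)) ≤ 2 * d * C * L
  rw [e1, nrm_smul]
  have h3 := nrm_sub volume hp ((hh.dd (v (i, j, true))).dd (v (i, j, true))).cc 
    ((hh.dd (v (i, j, false))).dd (v (i, j, false))).cc
  rw [abs_of_pos (by positivity)] at h1 h2 ⊢
  linarith

end dirs

theorem taylor1 {ψ ψ' : ℝ → ℝ} (h1 : ∀ t, HasDerivAt ψ (ψ' t) t)
    {s c ε : ℝ} (hs : 0 ≤ s) (hb : ∀ t, |t| ≤ s → |ψ' t - c| ≤ ε) :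
    |ψ s - ψ 0 - c * s| ≤ ε * s := by
  have g1 : ∀ t, HasDerivAt (fun t => ψ t - c * t) (ψ' t - c) t := by
    intro t
    have b := (hasDerivAt_id t).const_mul c
    exact ((h1 t).sub b).congr_deriv (by simp)
  have := (convex_Icc 0 s).norm_image_sub_le_of_norm_hasDerivWithin_le
      (C := ε) (fun x _ => (g1 x).hasDerivWithinAt) 
      (fun t ht => hb t (by rw [abs_of_nonneg ht.1]; exact ht.2))
      (Set.left_mem_Icc.2 hs) (Set.right_mem_Icc.2 hs)
  simp only [sub_zero, Real.norm_eq_abs, abs_of_nonneg hs, mul_zero] at this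
  rwa [sub_right_comm] at this

section interp
variable {E : Type*} [NormedAddCommGroup E] [NormedSpace ℝ E]
  [FiniteDimensional ℝ E] [MeasurableSpace E] [BorelSpace E] (μ : Measure E)
  [IsFiniteMeasureOnCompacts μ] [μ.IsAddRightInvariant]

theorem quot1_bd {f : E → ℝ} (hf : CS f) (v x : E) {s c ε : ℝ} (hs : 0 ≤ s)
    (hb : ∀ t : ℝ, |t| ≤ s → |dd v f (x + t • v) - c| ≤ ε) :
    |f (x + s • v) - f x - c * s| ≤ ε * s := by
  have := taylor1 (fun t => dd_line (smooth_diff hf.1) v x t) hs hb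
  simpa using this

theorem quot1_props {f : E → ℝ} (hf : CS f) (v : E) :
    ∃ (K : Set E) (M : ℝ), IsCompact K ∧ (∀ (n : ℕ) x, x ∉ K →
      ((n:ℝ) + 1) * (f (x + ((n:ℝ) + 1)⁻¹ • v) - f x) = 0) ∧
      (∀ (n : ℕ) x, 
      |((n:ℝ) + 1) * (f (x + ((n:ℝ) + 1)⁻¹ • v) - f x)| ≤ M) ∧
      (∀ x, Filter.Tendsto (fun n : ℕ => ((n:ℝ) + 1) * (f (x + ((n:ℝ) + 1)⁻¹ • v) - f x))
        Filter.atTop (nhds (dd v f x))) := by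
  have : ProperSpace E := FiniteDimensional.proper_real E
  have hc := (hf.dd v).cc
  obtain ⟨M, hM⟩ := hc.2.exists_bound_of_continuous hc.1
  refine ⟨Metric.cthickening ‖v‖ (tsupport f), M, hf.2.isCompact.cthickening, ?_, ?_, ?_⟩
  · intro n x hx
    have hn : ‖((n:ℝ) + 1)⁻¹ • v‖ ≤ ‖v‖ := by
      rw [norm_smul, norm_inv]
      refine mul_le_of_le_one_left (norm_nonneg _) (inv_le_one_of_one_le₀ ?_)
      rw [Real.norm_of_nonneg (by positivity)]; linarith [(Nat.cast_nonneg n : (0:ℝ) ≤ n)]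
    have z : ∀ y, dist x y ≤ ‖v‖ → f y = 0 := by
      intro y hy
      by_contra hne
      exact hx (Metric.mem_cthickening_of_dist_le x y _ _ (subset_tsupport f hne) hy)
    rw [z _ (by simpa [dist_eq_norm] using hn), z x (by simp)]
    simp
  · intro n x
    have hn : 0 < (n:ℝ) + 1 := by positivity
    have := quot1_bd hf v x (s := ((n:ℝ) + 1)⁻¹) (c := 0) (ε := M) (by positivity)
      (fun t _ => by simpa using hM _)
    rw [zero_mul, sub_zero] at this
    rw [abs_mul, abs_of_pos hn]
    calc _ ≤ ((n:ℝ) + 1) * (M * (((n:ℝ) + 1)⁻¹)) := by gcongr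
      _ = _ := by field_simp
  · intro x
    rw [Metric.tendsto_atTop]
    intro ε hε
    have hcont : Continuous (fun t : ℝ => dd v f (x + t • v)) := 
      hc.1.comp (by fun_prop)
    have := Metric.continuous_iff.1 hcont 0 (ε / 3) (by positivity)
    obtain ⟨η, hη, H⟩ := this
    obtain ⟨N, hN⟩ := exists_nat_gt (η⁻¹)
    refine ⟨N, fun n hnN => ?_⟩
    have hn : 0 < (n:ℝ) + 1 := by positivity
    have hnη : ((n:ℝ) + 1)⁻¹ < η := by
      rw [inv_lt_comm₀ hn hη]
      have : (N:ℝ) ≤ n := by exact_mod_cast hnN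
      linarith
    have := quot1_bd hf v x (s := ((n:ℝ) + 1)⁻¹) (c := dd v f x) (ε := ε / 3) (by positivity)
      (fun t ht => by
        have := H t (by rw [Real.dist_eq, sub_zero]; linarith)
        rw [Real.dist_eq] at this
        simpa using this.le)
    rw [Real.dist_eq]
    have e : ((n:ℝ) + 1) * (f (x + ((n:ℝ) + 1)⁻¹ • v) - f x) -
      dd v f x = ((n:ℝ) + 1) * (f (x + ((n:ℝ) + 1)⁻¹ • v) - f x - dd v f x * ((n:ℝ) + 1)⁻¹) := by
      field_simp
    rw [e, abs_mul, abs_of_pos hn]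
    calc _ ≤ ((n:ℝ) + 1) * (ε / 3 * ((n:ℝ) + 1)⁻¹) := by gcongr
      _ = (ε / 3) := by field_simp
      _ < ε := by linarith

theorem lim_nrm {p : ℝ} (hp : 1 < p) {G : ℕ → E → ℝ} {g : E → ℝ} (hG : ∀ n, CC (G n)) (hg : CC g)
    {K : Set E} (hK : IsCompact K) (h0 : ∀ n x, x ∉ K → G n x = 0) {M : ℝ}
    (hM : ∀ n x, |G n x| ≤ M) (ht : ∀ x, Filter.Tendsto (fun n => G n x) Filter.atTop (nhds (g x))) :
    Filter.Tendsto (fun n => nrm μ p (G n)) Filter.atTop (nhds (nrm μ p g)) := by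
  have := lim_int μ (by linarith : 0 < p) (fun n => (hG n).1) hK h0 hM ht
  simp only [nrm_eq μ hp (hG _)]
  rw [nrm_eq μ hp hg]
  exact this.rpow_const (Or.inr (by positivity))

theorem nrm_shift_k {p : ℝ} (hp : 1 < p) {D : E → ℝ} (hD : CC D) (w : E) (k : ℕ) :
    nrm μ p (fun x => D (x + (k:ℝ) • w) - D x) ≤ k * nrm μ p (fun x => D (x + w) - D x) := by
  induction k with
  | zero => simp [nrm]
  | succ k ih =>
    have e : (fun x => D (x + ((k + 1 : ℕ):ℝ) • w) - D x) = fun x => 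
      (fun x => D (x + w) - D x) (x + (k:ℝ) • w) + (D (x + (k:ℝ) • w) - D x) := by
      funext x
      have : x + ((k + 1 : ℕ):ℝ) • w = x + (k:ℝ) • w + w := by
        push_cast; module
      simp only [this]; ring
    rw [e]
    refine (nrm_add μ hp (((hD.shift w).sub hD).shift _) ((hD.shift _).sub hD)).trans ?_
    rw [nrm_shift μ hp ((hD.shift w).sub hD)]
    push_cast
    linarith

theorem interp_disc {p : ℝ} (hp : 1 < p) {h : E → ℝ} (hh : CC h) (v : E) (n : ℕ) :
    nrm μ p (fun x => ((n:ℝ) + 1) * (h (x + ((n:ℝ) + 1)⁻¹ • v) - h x)) ≤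
      2 * nrm μ p h + nrm μ p (fun x => 
      (h (x + ((n:ℝ) + 1)⁻¹ • v) + h (x - ((n:ℝ) + 1)⁻¹ • v) - 2 * h x) * ((n:ℝ) + 1) ^ 2) := by
  set w := ((n:ℝ) + 1)⁻¹ • v with hw
  have hn : 0 < (n:ℝ) + 1 := by positivity
  set D : E → ℝ := fun x => h (x + w) - h x with hD
  have cD : CC D := (hh.shift w).sub hh
  set S : E → ℝ := fun x => h (x + w) + h (x - w) - 2 * h x with hS
  have cS : CC S := ((hh.shift _).add (hh.shift' _)).sub (hh.cmul continuous_const)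
  have hDS : nrm μ p (fun x => D (x + w) - D x) = nrm μ p S := by
    rw [← nrm_shift μ hp cS w]
    congr 1
    funext x
    simp only [hD, hS, add_sub_cancel_right]; ring
  have hvw : v = ((n + 1 : ℕ):ℝ) • w := by
    rw [hw, smul_smul]; push_cast; rw [mul_inv_cancel₀ hn.ne', one_smul]
  have tele : ∀ N : ℕ, ∀ x, h (x + (N:ℝ) • w) - h x = ∑ k ∈ Finset.range N, D (x + (k:ℝ) • w) := by
    intro N x
    induction N with
    | zero => simp
    | succ N ih =>
      rw [Finset.sum_range_succ, ← ih]
      have : x + ((N + 1 : ℕ):ℝ) • w = x + (N:ℝ) • w + w := by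
        push_cast; module
      simp only [this, hD]; ring
  have e : (fun x => ((n:ℝ) + 1) * (h (x + w) - h x)) = fun x => (h (x + v) - h x) -
      ∑ k ∈ Finset.range (n + 1), (D (x + (k:ℝ) • w) - D x) := by
    funext x
    rw [Finset.sum_sub_distrib, ← tele, ← hvw]
    simp [hD]
    ring
  rw [e]
  have cR : ∀ k : ℕ, CC (fun x => D (x + (k:ℝ) • w) - D x) := fun k => (cD.shift _).sub cD
  refine (nrm_sub μ hp ((hh.shift v).sub hh) (CC.sum _ fun k _ => cR k)).trans ?_
  have a1 := nrm_sub μ hp (hh.shift v) hh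
  rw [nrm_shift μ hp hh] at a1
  have a2 : nrm μ p (fun x => ∑ k ∈ Finset.range (n + 1), (D (x + (k:ℝ) • w) - D x)) ≤
      nrm μ p (fun x => S x * ((n:ℝ) + 1) ^ 2) := by
    refine (nrm_sum μ hp _ fun k _ => cR k).trans ?_
    have : ∀ k ∈ Finset.range (n + 1), nrm μ p (fun x => D (x + (k:ℝ) • w) - D x) ≤
        ((n:ℝ) + 1) * nrm μ p S := by
      intro k hk
      refine (nrm_shift_k μ hp cD w k).trans ?_
      rw [hDS]
      refine mul_le_mul_of_nonneg_right ?_ (nrm_nonneg _ _ _)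
      have : (k:ℝ) ≤ ((n + 1 : ℕ) : ℝ) := by exact_mod_cast (Finset.mem_range.1 hk).le
      simpa using this
    refine (Finset.sum_le_sum this).trans (le_of_eq ?_)
    have e2 : (fun x => S x * ((n:ℝ) + 1) ^ 2) = fun x => ((n:ℝ) + 1) ^ 2 * S x := by
      funext x; ring
    rw [e2, nrm_smul, abs_of_pos (by positivity)]
    simp only [Finset.sum_const, Finset.card_range, nsmul_eq_mul]
    push_cast; ring
  linarith

theorem interp1 {p : ℝ} (hp : 1 < p) {h : E → ℝ} (hh : CS h) (v : E) :
    nrm μ p (dd v h) ≤ 2 * nrm μ p h + nrm μ p (dd v (dd v h)) := by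
  obtain ⟨K, M, hK, h0, hM, ht⟩ := quot1_props hh v
  obtain ⟨K', M', hK', h0', hM', ht'⟩ := quot_props hh v
  have hc := hh.cc
  have L1 := lim_nrm μ hp (fun n => ((hc.shift _).sub hc).cmul continuous_const) (hh.dd v).cc
    hK h0 hM ht
  have L2 := lim_nrm μ hp (fun n => by
    have := (((hc.shift (((n:ℝ) + 1)⁻¹ • v)).add (hc.shift' (((n:ℝ) + 1)⁻¹ • v))).sub
      (hc.cmul (g := fun _ => 2) continuous_const)).cmul (g := fun _ => ((n:ℝ) + 1) ^ 2) continuous_const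
    simpa only [mul_comm (((n:ℝ) + 1) ^ 2)] using this) ((hh.dd v).dd v).cc
    hK' h0' hM' ht'
  exact le_of_tendsto_of_tendsto' L1 (L2.const_add _) fun n => interp_disc μ hp hc v n

theorem interp {p : ℝ} (hp : 1 < p) {h : E → ℝ} (hh : CS h) (v : E) {t : ℝ} (ht : 0 < t) :
    nrm μ p (dd v h) ≤ 2 / t * nrm μ p h + t * nrm μ p (dd v (dd v h)) := by
  have := interp1 μ hp hh (t • v)
  rw [dd_smul_dir t v h, dd_cmul (smooth_diff (hh.dd v).1), dd_smul_dir, nrm_smul, nrm_smul, nrm_smul,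
    abs_of_pos ht] at this
  have e : 2 / t * nrm μ p h + t * nrm μ p (dd v (dd v h)) = (2 * nrm μ p h + t * (t * nrm μ p (dd v (dd v h)))) / t := by
    field_simp
  rw [e, le_div_iff₀ ht]
  linarith

end interp

section weight
variable {E : Type*} [NormedAddCommGroup E] [InnerProductSpace ℝ E]

/-- the smooth weight -/
noncomputable def rho (a : ℝ) (x : E) : ℝ := (1 + ‖x‖ ^ 2) ^ a

theorem rho_smooth (a : ℝ) : ContDiff ℝ (⊤ : ℕ∞) (rho (E := E) a) := by
  unfold rho
  refine ContDiff.rpow_const_of_ne (contDiff_const.add (contDiff_norm_sq ℝ)) fun x => ?_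
  positivity

theorem rho_pos (a : ℝ) (x : E) : 0 < rho a x := by unfold rho; positivity

theorem rho_dd (a : ℝ) (v : E) : dd v (rho a) = fun x => a * (rho (a - 1) x * (2 * inner ℝ x v)) := by
  funext x
  unfold dd rho
  have h1 : HasFDerivAt (fun x : E => 1 + ‖x‖ ^ 2) (2 • (innerSL ℝ x)) x :=
    (hasStrictFDerivAt_norm_sq x).hasFDerivAt.const_add 1
  have h2 := h1.rpow_const (p := a) (Or.inl (by positivity))
  rw [h2.fderiv]
  simp
  ring

theorem rho_step (a : ℝ) (x : E) : rho (a - 1) x * (1 + ‖x‖ ^ 2) = rho a x := by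
  unfold rho
  rw [Real.rpow_sub (by positivity), Real.rpow_one]
  field_simp

theorem inner_bd {v : E} (hv : ‖v‖ ≤ 1) (x : E) : |2 * inner ℝ x v| ≤ 1 + ‖x‖ ^ 2 := by
  have h1 := abs_real_inner_le_norm x v
  rw [abs_mul, abs_two]
  have : ‖x‖ * ‖v‖ ≤ ‖x‖ := mul_le_of_le_one_right (norm_nonneg _) hv
  nlinarith [sq_nonneg (‖x‖ - 1)]

theorem rho_dd_bd (a : ℝ) {v : E} (hv : ‖v‖ ≤ 1) (x : E) : |dd v (rho a) x| ≤ |a| * rho a x := by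
  rw [rho_dd]
  simp only
  rw [abs_mul, abs_mul, abs_of_pos (rho_pos _ x), ← rho_step a x]
  have := inner_bd hv x
  have := rho_pos (a - 1) x
  gcongr

theorem rho_dd2_bd (a : ℝ) {v w : E} (hv : ‖v‖ ≤ 1) (hw : ‖w‖ ≤ 1) (x : E) :
    |dd w (dd v (rho a)) x| ≤ |a| * (|a - 1| + 2) * rho a x := by
  have hd : Differentiable ℝ (fun x : E => 2 * inner ℝ x v) :=
    (differentiable_id.inner ℝ (differentiable_const v)).const_mul 2
  have e : dd w (fun x : E => 2 * inner ℝ x v) x = 2 * inner ℝ w v := by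
    unfold dd
    have h1 : HasFDerivAt (fun x : E => 2 * inner ℝ x v) ((2:ℝ) • (innerSL ℝ v)) x := by
      have := ((innerSL ℝ v).hasFDerivAt (x := x)).const_mul (2:ℝ)
      simpa [real_inner_comm] using this
    rw [h1.fderiv]
    simp [real_inner_comm]
  rw [rho_dd, dd_cmul (f := fun x => rho (a - 1) x * (2 * inner ℝ x v)) ((smooth_diff (rho_smooth (a - 1))).mul hd), 
    dd_mul (smooth_diff (rho_smooth (a - 1))) hd]
  simp only
  rw [e, abs_mul, mul_assoc |a|]
  refine mul_le_mul_of_nonneg_left ?_ (abs_nonneg _)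
  refine (abs_add_le _ _).trans ?_
  rw [abs_mul (rho (a - 1) x), abs_mul (2 * inner ℝ x v), abs_of_pos (rho_pos _ x)]
  have h1 := rho_dd_bd (a - 1) hw x
  have h2 := inner_bd hv x
  have h3 : |2 * inner ℝ w v| ≤ 2 := by
    have := abs_real_inner_le_norm w v
    rw [abs_mul, abs_two]
    have : ‖w‖ * ‖v‖ ≤ 1 := mul_le_one₀ hw (norm_nonneg _) hv
    linarith
  have h4 := rho_step a x
  have h5 := rho_pos (a - 1) x
  have h6 : rho (a - 1) x ≤ rho a x := by nlinarith [sq_nonneg ‖x‖]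
  have h7 : |2 * inner ℝ x v| * |dd w (rho (a - 1)) x| ≤ (1 + ‖x‖ ^ 2) * (|a - 1| * rho (a - 1) x) := by
    gcongr
  have h8 : rho (a - 1) x * |2 * inner ℝ w v| ≤ rho a x * 2 := by
    have := rho_pos a x
    gcongr
  calc _ ≤ rho a x * 2 + (1 + ‖x‖ ^ 2) * (|a - 1| * rho (a - 1) x) := add_le_add h8 h7
    _ = rho (a - 1) x * (1 + ‖x‖ ^ 2) * 2 + (1 + ‖x‖ ^ 2) * (|a - 1| * rho (a - 1) x) := by rw [h4]
    _ = (|a - 1| + 2) * (rho (a - 1) x * (1 + ‖x‖ ^ 2)) := by ring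
    _ = _ := by rw [h4]
end weight

theorem CS.mul {E : Type*} [NormedAddCommGroup E] [NormedSpace ℝ E] {g ρ : E → ℝ} (hg : CS g)
    (hρ : ContDiff ℝ (⊤ : ℕ∞) ρ) : CS (fun x => ρ x * g x) :=
  ⟨hρ.mul hg.1, hg.2.mul_left⟩

theorem weighted_base (d : ℕ) (hd : 1 ≤ d) {p : ℝ} (hp : 1 < p) (a : ℝ) :
    ∃ C : ℝ, 0 < C ∧ ∀ g : EuclideanSpace ℝ (Fin d) → ℝ, CS g →
    (∀ i j, nrm volume p (fun x => rho a x * 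
      dd (EuclideanSpace.single i 1) (dd (EuclideanSpace.single j 1) g) x) ≤ 
      C * (nrm volume p (fun x => rho a x * ∑ k : Fin d, 
        dd (EuclideanSpace.single k 1) (dd (EuclideanSpace.single k 1) g) x)
        + nrm volume p (fun x => rho a x * g x))) ∧
    (∀ i, nrm volume p (fun x => rho a x * dd (EuclideanSpace.single i 1) g x) ≤ 
      C * (nrm volume p (fun x => rho a x * ∑ k : Fin d, 
        dd (EuclideanSpace.single k 1) (dd (EuclideanSpace.single k 1) g) x)
        + nrm volume p (fun x => rho a x * g x))) := by
  obtain ⟨Z, hZ, H⟩ := cz_dir d hd hp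
  let e : Fin d → EuclideanSpace ℝ (Fin d) := fun i => EuclideanSpace.single i 1
  have he : ∀ i, ‖e i‖ ≤ 1 := fun i => by simp [e]
  have hd0 : (0:ℝ) < d := by exact_mod_cast hd
  let ρ : EuclideanSpace ℝ (Fin d) → ℝ := rho a
  have hρs : ContDiff ℝ (⊤ : ℕ∞) ρ := rho_smooth a
  have hρd := smooth_diff hρs
  have hρ0 : ∀ x, 0 < ρ x := rho_pos a
  obtain ⟨R, hR, R1, R2⟩ : ∃ R : ℝ, 0 < R ∧ (∀ i x, |dd (e i) ρ x| ≤ R * |ρ x|) ∧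
      (∀ i j x, |dd (e i) (dd (e j) ρ) x| ≤ R * |ρ x|) := by
    refine ⟨|a| + |a| * (|a - 1| + 2) + 1, by positivity, fun i x => ?_, fun i j x => ?_⟩
    · refine (rho_dd_bd a (he i) x).trans ?_
      rw [abs_of_pos (hρ0 x)]
      refine mul_le_mul_of_nonneg_right ?_ (hρ0 x).le
      have : 0 ≤ |a| * (|a - 1| + 2) := by positivity
      linarith
    · refine (rho_dd2_bd a (he j) (he i) x).trans ?_
      rw [abs_of_pos (hρ0 x)]
      refine mul_le_mul_of_nonneg_right ?_ (hρ0 x).le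
      have : 0 ≤ |a| := by positivity
      linarith
  -- choice of constants
  let t : ℝ := (4 * d * Z * R)⁻¹
  have ht : 0 < t := by positivity
  have htt : t * d * Z * (2 * R) = 1 / 2 := by simp only [t]; field_simp; norm_num
  let K1 : ℝ := 2 * (d * (2 / t + R) + t * d * Z * (1 + d * R))
  have hK1 : 0 < K1 := by positivity
  let K2 : ℝ := Z * (1 + 2 * R * K1 + d * R) + R * (2 * K1 + 1)
  have hK2 : 0 < K2 := by positivity
  refine ⟨K1 + K2, by positivity, fun g hg => ?_⟩
  let N : (EuclideanSpace ℝ (Fin d) → ℝ) → ℝ := nrm volume p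
  have hgd := smooth_diff hg.1
  have hgdd : ∀ v, Differentiable ℝ (dd v g) := fun v => smooth_diff (hg.dd v).1
  have hρdd : ∀ v, Differentiable ℝ (dd v ρ) := fun v => smooth_diff (smooth_dd hρs v)
  let h : EuclideanSpace ℝ (Fin d) → ℝ := fun x => ρ x * g x
  have hh : CS h := hg.mul hρs
  let L : EuclideanSpace ℝ (Fin d) → ℝ := fun x => ρ x * ∑ k, dd (e k) (dd (e k) g) x
  have dL : CC (fun x => ∑ k, dd (e k) (dd (e k) g) x) := CC.sum _ fun k _ => ((hg.dd _).dd _).cc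
  have cL : CC L := dL.cmul hρs.continuous
  have dh : ∀ i, dd (e i) h = fun x => ρ x * dd (e i) g x + g x * dd (e i) ρ x := fun i =>
    dd_mul hρd hgd (e i)
  have ddh : ∀ i j x, dd (e i) (dd (e j) h) x = ρ x * dd (e i) (dd (e j) g) x + 
      (dd (e i) ρ x * dd (e j) g x + dd (e j) ρ x * dd (e i) g x + 
        dd (e i) (dd (e j) ρ) x * g x) := by
    intro i j x
    rw [dh, dd_add (f := fun x => ρ x * dd (e j) g x) (g := fun x => g x * dd (e j) ρ x)
      (hρd.mul (hgdd _)) (hgd.mul (hρdd _)), dd_mul hρd (hgdd _), dd_mul hgd (hρdd _)]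
    ring
  -- norms of error terms
  have cw : ∀ u : EuclideanSpace ℝ (Fin d) → ℝ, CC u → CC (fun x => ρ x * u x) := fun u hu => 
    hu.cmul hρs.continuous
  have m1 : ∀ i (u : EuclideanSpace ℝ (Fin d) → ℝ), CC u →
      N (fun x => dd (e i) ρ x * u x) ≤ R * N (fun x => ρ x * u x) := fun i u hu => by
    refine nrm_le volume hR.le (cw u hu) fun x => ?_
    rw [abs_mul, abs_mul, ← mul_assoc]
    exact mul_le_mul_of_nonneg_right (R1 i x) (abs_nonneg _)
  have m2 : ∀ i j (u : EuclideanSpace ℝ (Fin d) → ℝ), CC u →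
      N (fun x => dd (e i) (dd (e j) ρ) x * u x) ≤ R * N (fun x => ρ x * u x) := fun i j u hu => by
    refine nrm_le volume hR.le (cw u hu) fun x => ?_
    rw [abs_mul, abs_mul, ← mul_assoc]
    exact mul_le_mul_of_nonneg_right (R2 i j x) (abs_nonneg _)
  let n1 : Fin d → ℝ := fun i => N (fun x => ρ x * dd (e i) g x)
  let N0 : ℝ := N h
  let A : ℝ := N L
  let N1 : ℝ := ∑ i, n1 i
  have hn1 : ∀ i, 0 ≤ n1 i := fun i => nrm_nonneg _ _ _
  have hn1' : ∀ i, n1 i ≤ N1 := fun i => Finset.single_le_sum (fun j _ => hn1 j) (Finset.mem_univ i)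
  have hN0 : 0 ≤ N0 := nrm_nonneg _ _ _
  have hA : 0 ≤ A := nrm_nonneg _ _ _
  let err : Fin d → Fin d → EuclideanSpace ℝ (Fin d) → ℝ := fun i j x =>
    dd (e i) ρ x * dd (e j) g x + dd (e j) ρ x * dd (e i) g x + dd (e i) (dd (e j) ρ) x * g x
  have q1 : ∀ i j, CC (fun x => dd (e i) ρ x * dd (e j) g x) := fun i j =>
    (hg.dd _).cc.cmul (hρdd _).continuous
  have q2 : ∀ i j, CC (fun x => dd (e i) (dd (e j) ρ) x * g x) := fun i j =>
    hg.cc.cmul (smooth_dd (smooth_dd hρs _) _).continuous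
  have cerr : ∀ i j, CC (err i j) := fun i j => ((q1 i j).add (q1 j i)).add (q2 i j)
  have nerr : ∀ i j, N (err i j) ≤ R * (n1 i + n1 j + N0) := by
    intro i j
    have a1 := nrm_add volume hp ((q1 i j).add (q1 j i)) (q2 i j)
    have a2 := nrm_add volume hp (q1 i j) (q1 j i)
    have b1 := m1 i _ (hg.dd (e j)).cc
    have b2 := m1 j _ (hg.dd (e i)).cc
    have b3 := m2 i j _ hg.cc
    change N (err i j) ≤ N _ + N _ at a1
    change N _ ≤ N _ + N _ at a2
    change _ ≤ R * n1 j at b1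
    change _ ≤ R * n1 i at b2
    change _ ≤ R * N0 at b3
    linarith
  have nlap : N (fun x => ∑ k, dd (e k) (dd (e k) h) x) ≤ A + R * (2 * N1 + d * N0) := by
    have : (fun x => ∑ k, dd (e k) (dd (e k) h) x) = fun x => L x + ∑ k, err k k x := by
      funext x
      simp only [ddh, Finset.sum_add_distrib, L, err, Finset.mul_sum]
    rw [this]
    refine (nrm_add volume hp cL (CC.sum _ fun k _ => cerr k k)).trans ?_
    refine add_le_add le_rfl ((nrm_sum volume hp _ fun k _ => cerr k k).trans ?_)
    refine (Finset.sum_le_sum fun k _ => nerr k k).trans (le_of_eq ?_)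
    simp only [← Finset.mul_sum, Finset.sum_add_distrib, Finset.sum_const, Finset.card_univ, 
      Fintype.card_fin, nsmul_eq_mul, N1]
    ring
  have n2 : ∀ i j, N (dd (e i) (dd (e j) h)) ≤ Z * (A + R * (2 * N1 + d * N0)) := fun i j =>
    (H i j h hh).trans (mul_le_mul_of_nonneg_left nlap hZ.le)
  have f1 : ∀ i, n1 i ≤ (2 / t + R) * N0 + t * (Z * (A + R * (2 * N1 + d * N0))) := by
    intro i
    have e1 : (fun x => ρ x * dd (e i) g x) = fun x => dd (e i) h x - dd (e i) ρ x * g x := by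
      funext x; simp only [dh]; ring
    have c2 : CC (fun x => dd (e i) ρ x * g x) := hg.cc.cmul (hρdd _).continuous
    have b1 := nrm_sub volume hp (hh.dd (e i)).cc c2
    rw [← e1] at b1
    have b2 := m1 i g hg.cc
    have b3 := interp volume hp hh (e i) ht
    have b4 := mul_le_mul_of_nonneg_left (n2 i i) ht.le
    change n1 i ≤ N _ + N _ at b1
    change _ ≤ R * N0 at b2
    change N _ ≤ 2 / t * N0 + t * N _ at b3
    linarith
  have F1 : N1 ≤ K1 * (A + N0) := by
    have : N1 ≤ d * ((2 / t + R) * N0 + t * (Z * (A + R * (2 * N1 + d * N0)))) := by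
      refine (Finset.sum_le_sum fun i _ => f1 i).trans (le_of_eq ?_)
      simp
      ring
    have e3 : d * ((2 / t + R) * N0 + t * (Z * (A + R * (2 * N1 + d * N0)))) = 
      d * (2 / t + R) * N0 + t * d * Z * (A + d * R * N0) + (t * d * Z * (2 * R)) * N1 := by ring
    rw [e3, htt] at this
    have e4 : N1 ≤ 2 * (d * (2 / t + R) * N0 + t * d * Z * (A + d * R * N0)) := by linarith
    refine e4.trans ?_
    simp only [K1]
    have x1 : 0 ≤ d * (2 / t + R) * A := by positivity
    have x2 : 0 ≤ t * d * Z * N0 := by positivity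
    have x3 : 0 ≤ t * d * Z * (d * R) * A := by positivity
    linarith
  refine ⟨fun i j => ?_, fun i => ?_⟩
  · change N (fun x => ρ x * dd (e i) (dd (e j) g) x) ≤ (K1 + K2) * (A + N0)
    have e1 : (fun x => ρ x * dd (e i) (dd (e j) g) x) = fun x => dd (e i) (dd (e j) h) x - err i j x := by
      funext x
      rw [ddh]; simp only [err]; ring
    have b1 := nrm_sub volume hp ((hh.dd (e j)).dd (e i)).cc (cerr i j)
    rw [← e1] at b1
    have b2 := nerr i j
    have b3 := n2 i j
    have b4 : R * (n1 i + n1 j + N0) ≤ R * (2 * (K1 * (A + N0)) + (A + N0)) := by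
      refine mul_le_mul_of_nonneg_left ?_ hR.le
      have := hn1' i; have := hn1' j; linarith
    have b5 : Z * (A + R * (2 * N1 + d * N0)) ≤ Z * ((A + N0) + R * (2 * (K1 * (A + N0)) + d * (A + N0))) := by
      gcongr <;> linarith
    change N _ ≤ N _ + N _ at b1
    have b6 : N (fun x => ρ x * dd (e i) (dd (e j) g) x) ≤ K2 * (A + N0) := by
      simp only [K2]
      linarith
    have : 0 ≤ K1 * (A + N0) := by positivity
    linarith
  · change n1 i ≤ (K1 + K2) * (A + N0)
    have := hn1' i
    have : 0 ≤ K2 * (A + N0) := by positivity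
    linarith

theorem jb_rpow {d : ℕ} (δ : ℝ) (x : EuclideanSpace ℝ (Fin d)) : jb x ^ δ = rho (δ / 2) x := by
  unfold jb rho
  rw [Real.sqrt_eq_rpow, ← Real.rpow_mul (by positivity)]
  congr 1; ring

theorem wLp_eq {d : ℕ} (p δ : ℝ) (f : EuclideanSpace ℝ (Fin d) → ℝ) :
    wLp p δ f = nrm volume p (fun x => rho (δ / 2) x * f x) := by
  unfold wLp nrm
  simp only [jb_rpow, smul_eq_mul]

theorem pd_eq {d : ℕ} (i : Fin d) (f : EuclideanSpace ℝ (Fin d) → ℝ) :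
    pderiv' i f = dd (EuclideanSpace.single i 1) f := rfl

/-- iterated derivative along a list -/
noncomputable def md {d : ℕ} (l : List (Fin d)) (α : Fin d → ℕ) (f : EuclideanSpace ℝ (Fin d) → ℝ) :
    EuclideanSpace ℝ (Fin d) → ℝ := l.foldr (fun i g => (pderiv' i)^[α i] g) f

theorem CS.pd {d : ℕ} {f : EuclideanSpace ℝ (Fin d) → ℝ} (hf : CS f) (i : Fin d) :
    CS (pderiv' i f) := hf.dd _

theorem CS.pdi {d : ℕ} {f : EuclideanSpace ℝ (Fin d) → ℝ} (hf : CS f) (i : Fin d) (n : ℕ) :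
    CS ((pderiv' i)^[n] f) := by
  induction n with
  | zero => exact hf
  | succ n ih => rw [Function.iterate_succ_apply']; exact ih.pd i

theorem CS.md {d : ℕ} {f : EuclideanSpace ℝ (Fin d) → ℝ} (hf : CS f) (l : List (Fin d))
    (α : Fin d → ℕ) : CS (md l α f) := by
  induction l with
  | nil => exact hf
  | cons i l ih => exact ih.pdi i (α i)

theorem pd_comm {d : ℕ} {f : EuclideanSpace ℝ (Fin d) → ℝ} (hf : CS f) (i j : Fin d) :
    pderiv' i (pderiv' j f) = pderiv' j (pderiv' i f) := dd_comm hf.1 _ _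

theorem pd_iter {d : ℕ} {f : EuclideanSpace ℝ (Fin d) → ℝ} (hf : CS f) (i j : Fin d) (n : ℕ) :
    pderiv' j ((pderiv' i)^[n] f) = (pderiv' i)^[n] (pderiv' j f) := by
  induction n with
  | zero => rfl
  | succ n ih =>
    rw [Function.iterate_succ_apply', Function.iterate_succ_apply', pd_comm (hf.pdi i n), ih]

theorem pd_md {d : ℕ} {f : EuclideanSpace ℝ (Fin d) → ℝ} (hf : CS f) (l : List (Fin d))
    (α : Fin d → ℕ) (j : Fin d) : pderiv' j (md l α f) = md l α (pderiv' j f) := by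
  induction l with
  | nil => rfl
  | cons i l ih =>
    change pderiv' j ((pderiv' i)^[α i] (md l α f)) = (pderiv' i)^[α i] (md l α (pderiv' j f))
    rw [pd_iter (hf.md l α), ih]

theorem md_congr {d : ℕ} (f : EuclideanSpace ℝ (Fin d) → ℝ) (l : List (Fin d))
    {α β : Fin d → ℕ} (h : ∀ i ∈ l, α i = β i) : md l α f = md l β f := by
  induction l with
  | nil => rfl
  | cons i l ih =>
    change (pderiv' i)^[α i] (md l α f) = (pderiv' i)^[β i] (md l β f)
    rw [ih fun k hk => h k (by simp [hk]), h i (by simp)]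

theorem md_succ {d : ℕ} {f : EuclideanSpace ℝ (Fin d) → ℝ} (hf : CS f) (l : List (Fin d))
    (hl : l.Nodup) {α β : Fin d → ℕ} (j : Fin d) (hj : j ∈ l) (h1 : α j = β j + 1)
    (h2 : ∀ i, i ≠ j → α i = β i) : md l α f = pderiv' j (md l β f) := by
  induction l with
  | nil => simp at hj
  | cons i l ih =>
    rw [List.nodup_cons] at hl
    change (pderiv' i)^[α i] (md l α f) = pderiv' j ((pderiv' i)^[β i] (md l β f))
    by_cases hij : i = j
    · subst hij
      rw [h1, Function.iterate_succ_apply', md_congr f l fun k hk => h2 k (by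
        rintro rfl; exact hl.1 hk)]
    · rw [h2 i hij, ih hl.2 (by
        rcases List.mem_cons.1 hj with h | h
        · exact absurd h.symm hij
        · exact h), pd_iter (hf.md l β)]

theorem CS.lap {d : ℕ} {f : EuclideanSpace ℝ (Fin d) → ℝ} (hf : CS f) : CS (lap f) := by
  refine ⟨?_, ?_⟩
  · unfold _root_.lap
    exact ContDiff.sum fun i _ => ((hf.pd i).pd i).1
  · exact (CC.sum _ fun i _ => ((hf.pd i).pd i).cc).2

theorem pd_lap {d : ℕ} {f : EuclideanSpace ℝ (Fin d) → ℝ} (hf : CS f) (j : Fin d) :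
    pderiv' j (lap f) = lap (pderiv' j f) := by
  unfold lap
  rw [pd_eq, dd_sum (f := fun i x => pderiv' i (pderiv' i f) x) Finset.univ
    (fun i _ => smooth_diff ((hf.pd i).pd i).1)]
  funext x
  refine Finset.sum_congr rfl fun i _ => ?_
  change pderiv' j (pderiv' i (pderiv' i f)) x = _
  rw [pd_comm (hf.pd i), pd_comm hf j i]

theorem pdi_lap {d : ℕ} {f : EuclideanSpace ℝ (Fin d) → ℝ} (hf : CS f) (j : Fin d) (n : ℕ) :
    (pderiv' j)^[n] (lap f) = lap ((pderiv' j)^[n] f) := by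
  induction n with
  | zero => rfl
  | succ n ih =>
    rw [Function.iterate_succ_apply', Function.iterate_succ_apply', ih, pd_lap (hf.pdi j n)]

theorem md_lap {d : ℕ} {f : EuclideanSpace ℝ (Fin d) → ℝ} (hf : CS f) (l : List (Fin d))
    (α : Fin d → ℕ) : md l α (lap f) = lap (md l α f) := by
  induction l with
  | nil => rfl
  | cons i l ih =>
    change (pderiv' i)^[α i] (md l α (lap f)) = lap ((pderiv' i)^[α i] (md l α f))
    rw [ih, pdi_lap (hf.md l α)]

theorem wLp_nonneg {d : ℕ} (p δ : ℝ) (f : EuclideanSpace ℝ (Fin d) → ℝ) : 0 ≤ wLp p δ f :=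
  ENNReal.toReal_nonneg

theorem wLp_le_Hnorm {d m : ℕ} (p δ : ℝ) (f : EuclideanSpace ℝ (Fin d) → ℝ) (β : Fin d → ℕ)
    (hβ : ∑ i, β i ≤ m) : wLp p δ (mderiv β f) ≤ Hnorm d m p δ f := by
  unfold Hnorm
  have hb : ∀ i, β i < m + 1 := fun i => by
    have := Finset.single_le_sum (f := β) (fun j _ => Nat.zero_le _) (Finset.mem_univ i)
    omega
  have := Finset.single_le_sum (s := Finset.univ.filter (fun α : Fin d → Fin (m + 1) => ∑ i, (α i : ℕ) ≤ m))
    (f := fun α => wLp p δ (mderiv (fun i => (α i : ℕ)) f)) (fun α _ => wLp_nonneg _ _ _)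
    (a := fun i => ⟨β i, hb i⟩) (by simpa using hβ)
  exact this

theorem split_one {d : ℕ} (a : Fin d → ℕ) (h : 1 ≤ ∑ i, a i) :
    ∃ (j : Fin d) (b : Fin d → ℕ), a j = b j + 1 ∧ (∀ i, i ≠ j → a i = b i) ∧
      ∑ i, a i = ∑ i, b i + 1 := by
  obtain ⟨j, hj⟩ : ∃ j, a j ≠ 0 := by
    by_contra hc
    push Not at hc
    simp [hc] at h
  refine ⟨j, Function.update a j (a j - 1), ?_, ?_, ?_⟩
  · simp; omega
  · intro i hi; simp [hi]
  · rw [Finset.sum_update_of_mem (Finset.mem_univ j), 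
      ← Finset.add_sum_erase Finset.univ a (Finset.mem_univ j), Finset.sdiff_singleton_eq_erase]
    omega

/-- Higher-order elliptic a priori estimate:
`‖g‖_{H^{m+2,p}_δ} ≤ C (‖Δg‖_{H^{m,p}_δ} + ‖g‖_{H^{m,p}_δ})` for `g ∈ C_c^∞(ℝ^d)`. -/
theorem stmt9 (d : ℕ) (hd : 1 ≤ d) (p : ℝ) (hp : 1 < p) (m : ℕ) (δ : ℝ) :
    ∃ C : ℝ, 0 < C ∧ ∀ g : EuclideanSpace ℝ (Fin d) → ℝ,
      ContDiff ℝ (⊤ : ℕ∞) g → HasCompactSupport g →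
        Hnorm d (m + 2) p δ g ≤ C * (Hnorm d m p δ (lap g) + Hnorm d m p δ g) := by
  obtain ⟨C, hC, H⟩ := weighted_base d hd hp (δ / 2)
  refine ⟨((Finset.univ.filter (fun α : Fin d → Fin (m + 2 + 1) => ∑ i, (α i : ℕ) ≤ m + 2)).card + 1)
    * (C + 1), by positivity, fun g hg1 hg2 => ?_⟩
  have hg : CS g := ⟨hg1, hg2⟩
  set R := Hnorm d m p δ (lap g) + Hnorm d m p δ g with hR
  have hH0 : ∀ f : EuclideanSpace ℝ (Fin d) → ℝ, 0 ≤ Hnorm d m p δ f := fun f =>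
    Finset.sum_nonneg fun α _ => wLp_nonneg _ _ _
  have hR0 : 0 ≤ R := add_nonneg (hH0 _) (hH0 _)
  have base : ∀ β : Fin d → ℕ, ∑ i, β i ≤ m →
      (∀ i j, wLp p δ (pderiv' i (pderiv' j (mderiv β g))) ≤ C * R) ∧
      (∀ i, wLp p δ (pderiv' i (mderiv β g)) ≤ C * R) ∧ wLp p δ (mderiv β g) ≤ R := by
    intro β hβ
    have cs : CS (mderiv β g) := hg.md _ β
    have e1 : lap (mderiv β g) = mderiv β (lap g) := (md_lap hg _ β).symm
    have b1 := wLp_le_Hnorm p δ (lap g) β hβ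
    have b2 := wLp_le_Hnorm p δ g β hβ
    rw [← e1] at b1
    obtain ⟨h1, h2⟩ := H _ cs
    have e2 : nrm volume p (fun x => rho (δ / 2) x * ∑ k : Fin d,
        dd (EuclideanSpace.single k 1) (dd (EuclideanSpace.single k 1) (mderiv β g)) x)
        = wLp p δ (lap (mderiv β g)) := (wLp_eq p δ _).symm
    simp only [e2, ← wLp_eq] at h1 h2
    have b3 : C * (wLp p δ (lap (mderiv β g)) + wLp p δ (mderiv β g)) ≤ C * R :=
      mul_le_mul_of_nonneg_left (add_le_add b1 b2) hC.le
    refine ⟨fun i j => (h1 i j).trans b3, fun i => (h2 i).trans b3, ?_⟩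
    have := hH0 (lap g)
    linarith
  have all : ∀ a : Fin d → ℕ, ∑ i, a i ≤ m + 2 → wLp p δ (mderiv a g) ≤ (C + 1) * R := by
    intro a ha
    have hCR : 0 ≤ C * R := mul_nonneg hC.le hR0
    rcases Nat.lt_or_ge m (∑ i, a i) with h | h
    · obtain ⟨i, b, hb1, hb2, hb3⟩ := split_one a (by omega)
      have e1 : mderiv a g = pderiv' i (mderiv b g) :=
        md_succ hg _ (List.nodup_finRange d) i (List.mem_finRange i) hb1 hb2
      rw [e1]
      rcases Nat.lt_or_ge m (∑ i, b i) with h' | h'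
      · obtain ⟨j, c, hc1, hc2, hc3⟩ := split_one b (by omega)
        have e2 : mderiv b g = pderiv' j (mderiv c g) :=
          md_succ hg _ (List.nodup_finRange d) j (List.mem_finRange j) hc1 hc2
        rw [e2]
        have := (base c (by omega)).1 i j
        linarith
      · have := (base b h').2.1 i
        linarith
    · have := (base a h).2.2
      linarith
  have hsum : Hnorm d (m + 2) p δ g ≤
      ∑ α ∈ Finset.univ.filter (fun α : Fin d → Fin (m + 2 + 1) => ∑ i, (α i : ℕ) ≤ m + 2),
        (C + 1) * R :=
    Finset.sum_le_sum fun α hα => all _ (Finset.mem_filter.1 hα).2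
  rw [Finset.sum_const, nsmul_eq_mul] at hsum
  have : 0 ≤ (C + 1) * R := by positivity
  linarith
end

section
/- Let X be a real Banach space and let S : [0, ∞) → (X →L X) be a family of bounded linear operators with S(0) = id, S(t + s) = S(t) ∘ S(s) for all t, s ≥ 0, such that for every v ∈ X the map t ↦ S(t)v is continuous on [0, ∞), and such that there exist constants C > 0, ω > 0 with ‖S(t)v‖ ≤ C e^{ωt} ‖v‖ for all v ∈ X and t ≥ 0. Let T > 0 and let F : [0, T] × X → X be continuous and satisfy ‖F(t, u) − F(t, v)‖ ≤ L ‖u − v‖ for all t ∈ [0, T] and u, v ∈ X, for some constant L > 0. Then for every u₀ ∈ X there exists a unique continuous u : [0, T] → X satisfying u(t) = S(t)u₀ + ∫₀^t S(t − s) F(s, u(s)) ds for all t ∈ [0, T]. -/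
open MeasureTheory intervalIntegral

theorem volterra_core {X : Type*} [NormedAddCommGroup X] [NormedSpace ℝ X] [CompleteSpace X]
    (T : ℝ) (hT : 0 ≤ T) (k : ℝ → ℝ → X → X)
    (hk : Continuous (fun p : ℝ × ℝ × X => k p.1 p.2.1 p.2.2))
    (g : ℝ → X) (hg : Continuous g) (K : ℝ) (hK : 0 ≤ K)
    (hlip : ∀ t ∈ Set.Icc (0 : ℝ) T, ∀ s ∈ Set.Icc (0 : ℝ) T, ∀ x y,
      ‖k t s x - k t s y‖ ≤ K * ‖x - y‖) :
    ∃ f : C(Set.Icc (0 : ℝ) T, X),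
      (∀ t : Set.Icc (0 : ℝ) T, f t = g t + ∫ s in (0 : ℝ)..t, k t s (f (Set.projIcc 0 T hT s))) ∧
      ∀ f' : C(Set.Icc (0 : ℝ) T, X),
        (∀ t : Set.Icc (0 : ℝ) T,
          f' t = g t + ∫ s in (0 : ℝ)..t, k t s (f' (Set.projIcc 0 T hT s))) → f' = f := by
  have hin : ∀ f : C(Set.Icc (0 : ℝ) T, X),
      Continuous (fun p : ℝ × ℝ => k p.1 p.2 (f (Set.projIcc 0 T hT p.2))) := by
    intro f
    have h1 : Continuous (fun p : ℝ × ℝ => f (Set.projIcc 0 T hT p.2)) :=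
      f.continuous.comp (continuous_projIcc.comp continuous_snd)
    exact hk.comp (continuous_fst.prodMk (continuous_snd.prodMk h1))
  have hcont : ∀ f : C(Set.Icc (0 : ℝ) T, X),
      Continuous (fun t : Set.Icc (0 : ℝ) T =>
        g t + ∫ s in (0 : ℝ)..t, k t s (f (Set.projIcc 0 T hT s))) := by
    intro f
    have h2 : Continuous (fun t : ℝ =>
        ∫ s in (0 : ℝ)..t, k t s (f (Set.projIcc 0 T hT s))) :=
      intervalIntegral.continuous_parametric_intervalIntegral_of_continuous
        (f := fun t s => k t s (f (Set.projIcc 0 T hT s))) (hin f) continuous_id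
    exact (hg.add h2).comp continuous_subtype_val
  let Φ : C(Set.Icc (0 : ℝ) T, X) → C(Set.Icc (0 : ℝ) T, X) := fun f => ⟨_, hcont f⟩
  have hΦ : ∀ f t, Φ f t = g t + ∫ s in (0 : ℝ)..t, k t s (f (Set.projIcc 0 T hT s)) :=
    fun f t => rfl
  have hiter : ∀ f h : C(Set.Icc (0 : ℝ) T, X), ∀ n : ℕ, ∀ t : Set.Icc (0 : ℝ) T,
      ‖(Φ^[n] f) t - (Φ^[n] h) t‖ ≤ (K * t) ^ n / n.factorial * dist f h := by
    intro f h n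
    induction n with
    | zero =>
      intro t
      simpa [dist_eq_norm] using ContinuousMap.dist_apply_le_dist (f := f) (g := h) t
    | succ n ih =>
      intro t
      rw [Function.iterate_succ_apply', Function.iterate_succ_apply', hΦ, hΦ,
        add_sub_add_left_eq_sub]
      have hi : ∀ f : C(Set.Icc (0 : ℝ) T, X), IntervalIntegrable
          (fun s => k t s (f (Set.projIcc 0 T hT s))) volume 0 t := fun f =>
        ((hin f).comp (Continuous.prodMk_right (t : ℝ))).intervalIntegrable _ _
      rw [← intervalIntegral.integral_sub (hi _) (hi _)]
      have hle : ‖∫ s in (0 : ℝ)..t, (k t s ((Φ^[n] f) (Set.projIcc 0 T hT s)) -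
          k t s ((Φ^[n] h) (Set.projIcc 0 T hT s)))‖ ≤
          ∫ s in (0 : ℝ)..t, K * ((K * s) ^ n / n.factorial * dist f h) := by
        apply intervalIntegral.norm_integral_le_of_norm_le t.2.1
        · refine Filter.Eventually.of_forall fun s hs => ?_
          have hs' : s ∈ Set.Icc (0 : ℝ) T := ⟨hs.1.le, hs.2.trans t.2.2⟩
          refine (hlip t t.2 s hs' _ _).trans ?_
          have := ih (Set.projIcc 0 T hT s)
          rw [Set.projIcc_of_mem hT hs'] at this ⊢
          exact mul_le_mul_of_nonneg_left this hK
        · apply Continuous.intervalIntegrable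
          fun_prop
      refine hle.trans (le_of_eq ?_)
      have e : (fun s : ℝ => K * ((K * s) ^ n / n.factorial * dist f h)) =
          fun s => (K ^ (n + 1) / n.factorial * dist f h) * s ^ n := by
        funext s
        rw [mul_pow]; ring
      rw [e, intervalIntegral.integral_const_mul, integral_pow, Nat.factorial_succ]
      push_cast
      have : (n.factorial : ℝ) ≠ 0 := by positivity
      have : (n : ℝ) + 1 ≠ 0 := by positivity
      field_simp
      simp only [ne_eq, Nat.succ_ne_zero, not_false_eq_true, zero_pow, sub_zero]
      ring
  obtain ⟨n, hn⟩ : ∃ n : ℕ, (K * T) ^ n / n.factorial < 1 / 2 :=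
    ((FloorSemiring.tendsto_pow_div_factorial_atTop (K * T)).eventually
      (gt_mem_nhds (by norm_num : (0 : ℝ) < 1 / 2))).exists
  have hctr : ContractingWith (1 / 2) (Φ^[n]) := by
    refine ⟨by rw [← NNReal.coe_lt_coe]; norm_num, LipschitzWith.of_dist_le_mul fun f h => ?_⟩
    rw [ContinuousMap.dist_le (by positivity)]
    intro t
    rw [dist_eq_norm]
    refine (hiter f h n t).trans (mul_le_mul_of_nonneg_right ?_ dist_nonneg)
    have : (K * t) ^ n / n.factorial ≤ (K * T) ^ n / n.factorial := by
      have h0 := t.2.1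
      have h1 := t.2.2
      gcongr
    refine this.trans (hn.le.trans ?_)
    simp
  have : Nonempty C(Set.Icc (0 : ℝ) T, X) := ⟨0⟩
  have hfix := hctr.isFixedPt_fixedPoint_iterate
  refine ⟨hctr.fixedPoint, fun t => ?_, fun f' hf' => ?_⟩
  · have h := congrArg (fun f : C(Set.Icc (0 : ℝ) T, X) => f t) hfix.eq
    exact h.symm
  · refine hctr.fixedPoint_unique ?_
    have : Function.IsFixedPt Φ f' := by
      ext t
      rw [hΦ, ← hf' t]
    exact this.iterate n

/-- Existence and uniqueness of a mild solution `u(t) = S(t)u₀ + ∫₀ᵗ S(t−s) F(s, u(s)) ds`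
on `[0, T]` for a quasibounded strongly continuous semigroup `S` and a globally Lipschitz
nonlinearity `F`. -/
theorem stmt15 (X : Type*) [NormedAddCommGroup X] [NormedSpace ℝ X] [CompleteSpace X]
    (S : ℝ → (X →L[ℝ] X))
    (hS0 : S 0 = ContinuousLinearMap.id ℝ X)
    (hSsemi : ∀ t : ℝ, 0 ≤ t → ∀ s : ℝ, 0 ≤ s → S (t + s) = (S t).comp (S s))
    (hScont : ∀ v : X, ContinuousOn (fun t => S t v) (Set.Ici 0))
    (C ω : ℝ) (hC : 0 < C) (hω : 0 < ω)
    (hSbound : ∀ v : X, ∀ t : ℝ, 0 ≤ t → ‖S t v‖ ≤ C * Real.exp (ω * t) * ‖v‖)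
    (T : ℝ) (hT : 0 < T) (F : ℝ → X → X)
    (hFcont : ContinuousOn (fun q : ℝ × X => F q.1 q.2) (Set.Icc 0 T ×ˢ Set.univ))
    (L : ℝ) (hL : 0 < L)
    (hFlip : ∀ t ∈ Set.Icc (0 : ℝ) T, ∀ u v : X, ‖F t u - F t v‖ ≤ L * ‖u - v‖)
    (u₀ : X) :
    ∃ u : ℝ → X,
      (ContinuousOn u (Set.Icc 0 T) ∧
        ∀ t ∈ Set.Icc (0 : ℝ) T,
          u t = S t u₀ + ∫ s in (0 : ℝ)..t, S (t - s) (F s (u s))) ∧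
      ∀ u' : ℝ → X, ContinuousOn u' (Set.Icc 0 T) →
        (∀ t ∈ Set.Icc (0 : ℝ) T,
          u' t = S t u₀ + ∫ s in (0 : ℝ)..t, S (t - s) (F s (u' s))) →
        ∀ t ∈ Set.Icc (0 : ℝ) T, u' t = u t := by
  have hSm : Continuous (fun p : ℝ × X => S (max p.1 0) p.2) := by
    have hv : ∀ v : X, Continuous (fun t : ℝ => S (max t 0) v) := fun v =>
      (hScont v).comp_continuous (continuous_id.max continuous_const) (fun t => Set.mem_Ici.2 (le_max_right _ _))
    rw [continuous_iff_continuousAt]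
    rintro ⟨t₀, x₀⟩
    rw [ContinuousAt, tendsto_iff_norm_sub_tendsto_zero]
    have hb : Continuous (fun p : ℝ × X => C * Real.exp (ω * max p.1 0) * ‖p.2 - x₀‖ +
        ‖S (max p.1 0) x₀ - S (max t₀ 0) x₀‖) := by
      have := (hv x₀).comp (continuous_fst (X := ℝ) (Y := X))
      refine Continuous.add ?_ (this.sub continuous_const).norm
      fun_prop
    refine squeeze_zero (fun _ => norm_nonneg _) (fun p => ?_)
      (g := fun p : ℝ × X => C * Real.exp (ω * max p.1 0) * ‖p.2 - x₀‖ +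
        ‖S (max p.1 0) x₀ - S (max t₀ 0) x₀‖) ?_
    · have e : S (max p.1 0) p.2 - S (max t₀ 0) x₀ =
          S (max p.1 0) (p.2 - x₀) + (S (max p.1 0) x₀ - S (max t₀ 0) x₀) := by
        rw [map_sub]; abel
      change ‖S (max p.1 0) p.2 - S (max t₀ 0) x₀‖ ≤ _
      rw [e]
      exact (norm_add_le _ _).trans (add_le_add_left (hSbound _ _ (le_max_right _ _)) _)
    · have := hb.tendsto (t₀, x₀)
      simpa using this
  have hFm : Continuous (fun p : ℝ × X => F (Set.projIcc 0 T hT.le p.1) p.2) := by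
    refine hFcont.comp_continuous (f := fun p : ℝ × X =>
      (((Set.projIcc 0 T hT.le p.1 : Set.Icc (0 : ℝ) T) : ℝ), p.2)) ?_ ?_
    · exact (continuous_subtype_val.comp (continuous_projIcc.comp continuous_fst)).prodMk
        continuous_snd
    · intro p
      exact ⟨(Set.projIcc 0 T hT.le p.1).2, Set.mem_univ _⟩
  obtain ⟨f, hf, huniq⟩ := volterra_core T hT.le
    (fun t s x => S (max (t - s) 0) (F (Set.projIcc 0 T hT.le s) x))
    (hSm.comp ((continuous_fst.sub (continuous_fst.comp continuous_snd)).prodMk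
      (hFm.comp continuous_snd)))
    (fun t => S (max t 0) u₀) (hSm.comp (continuous_id.prodMk continuous_const))
    (C * Real.exp (ω * T) * L) (by positivity)
    (by
      intro t ht s hs x y
      rw [← map_sub]
      refine (hSbound _ _ (le_max_right _ _)).trans ?_
      rw [mul_assoc _ L]
      have h1 : max (t - s) 0 ≤ T := max_le (by linarith [ht.2, hs.1]) hT.le
      have h2 := hFlip _ (Set.projIcc 0 T hT.le s).2 x y
      gcongr)
  have hcongr : ∀ v : ℝ → X, ∀ w : C(Set.Icc (0 : ℝ) T, X),
      (∀ s : Set.Icc (0 : ℝ) T, v s = w s) → ∀ t : Set.Icc (0 : ℝ) T,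
      (∫ s in (0 : ℝ)..t, S (max ((t : ℝ) - s) 0)
        (F (Set.projIcc 0 T hT.le s) (w (Set.projIcc 0 T hT.le s)))) =
      ∫ s in (0 : ℝ)..t, S (t - s) (F s (v s)) := by
    intro v w hvw t
    refine intervalIntegral.integral_congr fun s hs => ?_
    rw [Set.uIcc_of_le t.2.1] at hs
    have hs' : s ∈ Set.Icc (0 : ℝ) T := ⟨hs.1, hs.2.trans t.2.2⟩
    have h3 := hvw ⟨s, hs'⟩
    simp only [] at h3
    simp only [Set.projIcc_of_mem hT.le hs', max_eq_left (sub_nonneg.2 hs.2), h3]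
  refine ⟨fun t => f (Set.projIcc 0 T hT.le t), ⟨?_, ?_⟩, ?_⟩
  · exact (f.continuous.comp continuous_projIcc).continuousOn
  · intro t ht
    have h := hf ⟨t, ht⟩
    rw [hcongr (fun t => f (Set.projIcc 0 T hT.le t)) f (fun s => by simp) ⟨t, ht⟩] at h
    simp only [max_eq_left ht.1] at h
    simp only [Set.projIcc_of_mem hT.le ht]
    exact h
  · intro u' hu' heq t ht
    have h := huniq ⟨(Set.Icc (0 : ℝ) T).domRestrict u', hu'.domRestrict⟩ (fun t => by
      rw [hcongr u' ⟨(Set.Icc (0 : ℝ) T).domRestrict u', hu'.domRestrict⟩ (fun s => rfl) t,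
        max_eq_left t.2.1]
      exact heq t t.2)
    simp only [Set.projIcc_of_mem hT.le ht, ← h]
    rfl
end

section
/- Let d ≥ 1, 1 ≤ p < ∞, m ∈ ℤ_{≥0} with m > d/p, δ ∈ ℝ, and let k ∈ ℤ_{≥0} with k < m − d/p. There exists a constant C > 0 (depending on d, m, p, k, δ) such that for every f ∈ C_c^∞(ℝ^d) and every multi-index α with |α| ≤ k, sup_{x ∈ ℝ^d} ⟨x⟩^δ |∂^α f(x)| ≤ C · ‖f‖_{H^{m,p}_δ}. -/
open MeasureTheory

namespace S18

abbrev E (d : ℕ) := EuclideanSpace ℝ (Fin d)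

/-- directional derivative -/
noncomputable def Dz {d : ℕ} (z : E d) (h : E d → ℝ) : E d → ℝ := fun y => fderiv ℝ h y z

abbrev Sm {d : ℕ} (h : E d → ℝ) : Prop := ContDiff ℝ (⊤ : ℕ∞) h

lemma Dz_smooth {d : ℕ} (z : E d) {h : E d → ℝ} (hh : Sm h) : Sm (Dz z h) := by
  unfold Dz Sm
  have : ContDiff ℝ (⊤ : ℕ∞) (fderiv ℝ h) := hh.fderiv_right (by simp)
  exact this.clm_apply contDiff_const

lemma Dz_iter_smooth {d : ℕ} (z : E d) {h : E d → ℝ} (hh : Sm h) (j : ℕ) :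
    Sm ((Dz z)^[j] h) := by
  induction j with
  | zero => exact hh
  | succ j ih => rw [Function.iterate_succ_apply']; exact Dz_smooth z ih

lemma pderiv_eq {d : ℕ} (i : Fin d) : (pderiv' i : (E d → ℝ) → E d → ℝ) =
    Dz (EuclideanSpace.single i 1) := rfl

lemma Dz_comm {d : ℕ} (z w : E d) {h : E d → ℝ} (hh : Sm h) :
    Dz z (Dz w h) = Dz w (Dz z h) := by
  have h1 : ContDiff ℝ (⊤ : ℕ∞) (fderiv ℝ h) := hh.fderiv_right (by simp)
  have h2 : Differentiable ℝ (fderiv ℝ h) := h1.differentiable (by simp)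
  funext y
  have key : ∀ a b : E d, Dz a (Dz b h) y = fderiv ℝ (fderiv ℝ h) y a b := by
    intro a b
    unfold Dz
    rw [fderiv_clm_apply (h2 y) (differentiableAt_const b)]
    simp
  rw [key, key]
  have := (hh.contDiffAt (x := y)).isSymmSndFDerivAt (by
    simp only [minSmoothness_of_isRCLikeNormedField]
    exact WithTop.coe_le_coe.2 (le_top : (2 : ℕ∞) ≤ ⊤))
  exact this z w

lemma Dz_iter_comm {d : ℕ} (z w : E d) {h : E d → ℝ} (hh : Sm h) (j : ℕ) :
    Dz z ((Dz w)^[j] h) = (Dz w)^[j] (Dz z h) := by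
  induction j with
  | zero => rfl
  | succ j ih =>
    rw [Function.iterate_succ_apply', Function.iterate_succ_apply', Dz_comm _ _
      (Dz_iter_smooth w hh j), ih]

noncomputable def ml {d : ℕ} (L : List (Fin d)) (α : Fin d → ℕ) (f : E d → ℝ) : E d → ℝ :=
  L.foldr (fun i g => (pderiv' i)^[α i] g) f

lemma ml_smooth {d : ℕ} (L : List (Fin d)) (α : Fin d → ℕ) {f : E d → ℝ} (hf : Sm f) :
    Sm (ml L α f) := by
  induction L with
  | nil => exact hf
  | cons i L ih => exact Dz_iter_smooth _ ih (α i)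

lemma ml_comm {d : ℕ} (L : List (Fin d)) (α : Fin d → ℕ) {f : E d → ℝ} (hf : Sm f) (z : E d) :
    Dz z (ml L α f) = ml L α (Dz z f) := by
  induction L with
  | nil => rfl
  | cons i L ih =>
    change Dz z ((Dz _)^[α i] (ml L α f)) = (Dz _)^[α i] (ml L α (Dz z f))
    rw [Dz_iter_comm _ _ (ml_smooth L α hf), ih]

lemma ml_congr {d : ℕ} (L : List (Fin d)) (α β : Fin d → ℕ) (f : E d → ℝ)
    (h : ∀ i ∈ L, α i = β i) : ml L α f = ml L β f := by
  induction L with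
  | nil => rfl
  | cons i L ih =>
    change (pderiv' i)^[α i] (ml L α f) = (pderiv' i)^[β i] (ml L β f)
    rw [h i (by simp), ih (fun j hj => h j (by simp [hj]))]

lemma ml_succ {d : ℕ} (L : List (Fin d)) (hL : L.Nodup) (α : Fin d → ℕ) {f : E d → ℝ}
    (hf : Sm f) (i : Fin d) (hi : i ∈ L) :
    pderiv' i (ml L α f) = ml L (α + Pi.single i 1) f := by
  induction L with
  | nil => simp at hi
  | cons j L ih =>
    change pderiv' i ((pderiv' j)^[α j] (ml L α f)) =
      (pderiv' j)^[(α + Pi.single i 1 : Fin d → ℕ) j] (ml L (α + Pi.single i 1) f)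
    rw [List.nodup_cons] at hL
    by_cases hij : i = j
    · subst hij
      rw [← ml_congr L α (α + Pi.single i 1)]
      · simp only [Pi.add_apply, Pi.single_eq_same, Function.iterate_succ_apply']
      · intro k hk
        have : k ≠ i := fun h => hL.1 (h ▸ hk)
        simp [this]
    · have hi' : i ∈ L := by simpa [hij] using hi
      rw [← ih hL.2 hi', pderiv_eq, pderiv_eq, Dz_iter_comm _ _ (ml_smooth L α hf)]
      have : j ≠ i := fun h => hij h.symm
      simp [this]

lemma mderiv_smooth {d : ℕ} (α : Fin d → ℕ) {f : E d → ℝ} (hf : Sm f) : Sm (mderiv α f) :=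
  ml_smooth _ α hf

lemma mderiv_succ {d : ℕ} (α : Fin d → ℕ) {f : E d → ℝ} (hf : Sm f) (i : Fin d) :
    pderiv' i (mderiv α f) = mderiv (α + Pi.single i 1) f :=
  ml_succ _ (List.nodup_finRange d) α hf i (List.mem_finRange i)

lemma Dz_supp {d : ℕ} (z : E d) {h : E d → ℝ} (hh : HasCompactSupport h) :
    HasCompactSupport (Dz z h) := hh.fderiv_apply (𝕜 := ℝ) z

lemma mderiv_supp {d : ℕ} (α : Fin d → ℕ) {f : E d → ℝ} (hf : HasCompactSupport f) :
    HasCompactSupport (mderiv α f) := by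
  change HasCompactSupport (ml (List.finRange d) α f)
  induction List.finRange d with
  | nil => exact hf
  | cons i L ih =>
    change HasCompactSupport ((Dz _)^[α i] (ml L α f))
    induction α i with
    | zero => exact ih
    | succ j ihj => rw [Function.iterate_succ_apply']; exact Dz_supp _ ihj

lemma Dz_sum {d : ℕ} (z : E d) (c : Fin d → ℝ) (g : Fin d → E d → ℝ) (hg : ∀ i, Sm (g i)) :
    Dz z (fun y => ∑ i, c i * g i y) = fun y => ∑ i, c i * Dz z (g i) y := by
  funext y
  have h1 : ∀ i, DifferentiableAt ℝ (g i) y := fun i => (hg i).differentiable (by simp) y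
  unfold Dz
  rw [fderiv_fun_sum (fun i _ => (h1 i).const_mul (c i))]
  simp only [sum_apply]
  refine Finset.sum_congr rfl fun i _ => ?_
  rw [fderiv_const_mul (h1 i)]; simp

lemma Dz_iter_sum {d : ℕ} (z : E d) (c : Fin d → ℝ) (g : Fin d → E d → ℝ) (hg : ∀ i, Sm (g i))
    (j : ℕ) :
    (Dz z)^[j] (fun y => ∑ i, c i * g i y) = fun y => ∑ i, c i * (Dz z)^[j] (g i) y := by
  induction j with
  | zero => rfl
  | succ j ih =>
    rw [Function.iterate_succ_apply', ih, Dz_sum _ _ _ (fun i => Dz_iter_smooth z (hg i) j)]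
    simp only [Function.iterate_succ_apply']

lemma Dz_eq_sum {d : ℕ} (z : E d) (h : E d → ℝ) :
    Dz z h = fun y => ∑ i, z i * pderiv' i h y := by
  funext y
  unfold Dz pderiv'
  have hz : z = ∑ i, z i • EuclideanSpace.single i (1:ℝ) := by
    ext k
    simp [Finset.sum_apply, Pi.single_apply]
  conv_lhs => rw [hz]
  simp [map_sum]

/-- total function -/
noncomputable def Wf (d m : ℕ) (f : E d → ℝ) (y : E d) : ℝ :=
  ∑ α ∈ Finset.univ.filter (fun α : Fin d → Fin (m + 1) => ∑ i, (α i : ℕ) ≤ m),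
    |mderiv (fun i => (α i : ℕ)) f y|

lemma le_Wf {d m : ℕ} (f : E d → ℝ) (y : E d) (α : Fin d → ℕ) (h : ∑ i, α i ≤ m) :
    |mderiv α f y| ≤ Wf d m f y := by
  have h1 : ∀ i, α i < m + 1 := fun i =>
    Nat.lt_succ_of_le ((Finset.single_le_sum (fun _ _ => Nat.zero_le _) (Finset.mem_univ i)).trans h)
  have := Finset.single_le_sum (f := fun α : Fin d → Fin (m + 1) =>
    |mderiv (fun i => (α i : ℕ)) f y|)
    (s := Finset.univ.filter (fun α : Fin d → Fin (m + 1) => ∑ i, (α i : ℕ) ≤ m))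
    (fun _ _ => abs_nonneg _) (a := fun i => ⟨α i, h1 i⟩) (by simpa using h)
  exact this

lemma Wf_nonneg {d m : ℕ} (f : E d → ℝ) (y : E d) : 0 ≤ Wf d m f y :=
  Finset.sum_nonneg fun _ _ => abs_nonneg _

lemma Dz_iter_le {d m : ℕ} {f : E d → ℝ} (hf : Sm f) (z : E d) (hz : ‖z‖ ≤ 1) (y : E d) (j : ℕ) :
    ∀ α : Fin d → ℕ, ∑ i, α i + j ≤ m →
      |(Dz z)^[j] (mderiv α f) y| ≤ (d:ℝ) ^ j * Wf d m f y := by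
  induction j with
  | zero => intro α h; simpa using le_Wf f y α h
  | succ j ih =>
    intro α h
    rw [Function.iterate_succ_apply, Dz_eq_sum]
    simp only [mderiv_succ α hf]
    rw [Dz_iter_sum _ _ _ (fun i => mderiv_smooth _ hf)]
    refine (Finset.abs_sum_le_sum_abs _ _).trans ?_
    calc _ ≤ ∑ i : Fin d, (d:ℝ)^j * Wf d m f y := by
          refine Finset.sum_le_sum fun i _ => ?_
          rw [abs_mul]
          have hzi : |z i| ≤ 1 := by
            have := PiLp.norm_apply_le z i
            exact this.trans hz
          have := ih (α + Pi.single i 1) (by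
            simp [Finset.sum_add_distrib]; omega)
          calc _ ≤ 1 * ((d:ℝ)^j * Wf d m f y) := by gcongr
            _ = _ := one_mul _
      _ = _ := by simp; ring

lemma taylor_bd (Φ : ℕ → ℝ → ℝ) (h : ∀ j r, HasDerivAt (Φ j) (Φ (j+1) r) r) (n : ℕ) :
    |Φ 0 0| ≤ ∑ j ∈ Finset.range (n+1), |Φ j 1| + |∫ r in (0:ℝ)..1, r ^ n * Φ (n+1) r| := by
  have hc : ∀ j, Continuous (Φ j) := fun j =>
    continuous_iff_continuousAt.2 fun r => (h j r).continuousAt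
  induction n with
  | zero =>
    have := intervalIntegral.integral_eq_sub_of_hasDerivAt (a := 0) (b := 1) (f := Φ 0)
      (f' := Φ 1) (fun r _ => h 0 r) ((hc 1).intervalIntegrable _ _)
    simp only [zero_add, Finset.range_one, Finset.sum_singleton, pow_zero, one_mul, this]
    have : Φ 0 0 = Φ 0 1 - (Φ 0 1 - Φ 0 0) := by ring
    calc |Φ 0 0| = |Φ 0 1 - (Φ 0 1 - Φ 0 0)| := by rw [← this]
      _ ≤ _ := abs_sub _ _
  | succ n ih =>
    refine ih.trans ?_
    rw [Finset.sum_range_succ _ (n+1), add_assoc]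
    gcongr
    have key := intervalIntegral.integral_mul_deriv_eq_deriv_mul (a := 0) (b := 1)
      (u := Φ (n+1)) (v := fun r => r^(n+1) / ((n:ℝ)+1)) (u' := Φ (n+2)) (v' := fun r => r^n)
      (fun r _ => h (n+1) r) (fun r _ => by
        have := (hasDerivAt_pow (n+1) r).div_const ((n:ℝ)+1)
        convert this using 1
        push_cast
        have : (n:ℝ)+1 ≠ 0 := by positivity
        field_simp) ((hc _).intervalIntegrable _ _) ((by fun_prop : Continuous fun r : ℝ => r^n).intervalIntegrable _ _)
    have e1 : (∫ r in (0:ℝ)..1, r ^ n * Φ (n+1) r) = ∫ r in (0:ℝ)..1, Φ (n+1) r * r ^ n := by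
      simp only [mul_comm]
    have e2 : (∫ r in (0:ℝ)..1, Φ (n+2) r * (r^(n+1) / ((n:ℝ)+1))) =
        (∫ r in (0:ℝ)..1, r^(n+1) * Φ (n+2) r) / ((n:ℝ)+1) := by
      rw [← intervalIntegral.integral_div]
      congr 1; funext r; ring
    rw [e1, key, e2]
    have hn : (1:ℝ) ≤ (n:ℝ)+1 := by simp
    refine (abs_sub _ _).trans ?_
    have a1 : |Φ (n+1) 1 * (1^(n+1) / ((n:ℝ)+1)) - Φ (n+1) 0 * (0^(n+1) / ((n:ℝ)+1))|
        ≤ |Φ (n+1) 1| := by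
      simp [abs_mul]
      rw [abs_of_nonneg (by positivity : (0:ℝ) ≤ (n:ℝ)+1), ← div_eq_mul_inv]
      exact div_le_self (abs_nonneg _) hn
    have a2 : |(∫ r in (0:ℝ)..1, r^(n+1) * Φ (n+2) r) / ((n:ℝ)+1)| ≤
        |(∫ r in (0:ℝ)..1, r^(n+1) * Φ (n+2) r)| := by
      rw [abs_div, abs_of_nonneg (by positivity : (0:ℝ) ≤ (n:ℝ)+1)]
      exact div_le_self (abs_nonneg _) hn
    exact add_le_add a1 a2

lemma jb_pos {d : ℕ} (x : E d) : 0 < jb x := by unfold jb; positivity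

lemma jb_cont {d : ℕ} : Continuous (jb : E d → ℝ) := by unfold jb; fun_prop

lemma jb_rpow_cont {d : ℕ} (δ : ℝ) : Continuous (fun x : E d => jb x ^ δ) :=
  jb_cont.rpow_const fun x => Or.inl (jb_pos x).ne'

lemma jb_le {d : ℕ} (x y : E d) (h : ‖x - y‖ ≤ 1) : jb x ≤ 2 * jb y := by
  unfold jb
  rw [Real.sqrt_le_left (by positivity), mul_pow, Real.sq_sqrt (by positivity)]
  have h1 : ‖x‖ ≤ ‖y‖ + 1 := by
    have := norm_add_le (x - y) y
    rw [sub_add_cancel] at this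
    linarith
  nlinarith [sq_nonneg (‖y‖ - 1), norm_nonneg x, norm_nonneg y]

lemma jb_rpow_le {d : ℕ} (δ : ℝ) (x y : E d) (h : ‖x - y‖ ≤ 1) :
    jb x ^ δ ≤ 2 ^ |δ| * jb y ^ δ := by
  rcases le_total 0 δ with h0 | h0
  · rw [abs_of_nonneg h0, ← Real.mul_rpow (by norm_num) (jb_pos y).le]
    exact Real.rpow_le_rpow (jb_pos x).le (jb_le x y h) h0
  · rw [abs_of_nonpos h0]
    have h1 := Real.rpow_le_rpow_of_nonpos (jb_pos y) (jb_le y x (by rwa [norm_sub_rev])) h0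
    rw [Real.mul_rpow (by norm_num) (jb_pos x).le] at h1
    rw [Real.rpow_neg (by norm_num), ← div_eq_inv_mul, le_div_iff₀ (by positivity), mul_comm]
    exact h1

noncomputable def Vf (d m : ℕ) (δ : ℝ) (f : E d → ℝ) (y : E d) : ℝ := jb y ^ δ * Wf d m f y

lemma Vf_nonneg {d m : ℕ} (δ : ℝ) (f : E d → ℝ) (y : E d) : 0 ≤ Vf d m δ f y :=
  mul_nonneg (Real.rpow_nonneg (jb_pos y).le _) (Wf_nonneg f y)

lemma Wf_cont {d m : ℕ} {f : E d → ℝ} (hf : Sm f) : Continuous (Wf d m f) := by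
  unfold Wf
  exact continuous_finsetSum _ fun α _ => (mderiv_smooth _ hf).continuous.abs

lemma Vf_cont {d m : ℕ} (δ : ℝ) {f : E d → ℝ} (hf : Sm f) : Continuous (Vf d m δ f) :=
  (jb_rpow_cont δ).mul (Wf_cont hf)

lemma pointwise {d m : ℕ} (δ : ℝ) {f : E d → ℝ} (hf : Sm f) (n : ℕ) (α : Fin d → ℕ)
    (hα : ∑ i, α i + (n + 1) ≤ m) (x z : E d) (hz : ‖z‖ ≤ 1) :
    jb x ^ δ * |mderiv α f x| ≤ (2 ^ |δ| * ∑ j ∈ Finset.range (n+2), (d:ℝ) ^ j) *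
      (Vf d m δ f (x + z) + ∫ r in (0:ℝ)..1, r ^ n * Vf d m δ f (x + r • z)) := by
  set Φ : ℕ → ℝ → ℝ := fun j r => (Dz z)^[j] (mderiv α f) (x + r • z) with hΦ
  have hs : ∀ j, Sm ((Dz z)^[j] (mderiv α f)) := Dz_iter_smooth z (mderiv_smooth α hf)
  have hder : ∀ j r, HasDerivAt (Φ j) (Φ (j+1) r) r := by
    intro j r
    have h1 : HasFDerivAt ((Dz z)^[j] (mderiv α f)) _ (x + r • z) :=
      ((hs j).differentiable (by simp) _).hasFDerivAt
    have h2 : HasDerivAt (fun r : ℝ => x + r • z) z r := by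
      simpa using ((hasDerivAt_id r).smul_const z).const_add x
    have h3 := h1.comp_hasDerivAt r h2
    simp only [hΦ, Function.iterate_succ_apply']
    exact h3
  have hT := taylor_bd Φ hder n
  have hb : ∀ j ≤ n + 1, ∀ r, |Φ j r| ≤ (d:ℝ)^j * Wf d m f (x + r • z) := fun j hj r =>
    Dz_iter_le hf z hz _ j α (by omega)
  set S := ∑ j ∈ Finset.range (n+1), (d:ℝ) ^ j with hS
  have hS0 : 0 ≤ S := Finset.sum_nonneg fun _ _ => by positivity
  have hj0 : 0 ≤ jb x ^ δ := Real.rpow_nonneg (jb_pos x).le _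
  have hw : ∀ r : ℝ, 0 ≤ r → r ≤ 1 → jb x ^ δ * Wf d m f (x + r • z) ≤
      2 ^ |δ| * Vf d m δ f (x + r • z) := by
    intro r hr0 hr1
    have := jb_rpow_le δ x (x + r • z) (by
      simp [norm_smul, abs_of_nonneg hr0]
      nlinarith [norm_nonneg z])
    unfold Vf
    rw [← mul_assoc]
    exact mul_le_mul_of_nonneg_right this (Wf_nonneg _ _)
  have hA : jb x ^ δ * ∑ j ∈ Finset.range (n+1), |Φ j 1| ≤
      2 ^ |δ| * S * Vf d m δ f (x + z) := by
    have h1 : ∑ j ∈ Finset.range (n+1), |Φ j 1| ≤ S * Wf d m f (x + z) := by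
      rw [hS, Finset.sum_mul]
      refine Finset.sum_le_sum fun j hj => ?_
      have := hb j (by have := Finset.mem_range.1 hj; omega) 1
      simpa using this
    have h2 := hw 1 (by norm_num) le_rfl
    rw [one_smul] at h2
    calc _ ≤ jb x ^ δ * (S * Wf d m f (x + z)) := by gcongr
      _ = S * (jb x ^ δ * Wf d m f (x + z)) := by ring
      _ ≤ S * (2 ^ |δ| * Vf d m δ f (x + z)) := by gcongr
      _ = _ := by ring
  have hVc : Continuous fun r : ℝ => r ^ n * Vf d m δ f (x + r • z) := by
    have := Vf_cont (m := m) δ hf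
    fun_prop
  have hB : jb x ^ δ * |∫ r in (0:ℝ)..1, r ^ n * Φ (n+1) r| ≤
      2 ^ |δ| * (d:ℝ)^(n+1) * ∫ r in (0:ℝ)..1, r ^ n * Vf d m δ f (x + r • z) := by
    have hΦc : Continuous (Φ (n+1)) :=
      continuous_iff_continuousAt.2 fun r => (hder (n+1) r).continuousAt
    calc _ ≤ jb x ^ δ * ∫ r in (0:ℝ)..1, |r ^ n * Φ (n+1) r| := by
          gcongr
          exact intervalIntegral.abs_integral_le_integral_abs (by norm_num)
      _ = ∫ r in (0:ℝ)..1, jb x ^ δ * |r ^ n * Φ (n+1) r| := by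
          rw [intervalIntegral.integral_const_mul]
      _ ≤ ∫ r in (0:ℝ)..1, 2 ^ |δ| * (d:ℝ)^(n+1) * (r ^ n * Vf d m δ f (x + r • z)) := by
          refine intervalIntegral.integral_mono_on (by norm_num)
            ((by fun_prop : Continuous _).intervalIntegrable _ _)
            ((hVc.const_mul _).intervalIntegrable _ _) ?_
          intro r hr
          have hr0 : 0 ≤ r := hr.1
          rw [abs_mul, abs_of_nonneg (by positivity : 0 ≤ r ^ n)]
          calc _ ≤ jb x ^ δ * (r ^ n * ((d:ℝ)^(n+1) * Wf d m f (x + r • z))) := by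
                gcongr; exact hb _ le_rfl r
            _ = r ^ n * (d:ℝ)^(n+1) * (jb x ^ δ * Wf d m f (x + r • z)) := by ring
            _ ≤ r ^ n * (d:ℝ)^(n+1) * (2 ^ |δ| * Vf d m δ f (x + r • z)) := by
                exact mul_le_mul_of_nonneg_left (hw r hr.1 hr.2) (by positivity)
            _ = _ := by ring
      _ = _ := by rw [intervalIntegral.integral_const_mul]
  have h0 : Φ 0 0 = mderiv α f x := by simp [hΦ]
  rw [h0] at hT
  have hV1 : 0 ≤ Vf d m δ f (x + z) := Vf_nonneg _ _ _
  have hV2 : 0 ≤ ∫ r in (0:ℝ)..1, r ^ n * Vf d m δ f (x + r • z) :=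
    intervalIntegral.integral_nonneg (by norm_num) fun r hr =>
      mul_nonneg (pow_nonneg hr.1 _) (Vf_nonneg _ _ _)
  set a := Vf d m δ f (x + z)
  set b := ∫ r in (0:ℝ)..1, r ^ n * Vf d m δ f (x + r • z)
  have hd : 0 ≤ (d:ℝ)^(n+1) := by positivity
  have h2 : (0:ℝ) ≤ 2 ^ |δ| := by positivity
  rw [Finset.sum_range_succ, ← hS]
  calc _ ≤ jb x ^ δ * _ := mul_le_mul_of_nonneg_left hT hj0
    _ ≤ 2 ^ |δ| * S * a + 2 ^ |δ| * (d:ℝ)^(n+1) * b := by rw [mul_add]; exact add_le_add hA hB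
    _ ≤ _ := by
      have p1 : 0 ≤ 2 ^ |δ| * S * b := by positivity
      have p2 : 0 ≤ 2 ^ |δ| * (d:ℝ)^(n+1) * a := by positivity
      nlinarith

open scoped ENNReal

lemma scaling {d : ℕ} (p : ℝ) (hp : 1 ≤ p) {V : E d → ℝ} (hV : Continuous V) (x : E d)
    (r : ℝ) (hr : 0 < r) :
    ∫⁻ z in Metric.ball (0 : E d) 1, ‖V (x + r • z)‖ₑ ≤
      volume (Metric.ball (0 : E d) 1) ^ (1 - 1/p) * (ENNReal.ofReal (r ^ (-(d:ℝ)/p)) *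
        eLpNorm V (ENNReal.ofReal p) volume) := by
  have hp0 : 0 < p := by linarith
  have hc : Continuous fun z : E d => V (x + r • z) := by fun_prop
  have h1 := eLpNorm_le_eLpNorm_mul_rpow_measure_univ (p := 1) (q := ENNReal.ofReal p)
    (μ := volume.restrict (Metric.ball (0 : E d) 1)) (f := fun z => V (x + r • z))
    (by simpa using hp) hc.aestronglyMeasurable
  rw [eLpNorm_one_eq_lintegral_enorm] at h1
  refine h1.trans ?_
  rw [Measure.restrict_apply_univ, mul_comm]
  simp only [ENNReal.toReal_one, ENNReal.toReal_ofReal hp0.le, div_one]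
  gcongr
  refine (eLpNorm_restrict_le _ _ _ _).trans ?_
  have h2 : eLpNorm (fun z : E d => V (x + r • z)) (ENNReal.ofReal p) volume =
      eLpNorm (fun y : E d => V (x + y)) (ENNReal.ofReal p)
        (Measure.map (fun z : E d => r • z) volume) := by
    rw [eLpNorm_map_measure (by
      exact (by fun_prop : Continuous fun y : E d => V (x + y)).aestronglyMeasurable)
      (by fun_prop)]
    rfl
  have h3 : eLpNorm (fun y : E d => V (x + y)) (ENNReal.ofReal p) volume =
      eLpNorm V (ENNReal.ofReal p) volume :=
    eLpNorm_comp_measurePreserving hV.aestronglyMeasurable (measurePreserving_add_left volume x)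
  rw [h2, Measure.map_addHaar_smul volume hr.ne', eLpNorm_smul_measure_of_ne_top (by simp), h3,
    smul_eq_mul]
  gcongr
  rw [one_div, ENNReal.toReal_inv, ENNReal.toReal_ofReal hp0.le,
    ENNReal.ofReal_rpow_of_nonneg (by positivity) (by positivity)]
  apply ENNReal.ofReal_le_ofReal
  rw [abs_of_nonneg (by positivity), finrank_euclideanSpace_fin, ← Real.rpow_natCast,
    ← Real.rpow_neg hr.le, ← Real.rpow_mul hr.le, div_eq_mul_inv]

lemma norm_le {d m : ℕ} (p : ℝ) (hp : 1 ≤ p) (δ : ℝ) {f : E d → ℝ} (hf : Sm f)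
    (hs : HasCompactSupport f) :
    eLpNorm (Vf d m δ f) (ENNReal.ofReal p) volume ≤ ENNReal.ofReal (Hnorm d m p δ f) := by
  have hc : ∀ α : Fin d → ℕ, Continuous fun y => jb y ^ δ • mderiv α f y := fun α =>
    (jb_rpow_cont δ).smul (mderiv_smooth α hf).continuous
  have hcs : ∀ α : Fin d → ℕ, HasCompactSupport fun y => jb y ^ δ • mderiv α f y := fun α =>
    (mderiv_supp α hs).smul_left (f := fun y => jb y ^ δ)
  unfold Hnorm
  rw [ENNReal.ofReal_sum_of_nonneg (fun _ _ => by unfold wLp; positivity)]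
  have h1 : Vf d m δ f = ∑ α ∈ Finset.univ.filter
      (fun α : Fin d → Fin (m + 1) => ∑ i, (α i : ℕ) ≤ m),
      fun y => ‖jb y ^ δ • mderiv (fun i => (α i : ℕ)) f y‖ := by
    funext y
    rw [Finset.sum_apply]
    unfold Vf Wf
    rw [Finset.mul_sum]
    refine Finset.sum_congr rfl fun α _ => ?_
    rw [norm_smul, Real.norm_eq_abs, Real.norm_eq_abs,
      abs_of_nonneg (Real.rpow_nonneg (jb_pos y).le _)]
  rw [h1]
  refine (eLpNorm_sum_le (fun α _ => (hc _).norm.aestronglyMeasurable) (by simpa using hp)).trans ?_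
  refine Finset.sum_le_sum fun α _ => ?_
  rw [eLpNorm_norm]
  unfold wLp
  rw [ENNReal.ofReal_toReal]
  exact ((hc _).memLp_of_hasCompactSupport (hcs _)).eLpNorm_ne_top

end S18

/-- Weighted Sobolev embedding: for `m > d/p` and `k < m − d/p`,
`sup_x ⟨x⟩^δ |∂^α f(x)| ≤ C ‖f‖_{H^{m,p}_δ}` for all `|α| ≤ k`. -/
theorem stmt18 (d : ℕ) (hd : 1 ≤ d) (p : ℝ) (hp : 1 ≤ p) (m : ℕ) (δ : ℝ)
    (hm : (d : ℝ) / p < m) (k : ℕ) (hk : (k : ℝ) < (m : ℝ) - (d : ℝ) / p) :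
    ∃ C : ℝ, 0 < C ∧ ∀ f : EuclideanSpace ℝ (Fin d) → ℝ,
      ContDiff ℝ (⊤ : ℕ∞) f → HasCompactSupport f →
      ∀ α : Fin d → ℕ, (∑ i, α i) ≤ k →
        ∀ x, jb x ^ δ * |mderiv α f x| ≤ C * Hnorm d m p δ f := by
  classical
  have hp0 : 0 < p := by linarith
  have hdp : 0 ≤ (d:ℝ) / p := by positivity
  have hkm : k < m := by
    have : (k:ℝ) < m := by linarith
    exact_mod_cast this
  obtain ⟨n, rfl⟩ : ∃ n, m = k + (n + 1) := ⟨m - k - 1, by omega⟩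
  set M := k + (n + 1) with hM
  set B := Metric.ball (0 : S18.E d) 1 with hB
  set I : ENNReal := ∫⁻ r in Set.Ioo (0:ℝ) 1, ENNReal.ofReal (r ^ ((n:ℝ) + -(d:ℝ)/p)) with hI
  have hIfin : I ≠ ⊤ := by
    have h1 : IntegrableOn (fun r : ℝ => r ^ ((n:ℝ) + -(d:ℝ)/p)) (Set.Ioo 0 1) := by
      rw [intervalIntegral.integrableOn_Ioo_rpow_iff one_pos]
      rw [hM] at hk
      push_cast at hk
      rw [neg_div]
      linarith
    exact h1.lintegral_lt_top.ne
  have hB0 : volume B ≠ 0 := (Metric.measure_ball_pos volume _ one_pos).ne'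
  have hBt : volume B ≠ ⊤ := measure_ball_lt_top.ne
  set c : ℝ := 2 ^ |δ| * ∑ j ∈ Finset.range (n+2), (d:ℝ) ^ j with hc
  have hc0 : 0 ≤ c := by positivity
  set A : ENNReal := (volume B)⁻¹ * (ENNReal.ofReal c * (volume B ^ (1 - 1/p) * (1 + I))) with hA
  have hAt : A ≠ ⊤ := by
    have : volume B ^ (1 - 1/p) ≠ ⊤ := ENNReal.rpow_ne_top_of_ne_zero hB0 hBt
    have h2 : (volume B)⁻¹ ≠ ⊤ := ENNReal.inv_ne_top.2 hB0
    rw [hA]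
    finiteness
  refine ⟨A.toReal + 1, by positivity, ?_⟩
  intro f hf hs α hα x
  have hH0 : 0 ≤ Hnorm d M p δ f := Finset.sum_nonneg fun _ _ => by unfold wLp; positivity
  set V := S18.Vf d M δ f with hV
  have hVc : Continuous V := S18.Vf_cont δ hf
  set v := jb x ^ δ * |mderiv α f x| with hv
  set N := eLpNorm V (ENNReal.ofReal p) volume with hN
  have hpt : ∀ z ∈ B, ENNReal.ofReal v ≤ ENNReal.ofReal c * (‖V (x + z)‖ₑ +
      ∫⁻ r in Set.Ioo (0:ℝ) 1, ENNReal.ofReal (r ^ n) * ‖V (x + r • z)‖ₑ) := by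
    intro z hz
    have hz1 : ‖z‖ ≤ 1 := by
      have := mem_ball_zero_iff.1 hz
      exact this.le
    have h1 := S18.pointwise (m := M) δ hf n α (by omega) x z hz1
    have hint : Continuous fun r : ℝ => r ^ n * V (x + r • z) := by fun_prop
    refine (ENNReal.ofReal_le_ofReal h1).trans ?_
    rw [ENNReal.ofReal_mul hc0]
    gcongr
    refine ENNReal.ofReal_add_le.trans ?_
    refine add_le_add ?_ ?_
    · rw [Real.enorm_eq_ofReal (S18.Vf_nonneg _ _ _)]
    · rw [intervalIntegral.integral_of_le (by norm_num), integral_Ioc_eq_integral_Ioo]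
      rw [ofReal_integral_eq_lintegral_ofReal]
      · refine le_of_eq (setLIntegral_congr_fun measurableSet_Ioo fun r hr => ?_)
        rw [ENNReal.ofReal_mul (pow_nonneg hr.1.le _), Real.enorm_eq_ofReal (S18.Vf_nonneg _ _ _)]
      · exact (hint.integrableOn_Icc (a := 0) (b := 1)).mono_set Set.Ioo_subset_Icc_self
      · filter_upwards [ae_restrict_mem measurableSet_Ioo] with r hr
        exact mul_nonneg (pow_nonneg hr.1.le _) (S18.Vf_nonneg _ _ _)
  have hmeas2 : Measurable (fun q : S18.E d × ℝ =>
      ENNReal.ofReal (q.2 ^ n) * ‖V (x + q.2 • q.1)‖ₑ) := by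
    have h1 : Measurable fun q : S18.E d × ℝ => V (x + q.2 • q.1) :=
      (by fun_prop : Continuous fun q : S18.E d × ℝ => V (x + q.2 • q.1)).measurable
    exact (by fun_prop : Measurable fun q : S18.E d × ℝ => ENNReal.ofReal (q.2 ^ n)).mul h1.enorm
  have hmain : volume B * ENNReal.ofReal v ≤
      ENNReal.ofReal c * (volume B ^ (1 - 1/p) * (1 + I)) * N := by
    calc volume B * ENNReal.ofReal v = ∫⁻ z in B, ENNReal.ofReal v := by
          rw [setLIntegral_const, mul_comm]
      _ ≤ ∫⁻ z in B, ENNReal.ofReal c * (‖V (x + z)‖ₑ +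
          ∫⁻ r in Set.Ioo (0:ℝ) 1, ENNReal.ofReal (r ^ n) * ‖V (x + r • z)‖ₑ) :=
          setLIntegral_mono' measurableSet_ball hpt
      _ = ENNReal.ofReal c * ((∫⁻ z in B, ‖V (x + z)‖ₑ) +
          ∫⁻ r in Set.Ioo (0:ℝ) 1, ∫⁻ z in B, ENNReal.ofReal (r ^ n) * ‖V (x + r • z)‖ₑ) := by
          rw [lintegral_const_mul' _ _ ENNReal.ofReal_ne_top, lintegral_add_left (by
            exact (by fun_prop : Continuous fun z : S18.E d => V (x + z)).measurable.enorm),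
            lintegral_lintegral_swap hmeas2.aemeasurable]
      _ ≤ ENNReal.ofReal c * (volume B ^ (1 - 1/p) * N + volume B ^ (1 - 1/p) * N * I) := by
          gcongr ENNReal.ofReal c * (?_ + ?_)
          · have := S18.scaling p hp hVc x 1 one_pos
            simpa using this
          · rw [hI, ← lintegral_const_mul _ (by fun_prop)]
            refine setLIntegral_mono' measurableSet_Ioo fun r hr => ?_
            rw [lintegral_const_mul' _ _ ENNReal.ofReal_ne_top]
            calc _ ≤ ENNReal.ofReal (r ^ n) * (volume B ^ (1 - 1/p) *
                  (ENNReal.ofReal (r ^ (-(d:ℝ)/p)) * N)) :=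
                  mul_le_mul_right (S18.scaling p hp hVc x r hr.1) _
              _ = volume B ^ (1 - 1/p) * N *
                  (ENNReal.ofReal (r ^ n) * ENNReal.ofReal (r ^ (-(d:ℝ)/p))) := by ring
              _ = _ := by
                  rw [← ENNReal.ofReal_mul (pow_nonneg hr.1.le _), Real.rpow_add hr.1,
                    Real.rpow_natCast]
      _ = _ := by ring
  have hfin : ENNReal.ofReal v ≤ A * ENNReal.ofReal (Hnorm d M p δ f) := by
    calc ENNReal.ofReal v = (volume B)⁻¹ * (volume B * ENNReal.ofReal v) := by
          rw [← mul_assoc, ENNReal.inv_mul_cancel hB0 hBt, one_mul]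
      _ ≤ (volume B)⁻¹ * (ENNReal.ofReal c * (volume B ^ (1 - 1/p) * (1 + I)) * N) := by gcongr
      _ = A * N := by rw [hA]; ring
      _ ≤ _ := by gcongr; exact S18.norm_le p hp δ hf hs
  have h3 := ENNReal.toReal_mono (ENNReal.mul_ne_top hAt ENNReal.ofReal_ne_top) hfin
  rw [ENNReal.toReal_mul, ENNReal.toReal_ofReal hH0, ENNReal.toReal_ofReal
    (mul_nonneg (Real.rpow_nonneg (S18.jb_pos x).le _) (abs_nonneg _))] at h3
  nlinarith
end
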